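/- Let A be a finite alphabet with at least 4 letters. Then Ann has a winning strategy for the nonrepetitive game over A: there exists an Ann strategy ψ such that for every Ben strategy φ, no word arising in the play between ψ and φ contains a factor uu with |u| ≥ 2. -/

import Mathlib

/-- The play of the nonrepetitive game over the alphabet `A`: starting from the empty
word, Ann (playing the strategy `ψ`) appends a letter when the current word has even
length, and Ben (playing the strategy `φ`) appends a letter when it has odd length. -/
def playNR {A : Type*} (ψ φ : List A → A) : ℕ → List A
  | 0 => []
  | k + 1 =>
      let w := playNR ψ φ k
      w ++ [if Even w.length then ψ w else φ w]

namespace NRG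

/-- The four letters (also used as the four colours of the decision tree). -/
inductive C | c0 | c1 | c2 | c3
  deriving DecidableEq

/-- A map from letters to colours. -/
inductive M | mk (a b c d : C)

/-- Data at a node of the decision tree: weights of the four colours (upper bounds of them at an
inner node), (upper bound of the) inverse potential, potential, aggregated potential. -/
inductive Dat | mk (g0 g1 g2 g3 hi h o : Nat)

/-- Decision tree.  `n k` is an inner node at which `k` colours have been seen. -/
inductive T
  | l (d : Dat)
  | n (k : C) (d : Dat) (f : C → T)
  | n3 (d : Dat) (f : C → T)

/-- Result of a walk in the tree. -/
inductive St | mk (lf : Bool) (d : Dat) (m : M)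

noncomputable def M.get (m : M) (x : C) : C :=
  M.rec (fun a b c d => C.rec a b c d x) m

noncomputable def bump1 (c : C) : C := C.rec C.c0 C.c2 C.c2 C.c2 c
noncomputable def bump2 (c : C) : C := C.rec C.c0 C.c1 C.c3 C.c3 c

noncomputable def fresh0 (x : C) : M :=
  C.rec (M.mk C.c0 C.c1 C.c1 C.c1) (M.mk C.c1 C.c0 C.c1 C.c1)
    (M.mk C.c1 C.c1 C.c0 C.c1) (M.mk C.c1 C.c1 C.c1 C.c0) x

noncomputable def fresh1 (m : M) (x : C) : M :=
  M.rec (fun a b c d =>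
    C.rec (M.mk C.c1 (bump1 b) (bump1 c) (bump1 d)) (M.mk (bump1 a) C.c1 (bump1 c) (bump1 d))
    (M.mk (bump1 a) (bump1 b) C.c1 (bump1 d)) (M.mk (bump1 a) (bump1 b) (bump1 c) C.c1) x) m

noncomputable def fresh2 (m : M) (x : C) : M :=
  M.rec (fun a b c d =>
    C.rec (M.mk C.c2 (bump2 b) (bump2 c) (bump2 d)) (M.mk (bump2 a) C.c2 (bump2 c) (bump2 d))
    (M.mk (bump2 a) (bump2 b) C.c2 (bump2 d)) (M.mk (bump2 a) (bump2 b) (bump2 c) C.c2) x) m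

/-- update of the colour map when `x` is read at a node at which `k` colours have been seen -/
noncomputable def nxt (k : C) (m : M) (x : C) : M :=
  C.rec (fresh0 x) (C.rec m (fresh1 m x) (fresh1 m x) (fresh1 m x) (M.get m x))
    (C.rec m m (fresh2 m x) (fresh2 m x) (M.get m x)) m k

/-- Walk down the tree along a word. -/
noncomputable def walk (t : T) : M → List C → St :=
  T.rec (motive := fun _ => M → List C → St)
    (fun d m _ => St.mk true d m)
    (fun k d _ ih m l => List.rec (St.mk false d m) (fun x l' _ => ih (M.get m x) (nxt k m x) l') l)
    (fun d _ ih m l => List.rec (St.mk false d m) (fun x l' _ => ih (M.get m x) m l') l)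
    t

noncomputable def Dat.g (d : Dat) (x : C) : Nat :=
  Dat.rec (fun g0 g1 g2 g3 _ _ _ => C.rec g0 g1 g2 g3 x) d
noncomputable def Dat.hi (d : Dat) : Nat := Dat.rec (fun _ _ _ _ hi _ _ => hi) d
noncomputable def Dat.h (d : Dat) : Nat := Dat.rec (fun _ _ _ _ _ h _ => h) d
noncomputable def Dat.o (d : Dat) : Nat := Dat.rec (fun _ _ _ _ _ _ o => o) d
noncomputable def St.lf (s : St) : Bool := St.rec (fun lf _ _ => lf) s
noncomputable def St.d (s : St) : Dat := St.rec (fun _ d _ => d) s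
noncomputable def St.g (s : St) (x : C) : Nat := St.rec (fun _ d m => Dat.g d (M.get m x)) s

noncomputable section
local notation "z" => T.l (Dat.mk 0 0 0 0 1 1000000000 0)
local notation "l" p:max q:max r:max s:max h:max o:max => T.l (Dat.mk p q r s (Nat.add (Nat.div 10000000 h) 1) h o)
local notation "i0" p:max u:max a:max => T.n C.c0 (Dat.mk p p p p u 0 0) fun _ => a
local notation "i1" p:max q:max u:max a:max b:max => T.n C.c1 (Dat.mk p q q q u 0 0) fun x => C.rec a b b b x
local notation "i2" p:max q:max r:max u:max a:max b:max c:max => T.n C.c2 (Dat.mk p q r r u 0 0) fun x => C.rec a b c c x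
local notation "i3" p:max q:max r:max s:max u:max a:max b:max c:max d:max => T.n3 (Dat.mk p q r s u 0 0) fun x => C.rec a b c d x
local notation "x20" p:max q:max r:max u:max a:max b:max => T.n C.c2 (Dat.mk p q r r u 0 0) fun x => C.rec a b b b x
local notation "x21" p:max q:max r:max u:max a:max b:max => T.n C.c2 (Dat.mk p q r r u 0 0) fun x => C.rec b a b b x
local notation "x22" p:max q:max r:max u:max a:max b:max => T.n C.c2 (Dat.mk p q r r u 0 0) fun x => C.rec b b a a x
local notation "x30" p:max q:max r:max s:max u:max a:max b:max => T.n3 (Dat.mk p q r s u 0 0) fun x => C.rec a b b b x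
local notation "x31" p:max q:max r:max s:max u:max a:max b:max => T.n3 (Dat.mk p q r s u 0 0) fun x => C.rec b a b b x
local notation "x32" p:max q:max r:max s:max u:max a:max b:max => T.n3 (Dat.mk p q r s u 0 0) fun x => C.rec b b a b x
local notation "x33" p:max q:max r:max s:max u:max a:max b:max => T.n3 (Dat.mk p q r s u 0 0) fun x => C.rec b b b a x

def t000102 : T :=
  (i3 0 545 477 545 9226 (x30 0 545 471 545 9226 (x30 0 545 300 545 8013 (i3 0 545 278 545 7795 z
  (l 0 545 0 545 1347 1516) (l 0 519 278 526 1283 2137) (l 0 519 278 526 1283 2137)) (l 0 504 300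
  544 1248 2193)) (l 0 381 471 487 1084 1840)) (x30 0 290 477 525 8540 z (l 0 290 477 525 1171
  1809)) (x30 0 463 359 513 8757 (x30 0 463 359 498 8734 (x30 0 463 359 491 8734 z (l 0 463 359
  491 1145 1846)) (l 0 463 359 498 1145 1855)) (l 0 462 319 513 1142 1816)) (x30 0 399 461 478
  8874 (x30 0 399 461 478 8874 (x30 0 399 459 478 8874 z (l 0 399 459 478 1127 1881)) (l 0 376 461
  471 1132 1841)) (l 0 393 460 472 1130 1865)))
def t000110 : T :=
  (i2 0 411 450 10001 (x20 0 411 397 10001 z (l 0 411 397 397 1000 1526)) (x20 0 311 450 10001 z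
  (l 0 311 450 450 1000 1495)) (x30 0 410 450 365 10001 z (l 0 410 450 365 1000 1548)))
def t000112 : T :=
  (i3 0 545 534 545 10001 (x30 0 545 507 545 10001 (x30 0 545 363 545 9226 (i3 0 545 321 545 8719
  z (l 0 545 0 545 1278 1392) (l 0 489 321 493 1147 1628) (l 0 489 321 493 1147 1628)) (l 0 343
  363 543 1084 1532)) (l 0 249 507 470 1000 1484)) (x30 0 344 529 411 9653 (x30 0 344 529 411 9634
  (x30 0 342 527 411 9634 z (l 0 342 527 411 1038 1568)) (l 0 344 529 411 1042 1573)) (l 0 344 526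
  410 1036 1568)) (x30 0 338 534 454 9843 (x30 0 338 534 425 9785 (x30 0 338 534 304 9515 z (l 0
  338 534 304 1051 1446)) (l 0 313 519 425 1022 1535)) (l 0 249 516 454 1016 1476)) (x30 0 354 534
  497 10001 (x30 0 354 415 497 10001 (x30 0 354 335 497 10001 z (l 0 354 335 497 1000 1461)) (l 0
  354 415 497 1000 1554)) (l 0 332 534 359 1051 1502)))
def t000120 : T :=
  (i3 0 446 471 485 9991 (x30 0 336 471 397 9991 z (l 0 336 471 397 1001 1562)) (x30 0 339 471 485
  9607 z (l 0 339 471 485 1041 1694)) (x30 0 446 345 485 9579 z (l 0 446 345 485 1044 1654)) (x30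
  0 428 471 328 9981 z (l 0 428 471 328 1002 1587)))
def t000122 : T :=
  (i3 0 545 522 545 10001 (x30 0 545 522 545 10001 (x30 0 545 360 545 10001 (i3 0 545 323 545 8905
  z (l 0 545 0 545 1286 1423) (l 0 476 323 476 1123 1636) (l 0 476 323 476 1123 1636)) (l 0 418
  360 428 1000 1542)) (l 0 339 522 423 1074 1623)) (x30 0 430 498 351 9862 (x30 0 430 493 351 9862
  (x30 0 430 430 351 9862 z (l 0 430 430 351 1014 1551)) (l 0 430 493 341 1014 1615)) (l 0 394 498
  335 1024 1564)) (x30 0 387 518 431 10001 (x30 0 387 507 430 10001 (x30 0 386 484 424 10001 z (l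
  0 386 484 424 1000 1644)) (l 0 387 507 430 1043 1680)) (l 0 366 518 431 1065 1666)) (x30 0 407
  413 519 9417 (x30 0 407 413 484 9417 (x30 0 301 413 484 9408 z (l 0 301 413 484 1063 1511)) (l 0
  407 392 472 1062 1619)) (l 0 328 390 519 1066 1564)))
def t000123 : T :=
  (i3 0 545 545 534 9971 (x30 0 545 545 502 9700 (x30 0 545 545 369 9479 (i3 0 545 545 369 9251 z
  (l 0 545 545 0 1286 1425) (l 0 458 457 369 1081 1644) (l 0 458 457 369 1081 1644)) (l 0 447 410
  369 1055 1572)) (l 0 435 328 502 1031 1617)) (x30 0 458 522 408 9390 (x30 0 458 518 408 9390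
  (x30 0 458 332 408 9251 z (l 0 458 332 408 1081 1540)) (l 0 408 518 343 1065 1617)) (l 0 327 522
  394 1074 1571)) (x30 0 437 429 503 9971 (x30 0 428 429 502 9971 (x30 0 425 419 473 9971 z (l 0
  425 419 473 1003 1678)) (l 0 428 429 502 1031 1730)) (l 0 437 348 503 1033 1645)) (x30 0 453 329
  534 9346 (x30 0 453 262 534 9346 (x30 0 409 262 534 9125 z (l 0 409 262 534 1096 1539)) (l 0 453
  262 521 1070 1585)) (l 0 374 329 534 1105 1572)))
def t0001 : T :=
  (i2 0 545 545 10001 (x22 0 545 545 9226 t000102 z) (i2 0 545 545 10001 t000110 z t000112) (i3 0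
  545 545 545 10001 t000120 z t000122 t000123))
def t001100 : T :=
  (i2 0 0 687 8985 (i2 0 0 612 8985 z (l 0 0 612 612 1141 1348) (l 0 0 597 597 1113 1315)) (x20 0
  0 620 8651 z (l 0 0 620 620 1156 1366)) (x30 0 0 686 687 7807 z (l 0 0 686 687 1281 1511)))
def t001102 : T :=
  (i3 0 498 634 647 10001 (x30 0 498 630 643 10001 (i3 0 498 325 643 10001 (x31 0 497 270 562
  10001 (x31 0 497 270 558 10001 (x30 0 497 260 538 10001 (l 0 497 259 517 1000 1711) (l 0 497 260
  538 1028 1737)) (l 0 497 270 558 1067 1781)) (l 0 497 256 562 1074 1756)) (x31 0 498 325 643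
  8504 (l 0 497 0 643 1229 1299) (l 0 498 325 402 1176 1724)) (l 0 470 325 446 1176 1741) (l 0 470
  325 446 1176 1741)) (l 0 372 630 246 1218 1428)) (x30 0 498 601 349 8772 z (l 0 498 601 349 1140
  1643)) (x30 0 490 600 647 9709 (x30 0 490 590 647 9709 (x31 0 490 590 647 9709 (x31 0 490 289
  647 9709 (x30 0 490 256 647 9709 (l 0 490 0 647 1237 1295) (l 0 490 256 539 1030 1472)) (l 0 478
  289 591 1130 1563)) (l 0 268 590 422 1133 1447)) (l 0 387 584 385 1135 1536)) (l 0 375 600 370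
  1138 1523)) (x30 0 490 634 574 10001 (x30 0 490 634 503 10001 (x31 0 490 634 503 10001 (x31 0
  490 634 325 10001 (x30 0 490 634 289 10001 (l 0 490 634 0 1202 1277) (l 0 490 490 289 1000
  1464)) (l 0 448 594 325 1126 1588)) (l 0 276 508 503 1000 1456)) (l 0 467 394 446 1000 1484)) (l
  0 276 575 574 1093 1611)))
def t001110 : T :=
  (i2 0 481 599 10001 (i2 0 481 599 10001 z (l 0 0 599 599 1348 1517) (l 0 481 366 366 1000 1477))
  (x20 0 431 432 10001 z (l 0 431 432 432 1000 1586)) (x30 0 481 469 282 9470 z (l 0 481 469 282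
  1056 1500)))
def t001112 : T :=
  (i3 0 482 602 603 10001 (x30 0 482 602 603 10001 (i3 0 482 486 603 10001 (x31 0 450 421 462 9719
  (x31 0 450 421 462 9719 (x31 0 428 420 448 9719 z (l 0 428 420 448 1029 1653)) (l 0 450 421 462
  1040 1696)) (l 0 450 418 461 1038 1691)) (x31 0 482 407 603 10001 (l 0 482 0 603 1357 1300) (l 0
  482 407 391 1000 1622)) (l 0 340 486 423 1190 1619) (l 0 340 486 423 1190 1619)) (l 0 408 602
  229 1181 1451)) (x30 0 482 511 395 10001 (x30 0 464 481 395 10001 (x31 0 425 469 395 10001 (x31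
  0 425 469 395 10001 (x31 0 419 460 395 10001 z (l 0 419 460 395 1000 1492)) (l 0 425 469 395
  1000 1509)) (l 0 424 468 395 1000 1507)) (l 0 464 481 395 1000 1570)) (l 0 482 511 305 1003
  1521)) (x30 0 427 602 419 10001 (x30 0 427 594 419 10001 (x31 0 419 594 419 10001 (x31 0 419 406
  419 10001 (x31 0 415 406 381 10001 z (l 0 415 406 381 1000 1408)) (l 0 419 405 419 1000 1456))
  (l 0 264 594 335 1165 1393)) (l 0 427 439 374 1000 1453)) (l 0 322 602 286 1181 1415)) (x30 0
  481 514 544 10001 (x30 0 481 436 544 10001 (x31 0 439 436 544 10001 (x31 0 439 436 371 10001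
  (x31 0 436 436 371 10001 z (l 0 436 436 371 1000 1456)) (l 0 439 435 371 1000 1459)) (l 0 374
  273 544 1224 1394)) (l 0 481 434 339 1000 1470)) (l 0 309 514 390 1009 1418)))
def t001120 : T :=
  (i3 0 505 447 771 10001 (i3 0 505 447 771 9058 z (l 0 505 0 771 1542 1552) (l 0 505 447 446 1104
  1820) (l 0 505 447 446 1104 1820)) (x30 0 505 443 526 9141 z (l 0 505 443 526 1094 1907)) (x30 0
  355 400 471 10001 z (l 0 355 400 471 1000 1588)) (x30 0 447 434 540 9260 z (l 0 447 434 540 1080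
  1836)))
def t001122 : T :=
  (i3 0 511 767 714 10001 (x30 0 511 598 714 10001 (i3 0 511 330 714 10001 (x31 0 477 330 530
  10001 (x31 0 477 330 464 10001 (x32 0 477 330 463 10001 (l 0 426 330 463 1000 1551) (l 0 477 330
  384 1033 1518)) (l 0 444 330 464 1000 1574)) (l 0 372 290 530 1073 1508)) (x31 0 511 297 714
  9042 (l 0 511 0 714 1445 1487) (l 0 511 297 487 1106 1635)) (l 0 511 325 520 1106 1715) (l 0 511
  325 520 1106 1715)) (l 0 511 598 389 1171 1801)) (x30 0 424 563 679 9067 (x30 0 424 561 679 8929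
  (x31 0 424 561 679 8929 (x31 0 309 561 679 8803 (x32 0 247 561 679 8803 (l 0 0 561 679 1375
  1448) (l 0 247 561 561 1136 1648)) (l 0 309 561 568 1150 1746)) (l 0 424 430 553 1120 1686)) (l
  0 424 455 553 1120 1715)) (l 0 424 563 462 1103 1734)) (x30 0 511 680 610 10001 (x30 0 511 588
  610 10001 (x31 0 511 588 610 10001 (x31 0 511 400 610 10001 (x32 0 511 400 610 10001 (l 0 511 0
  610 1235 1366) (l 0 443 400 451 1000 1557)) (l 0 472 316 482 1022 1533)) (l 0 325 588 277 1152
  1421)) (l 0 511 467 269 1106 1510)) (l 0 309 680 248 1332 1473)) (x30 0 511 767 521 9042 (x30 0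
  511 767 434 9042 (x31 0 511 767 399 9042 (x31 0 511 767 349 8569 (x32 0 511 767 227 8569 (l 0
  511 767 0 1502 1544) (l 0 510 596 227 1167 1617)) (l 0 511 600 349 1175 1803)) (l 0 511 515 399
  1106 1717)) (l 0 511 457 434 1106 1690)) (l 0 397 602 521 1179 1814)))
def t001123 : T :=
  (i3 0 511 746 636 10001 (x30 0 511 746 574 10001 (i3 0 511 746 531 10001 (x31 0 454 584 400
  10001 (x31 0 454 447 400 10001 (x32 0 454 447 400 10001 (l 0 418 437 400 1000 1508) (l 0 454 447
  318 1000 1471)) (l 0 449 400 400 1000 1505)) (l 0 314 584 277 1156 1403)) (x31 0 511 746 260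
  9042 (l 0 511 746 0 1476 1526) (l 0 511 529 260 1106 1571)) (l 0 511 302 531 1139 1625) (l 0 511
  302 531 1139 1625)) (l 0 511 332 574 1132 1709)) (x30 0 380 735 566 8993 (x30 0 380 735 566 8993
  (x31 0 380 735 566 8993 (x31 0 329 735 566 8977 (x32 0 256 735 566 8621 (l 0 0 735 566 1454
  1512) (l 0 256 586 555 1160 1673)) (l 0 329 563 566 1114 1765)) (l 0 380 464 565 1112 1683)) (l
  0 380 477 566 1114 1700)) (l 0 284 562 566 1114 1675)) (x30 0 511 401 636 10001 (x30 0 511 401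
  636 10001 (x31 0 511 400 636 10001 (x31 0 511 371 636 10001 (x32 0 511 371 636 10001 (l 0 511 0
  636 1252 1396) (l 0 446 371 456 1000 1533)) (l 0 461 356 473 1000 1555)) (l 0 451 400 331 1000
  1427)) (l 0 511 401 344 1106 1521)) (l 0 273 364 603 1187 1475)) (x30 0 509 734 605 9091 (x30 0
  509 734 554 9091 (x31 0 509 734 536 9091 (x31 0 509 734 379 9091 (x32 0 509 734 270 9075 (l 0
  509 734 0 1452 1509) (l 0 509 530 270 1102 1676)) (l 0 508 509 379 1100 1814)) (l 0 509 298 536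
  1102 1625)) (l 0 509 292 554 1102 1643)) (l 0 509 331 605 1191 1741)))
def t0011 : T :=
  (i2 0 511 771 10001 (i2 0 498 687 10001 t001100 z t001102) (i2 0 482 603 10001 t001110 z
  t001112) (i3 0 511 767 771 10001 t001120 z t001122 t001123))
def t001200 : T :=
  (i3 0 716 0 734 8811 (i3 0 684 0 603 8811 z (l 0 684 0 561 1325 1408) (l 0 586 0 603 1135 1342)
  (l 0 586 0 603 1135 1342)) (x30 0 567 0 680 7813 z (l 0 567 0 680 1280 1406)) (x30 0 716 0 734
  7210 z (l 0 716 0 734 1387 1637)) (x30 0 706 0 724 7316 z (l 0 706 0 724 1367 1613)))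
def t001203 : T :=
  (i3 0 717 484 670 10001 (x30 0 654 484 619 9719 (i3 0 654 484 317 9719 (x31 0 551 484 268 9719
  (x32 0 551 484 268 9719 (x30 0 535 484 257 9719 (l 0 517 484 250 1029 1724) (l 0 535 484 257
  1065 1760)) (l 0 551 484 268 1097 1802)) (l 0 549 484 263 1093 1789)) (x32 0 654 484 317 8592 (l
  0 654 484 0 1302 1337) (l 0 424 484 317 1164 1764)) (l 0 432 484 317 1164 1773) (l 0 432 484 317
  1164 1773)) (l 0 226 375 619 1165 1405)) (x30 0 586 471 652 10001 (x30 0 568 471 652 10001 (x31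
  0 503 471 652 10001 (x32 0 430 471 652 9971 (x30 0 250 471 652 9971 (l 0 0 471 652 1227 1300) (l
  0 250 471 533 1003 1478)) (l 0 430 445 480 1020 1642)) (l 0 503 418 384 1000 1512)) (l 0 568 340
  394 1098 1502)) (l 0 586 294 525 1133 1612)) (x30 0 693 235 665 7252 z (l 0 693 235 665 1379
  1823)) (x30 0 717 466 670 8397 (x30 0 717 466 670 8362 (x31 0 717 466 612 8362 (x32 0 717 466
  391 8362 (x30 0 717 466 257 8362 (l 0 717 466 0 1427 1387) (l 0 601 466 257 1196 1609)) (l 0 601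
  441 391 1196 1776)) (l 0 430 299 612 1200 1555)) (l 0 418 286 670 1261 1572)) (l 0 563 233 633
  1191 1632)))
def t001210 : T :=
  (i3 0 477 515 701 10001 (i3 0 477 515 701 10001 z (l 0 0 515 701 1524 1651) (l 0 477 322 418
  1000 1574) (l 0 477 322 418 1000 1574)) (x30 0 275 435 625 7359 z (l 0 275 435 625 1359 1746))
  (x30 0 477 426 315 9804 z (l 0 477 426 315 1020 1575)) (x30 0 344 384 499 9911 z (l 0 344 384
  499 1009 1565)))
def t001211 : T :=
  (i3 0 541 526 581 10001 (x30 0 541 526 581 9931 (i3 0 528 526 581 9931 (x31 0 401 473 460 9931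
  (x32 0 401 473 460 9931 (x31 0 401 454 452 9931 z (l 0 401 454 452 1007 1612)) (l 0 401 473 460
  1049 1647)) (l 0 401 472 458 1047 1643)) (x32 0 304 526 581 9058 (l 0 0 526 581 1167 1381) (l 0
  304 498 457 1104 1557)) (l 0 528 344 367 1097 1526) (l 0 528 344 367 1097 1526)) (l 0 541 357
  354 1081 1529)) (x30 0 507 388 478 10001 (x30 0 500 388 452 10001 (x31 0 468 388 450 10001 (x32
  0 446 388 450 10001 (x31 0 434 388 450 10001 z (l 0 434 388 450 1000 1558)) (l 0 446 388 450
  1000 1572)) (l 0 468 388 450 1000 1598)) (l 0 500 388 452 1000 1638)) (l 0 507 326 478 1013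
  1596)) (x30 0 538 486 485 9277 (x30 0 516 482 485 9268 (x31 0 516 429 475 8858 (x32 0 516 266
  459 8858 (x31 0 501 266 455 8562 z (l 0 501 266 455 1168 1810)) (l 0 516 257 459 1129 1809)) (l
  0 324 429 475 1130 1602)) (l 0 312 482 485 1079 1578)) (l 0 538 486 242 1078 1562)) (x30 0 536
  478 503 10001 (x30 0 494 478 503 10001 (x31 0 494 430 503 10001 (x32 0 494 430 313 10001 (x31 0
  476 429 313 10001 z (l 0 476 429 313 1000 1526)) (l 0 494 430 313 1000 1548)) (l 0 308 416 503
  1011 1508)) (l 0 392 478 407 1060 1575)) (l 0 536 228 479 1071 1503)))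
def t001213 : T :=
  (i3 0 541 530 553 10001 (x30 0 541 530 553 9644 (i3 0 541 530 484 9644 (x31 0 450 452 433 9644
  (x32 0 450 452 433 9644 (x31 0 429 433 425 9644 z (l 0 429 433 425 1037 1747)) (l 0 450 452 433
  1082 1811)) (l 0 441 442 432 1058 1785)) (x32 0 541 530 448 9192 (l 0 541 530 0 1269 1410) (l 0
  387 444 448 1088 1745)) (l 0 297 483 484 1175 1742) (l 0 297 483 484 1175 1742)) (l 0 204 499
  553 1204 1668)) (x30 0 394 451 549 9776 (x30 0 394 432 517 9776 (x31 0 389 430 486 9776 (x32 0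
  389 429 486 9776 (x31 0 389 427 460 9776 z (l 0 389 427 460 1023 1630)) (l 0 389 429 486 1027
  1663)) (l 0 389 430 475 1030 1652)) (l 0 394 432 517 1045 1711)) (l 0 290 451 549 1110 1649))
  (x30 0 536 530 446 10001 (x30 0 494 530 446 10001 (x31 0 467 530 446 10001 (x32 0 467 313 446
  10001 (x31 0 441 313 434 10001 z (l 0 441 313 434 1000 1500)) (l 0 467 313 446 1000 1546)) (l 0
  367 530 290 1269 1545)) (l 0 494 340 427 1017 1595)) (l 0 536 340 339 1103 1541)) (x30 0 384 442
  553 9738 (x30 0 384 442 553 9738 (x31 0 384 442 553 9452 (x32 0 384 442 405 9452 (x31 0 376 442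
  402 9452 z (l 0 376 442 402 1058 1566)) (l 0 384 442 405 1058 1579)) (l 0 256 375 553 1118
  1505)) (l 0 327 429 483 1027 1584)) (l 0 300 361 551 1114 1536)))
def t001220 : T :=
  (i3 0 610 425 653 9200 (i3 0 610 417 653 9200 z (l 0 610 0 653 1314 1469) (l 0 406 417 526 1087
  1729) (l 0 406 417 526 1087 1729)) (x30 0 608 306 487 8555 z (l 0 608 306 487 1169 1742)) (x30 0
  376 425 387 9026 z (l 0 376 425 387 1108 1543)) (x30 0 369 424 636 7813 z (l 0 369 424 636 1280
  1829)))
def t001221 : T :=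
  (i3 0 629 527 675 10001 (x30 0 619 512 674 10001 (i3 0 423 512 674 10001 (x31 0 358 447 593
  10001 (x32 0 358 447 448 10001 (x32 0 357 447 448 10001 (l 0 357 436 441 1000 1536) (l 0 357 447
  448 1018 1556)) (l 0 358 437 443 1000 1541)) (l 0 218 389 593 1194 1476)) (x32 0 274 512 674
  8131 (l 0 0 512 674 1356 1490) (l 0 274 493 611 1230 1701)) (l 0 423 422 573 1153 1775) (l 0 423
  422 573 1153 1775)) (l 0 619 429 442 1196 1806)) (x30 0 580 488 675 9951 (x30 0 580 488 675 9951
  (x31 0 525 488 675 9951 (x32 0 275 488 675 9001 (x32 0 245 488 675 9001 (l 0 0 488 675 1358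
  1459) (l 0 245 488 538 1111 1600)) (l 0 275 488 558 1123 1660)) (l 0 525 435 380 1005 1578)) (l
  0 580 386 391 1111 1640)) (l 0 578 345 447 1107 1651)) (x30 0 601 527 502 10001 (x30 0 601 527
  502 10001 (x31 0 601 527 502 10001 (x32 0 601 421 502 10001 (x32 0 601 421 502 10001 (l 0 601 0
  502 1153 1279) (l 0 414 421 425 1000 1531)) (l 0 471 296 456 1000 1467)) (l 0 285 527 348 1176
  1433)) (l 0 379 362 502 1010 1505)) (l 0 479 527 217 1176 1498)) (x30 0 629 526 534 8969 (x30 0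
  629 526 484 8969 (x31 0 629 526 484 8929 (x32 0 629 526 284 8881 (x32 0 629 526 283 8562 (l 0
  629 526 0 1206 1423) (l 0 520 513 283 1168 1721)) (l 0 587 494 284 1126 1773)) (l 0 404 492 484
  1120 1705)) (l 0 462 490 484 1115 1762)) (l 0 589 274 534 1130 1671)))
def t001223 : T :=
  (i3 0 632 527 699 10001 (x30 0 626 527 577 10001 (i3 0 626 527 431 10001 (x31 0 449 527 353
  10001 (x32 0 449 462 353 10001 (x32 0 443 462 353 10001 (l 0 443 446 353 1000 1546) (l 0 442 462
  352 1020 1561)) (l 0 449 458 324 1011 1521)) (l 0 374 527 249 1163 1395)) (x32 0 626 527 319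
  8742 (l 0 626 527 0 1204 1401) (l 0 595 425 319 1144 1643)) (l 0 491 440 431 1134 1716) (l 0 491
  440 431 1134 1716)) (l 0 505 361 577 1119 1681)) (x30 0 417 497 699 10001 (x30 0 417 497 699
  10001 (x31 0 417 497 699 9116 (x32 0 376 497 699 9116 (x32 0 258 497 699 9116 (l 0 0 497 699
  1303 1418) (l 0 258 497 546 1097 1551)) (l 0 376 497 539 1102 1748)) (l 0 417 497 443 1097
  1611)) (l 0 417 446 515 1000 1624)) (l 0 392 355 567 1057 1533)) (x30 0 489 522 616 10001 (x30 0
  489 521 616 10001 (x31 0 489 521 616 10001 (x32 0 489 417 616 10001 (x32 0 489 417 616 10001 (l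
  0 489 0 616 1148 1236) (l 0 439 417 446 1000 1535)) (l 0 489 354 396 1000 1455)) (l 0 352 521
  308 1150 1420)) (l 0 439 510 345 1126 1545)) (l 0 206 522 517 1152 1485)) (x30 0 632 527 580
  9286 (x30 0 632 527 578 9286 (x31 0 632 527 578 9286 (x32 0 632 527 361 9286 (x32 0 632 527 299
  9251 (l 0 632 527 0 1215 1408) (l 0 523 490 299 1081 1564)) (l 0 525 488 361 1077 1632)) (l 0
  398 352 578 1077 1548)) (l 0 419 370 578 1077 1596)) (l 0 513 335 580 1081 1659)))
def t001230 : T :=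
  (i3 0 730 538 457 10001 (i3 0 730 538 456 9524 z (l 0 730 538 0 1348 1471) (l 0 397 496 456 1050
  1610) (l 0 397 496 456 1050 1610)) (x30 0 578 407 457 9364 z (l 0 578 407 457 1068 1697)) (x30 0
  509 495 457 9497 z (l 0 509 495 457 1053 1732)) (x30 0 374 438 412 10001 z (l 0 374 438 412 1000
  1459)))
def t001231 : T :=
  (i3 0 547 538 612 10001 (x30 0 547 538 603 10001 (i3 0 498 538 603 10001 (x31 0 402 437 592
  10001 (x32 0 402 437 478 10001 (x33 0 396 437 447 10001 (l 0 396 431 442 1000 1550) (l 0 396 437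
  447 1000 1563)) (l 0 402 365 478 1000 1516)) (l 0 237 367 592 1133 1434)) (x32 0 345 538 603
  9133 (l 0 0 538 603 1155 1356) (l 0 345 401 572 1095 1594)) (l 0 498 502 396 1089 1718) (l 0 498
  502 396 1089 1718)) (l 0 547 515 338 1088 1668)) (x30 0 539 529 612 9728 (x30 0 509 529 612 9719
  (x31 0 488 529 612 9719 (x32 0 301 529 612 9672 (x33 0 232 529 612 9672 (l 0 0 529 612 1172
  1355) (l 0 232 489 540 1034 1488)) (l 0 301 489 540 1034 1571)) (l 0 488 487 350 1029 1555)) (l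
  0 509 487 364 1029 1595)) (l 0 539 412 407 1028 1584)) (x30 0 518 503 584 10001 (x30 0 518 503
  584 9616 (x31 0 518 503 584 9597 (x32 0 518 267 584 9597 (x33 0 518 267 584 8953 (l 0 518 0 584
  1118 1246) (l 0 485 267 488 1117 1688)) (l 0 501 202 544 1042 1605)) (l 0 285 503 395 1110
  1398)) (l 0 409 291 543 1040 1450)) (l 0 400 305 501 1000 1400)) (x30 0 547 538 334 10001 (x30 0
  547 538 334 10001 (x31 0 547 538 334 10001 (x32 0 547 538 334 10001 (x33 0 547 538 334 10001 (l
  0 547 538 0 1136 1289) (l 0 443 444 334 1000 1433)) (l 0 475 453 309 1000 1452)) (l 0 349 488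
  334 1031 1382)) (l 0 484 538 234 1136 1483)) (l 0 508 430 293 1000 1442)))
def t001233 : T :=
  (i3 0 683 519 617 10001 (x30 0 683 518 602 10001 (i3 0 683 518 424 10001 (x31 0 547 414 407
  10001 (x32 0 478 414 399 10001 (x33 0 450 414 399 10001 (l 0 438 414 399 1000 1495) (l 0 450 414
  399 1000 1509)) (l 0 478 392 379 1000 1489)) (l 0 547 242 407 1041 1458)) (x32 0 683 518 247
  7844 (l 0 683 518 0 1300 1417) (l 0 670 395 247 1275 1529)) (l 0 511 397 424 1058 1597) (l 0 511
  397 424 1058 1597)) (l 0 532 340 602 1153 1707)) (x30 0 426 519 617 10001 (x30 0 426 519 617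
  10001 (x31 0 415 519 617 10001 (x32 0 259 519 617 9133 (x33 0 245 519 617 9133 (l 0 0 519 617
  1188 1348) (l 0 245 518 531 1095 1525)) (l 0 259 518 581 1118 1598)) (l 0 415 439 446 1000
  1522)) (l 0 426 470 552 1063 1693)) (l 0 426 366 605 1165 1623)) (x30 0 548 486 613 10001 (x30 0
  548 477 613 10001 (x31 0 548 469 613 10001 (x32 0 548 272 613 10001 (x33 0 548 272 613 10001 (l
  0 548 0 613 1180 1314) (l 0 512 272 514 1000 1558)) (l 0 548 272 569 1095 1661)) (l 0 433 469
  473 1000 1614)) (l 0 436 477 451 1008 1601)) (l 0 407 486 613 1180 1761)) (x30 0 610 519 617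
  10001 (x30 0 610 519 609 10001 (x31 0 610 519 609 10001 (x32 0 610 519 424 10001 (x33 0 610 519
  424 10001 (l 0 610 519 0 1161 1336) (l 0 435 436 424 1000 1516)) (l 0 520 409 283 1000 1418)) (l
  0 306 258 609 1166 1358)) (l 0 243 519 481 1097 1468)) (l 0 228 384 617 1205 1436)))
def t0012 : T :=
  (i3 0 730 538 734 10001 (i3 0 717 484 734 10001 t001200 z z t001203) (i3 0 541 530 701 10001
  t001210 t001211 z t001213) (i3 0 632 527 699 10001 t001220 t001221 z t001223) (i3 0 730 538 617
  10001 t001230 t001231 z t001233))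
def t010001 : T :=
  (i2 0 0 738 7221 (x22 0 0 646 6836 (l 0 0 646 646 1463 1732) z) (x20 0 0 630 7216 (x21 0 0 630
  7216 (x20 0 0 612 7216 z (l 0 0 612 612 1386 1641)) (l 0 0 630 630 1427 1689)) (l 0 0 613 613
  1388 1643)) (x30 0 0 738 548 7221 (x31 0 0 738 548 7221 (x30 0 0 738 455 6984 z (l 0 0 738 455
  1432 1457)) (l 0 0 714 548 1385 1554)) (l 0 0 737 548 1396 1561)))
def t010002 : T :=
  (i3 0 0 642 1313 8584 (i3 0 0 632 1313 7594 z (x30 0 0 627 1313 7353 (x30 0 0 584 1313 7353 (l 0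
  0 0 1313 2462 1458) (l 0 0 584 725 1360 1600)) (l 0 0 627 662 1453 1590)) (l 0 0 632 702 1317
  1548) (l 0 0 632 702 1317 1548)) (x30 0 0 642 670 8217 (x31 0 0 642 670 8217 (x30 0 0 642 622
  8217 z (l 0 0 642 622 1217 1406)) (l 0 0 641 670 1257 1458)) (l 0 0 642 648 1217 1435)) (x30 0 0
  613 630 8584 (x31 0 0 613 630 8475 (x30 0 0 612 629 8475 z (l 0 0 612 629 1180 1380)) (l 0 0 613
  630 1182 1383)) (l 0 0 613 621 1165 1373)) (x30 0 0 638 677 8231 (x31 0 0 623 677 8164 (x30 0 0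
  621 653 8164 z (l 0 0 621 653 1225 1417)) (l 0 0 623 677 1270 1446)) (l 0 0 638 648 1215 1430)))
def t010011 : T :=
  (i2 0 0 667 8666 (x22 0 0 601 8666 (l 0 0 601 601 1154 1366) z) (x20 0 0 620 8666 (x21 0 0 620
  8666 (x20 0 0 601 8666 z (l 0 0 601 601 1154 1366)) (l 0 0 620 620 1190 1409)) (l 0 0 620 620
  1190 1409)) (x30 0 0 656 667 7831 (x31 0 0 526 667 7831 (x30 0 0 525 665 7831 z (l 0 0 525 665
  1277 1510)) (l 0 0 526 667 1280 1514)) (l 0 0 656 611 1278 1451)))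
def t010012 : T :=
  (i3 0 0 611 653 9166 (i3 0 0 611 625 8780 (x31 0 0 611 625 8780 (x30 0 0 601 625 8780 z (l 0 0
  601 625 1139 1341)) (l 0 0 611 624 1146 1351)) z (l 0 0 609 621 1142 1346) (l 0 0 609 621 1142
  1346)) (x30 0 0 609 653 8897 (x31 0 0 609 653 8897 (x30 0 0 607 600 8897 z (l 0 0 607 600 1124
  1313)) (l 0 0 609 653 1190 1372)) (l 0 0 609 649 1182 1368)) (x30 0 0 577 624 8842 (x31 0 0 577
  624 8796 (x30 0 0 576 608 8796 z (l 0 0 576 608 1137 1301)) (l 0 0 577 624 1137 1306)) (l 0 0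
  576 621 1131 1301)) (x30 0 0 608 612 9166 (x31 0 0 590 596 9166 (x30 0 0 589 596 9166 z (l 0 0
  589 596 1091 1289)) (l 0 0 590 592 1093 1285)) (l 0 0 608 612 1126 1327)))
def t010021 : T :=
  (i3 0 0 644 664 8204 (i3 0 0 611 598 8204 z z (l 0 0 611 598 1219 1443) (l 0 0 611 598 1219
  1443)) (x30 0 0 618 635 7734 (x31 0 0 570 635 7734 (x30 0 0 570 635 7734 z (l 0 0 570 635 1293
  1439)) (l 0 0 570 635 1293 1439)) (l 0 0 618 635 1293 1496)) (x30 0 0 644 639 7622 (x31 0 0 644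
  626 7078 (x30 0 0 631 592 7078 z (l 0 0 631 592 1413 1550)) (l 0 0 644 626 1453 1615)) (l 0 0
  644 639 1312 1547)) (x30 0 0 600 664 8013 (x31 0 0 600 619 8013 (x30 0 0 552 619 8013 z (l 0 0
  552 619 1248 1391)) (l 0 0 600 619 1248 1448)) (l 0 0 562 664 1250 1404)))
def t010022 : T :=
  (i3 0 0 664 1180 9116 (i3 0 0 604 1180 9116 (x31 0 0 590 606 9116 (x30 0 0 588 604 9116 z (l 0 0
  588 604 1097 1297)) (l 0 0 590 606 1101 1301)) (x30 0 0 580 1180 8913 (x30 0 0 580 1180 8742 (l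
  0 0 0 1180 2141 1268) (l 0 0 580 628 1144 1326)) (l 0 0 565 618 1122 1298)) (l 0 0 604 619 1127
  1330) (l 0 0 604 619 1127 1330)) (x30 0 0 625 594 8644 (x31 0 0 625 594 8614 (x30 0 0 624 594
  8614 z (l 0 0 624 594 1161 1325)) (l 0 0 625 594 1163 1327)) (l 0 0 622 592 1157 1321)) (x30 0 0
  664 612 8614 (x31 0 0 664 603 8098 (x30 0 0 664 603 8098 z (l 0 0 664 603 1235 1379)) (l 0 0 664
  603 1235 1379)) (l 0 0 624 612 1161 1345)) (x30 0 0 631 617 8599 (x31 0 0 631 617 8518 (x30 0 0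
  592 617 8482 z (l 0 0 592 617 1179 1348)) (l 0 0 631 617 1174 1376)) (l 0 0 625 601 1163 1334)))
def t010023 : T :=
  (i3 0 0 1168 709 9083 (i3 0 0 1168 612 9018 (x31 0 0 597 612 9018 (x30 0 0 596 604 9018 z (l 0 0
  596 604 1109 1305)) (l 0 0 597 612 1111 1315)) (x30 0 0 1168 603 8985 (x30 0 0 1168 603 8985 (l
  0 0 1168 0 2173 1286) (l 0 0 597 603 1113 1305)) (l 0 0 597 603 1113 1305)) z z) (x30 0 0 571
  672 8827 (x31 0 0 571 672 8197 (x30 0 0 568 672 8197 z (l 0 0 568 672 1220 1348)) (l 0 0 571 672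
  1220 1351)) (l 0 0 571 624 1133 1299)) (x30 0 0 597 709 8411 (x31 0 0 568 709 8362 (x30 0 0 564
  659 8362 z (l 0 0 564 659 1196 1329)) (l 0 0 568 709 1287 1387)) (l 0 0 597 655 1189 1361)) (x30
  0 0 592 628 9083 (x31 0 0 585 628 8772 (x30 0 0 569 628 8772 z (l 0 0 569 628 1140 1301)) (l 0 0
  585 628 1140 1319)) (l 0 0 592 606 1101 1303)))
def t0100 : T :=
  (i2 0 0 1313 9166 (i2 0 0 1313 8584 z t010001 t010002) (i2 0 0 667 9166 z t010011 t010012) (i3 0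
  0 1168 1180 9116 z t010021 t010022 t010023))
def t010200 : T :=
  (i3 509 0 562 570 9390 (i3 508 0 562 570 9075 z (x30 303 0 562 570 8913 (x32 302 0 562 570 8164
  (l 0 0 562 570 1371 1562) (l 302 0 502 529 1225 1818)) (l 303 0 457 505 1122 1724)) (l 508 0 335
  496 1102 1779) (l 508 0 335 496 1102 1779)) (x30 509 0 385 442 9311 z (l 509 0 385 442 1074
  1765)) (x30 509 0 368 418 9311 z (l 509 0 368 418 1074 1745)) (x30 505 0 404 383 9390 z (l 505 0
  404 383 1065 1666)))
def t010201 : T :=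
  (i3 840 0 0 570 7717 (i3 840 0 0 564 6931 (x31 840 0 0 564 6931 (x30 840 0 0 553 6490 z (l 840 0
  0 553 1541 1714)) (l 788 0 0 564 1443 1671)) z (l 791 0 0 564 1452 1677) (l 791 0 0 564 1452
  1677)) (x30 833 0 0 568 7190 (x31 809 0 0 568 7190 (x30 809 0 0 553 6735 z (l 809 0 0 553 1485
  1680)) (l 752 0 0 568 1391 1640)) (l 833 0 0 414 1529 1505)) (x30 772 0 0 529 7058 z (l 772 0 0
  529 1417 1605)) (x30 807 0 0 570 7717 (x31 807 0 0 570 7717 (x30 807 0 0 550 6753 z (l 807 0 0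
  550 1481 1600)) (l 706 0 0 570 1296 1522)) (l 754 0 0 561 1384 1557)))
def t010203 : T :=
  (i3 570 0 562 463 9719 (i3 570 0 562 460 9709 (x31 554 0 529 460 9320 (x30 554 0 432 434 9320 z
  (l 554 0 432 434 1073 1830)) (l 399 0 529 460 1298 1827)) (x30 570 0 562 310 9329 (x32 570 0 562
  310 9329 (l 570 0 562 0 1379 1465) (l 553 0 437 310 1072 1673)) (l 564 0 437 310 1092 1686)) (l
  532 0 390 454 1030 1770) (l 532 0 390 454 1030 1770)) (x30 561 0 499 463 9570 (x31 515 0 499 463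
  9570 (x30 515 0 426 436 9570 z (l 515 0 426 436 1045 1779)) (l 332 0 499 463 1224 1710)) (l 561
  0 275 463 1086 1649)) (x30 532 0 348 451 9709 z (l 532 0 348 451 1030 1706)) (x30 471 0 486 463
  9719 (x31 471 0 486 463 9100 (x30 471 0 448 368 9100 z (l 471 0 448 368 1099 1671)) (l 348 0 486
  463 1193 1710)) (l 461 0 363 463 1029 1662)))
def t010211 : T :=
  (i3 476 0 434 463 10001 (i3 476 0 387 379 10001 (x31 476 0 386 379 10001 (x30 476 0 359 379
  10001 z (l 476 0 359 379 1000 1609)) (l 476 0 386 370 1007 1636)) z (l 476 0 387 369 1009 1636)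
  (l 476 0 387 369 1009 1636)) (x30 476 0 428 419 10001 (x31 468 0 428 419 9042 (x30 468 0 424 411
  9042 z (l 468 0 424 411 1106 1715)) (l 458 0 428 419 1116 1722)) (l 476 0 375 405 1000 1639))
  (x30 476 0 434 428 9795 (x31 476 0 351 428 9795 (x30 388 0 350 428 9795 z (l 388 0 350 428 1021
  1579)) (l 476 0 351 428 1021 1693)) (l 421 0 434 380 1041 1584)) (x30 410 0 434 463 9515 (x31
  410 0 434 453 7413 (x30 410 0 340 453 7337 z (l 410 0 340 453 1363 1752)) (l 393 0 434 444 1349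
  1872)) (l 356 0 403 463 1051 1609)))
def t010213 : T :=
  (i3 572 0 562 524 10001 (i3 572 0 562 504 10001 (x31 461 0 470 420 10001 (x30 461 0 404 413
  10001 z (l 461 0 404 413 1000 1667)) (l 402 0 470 420 1129 1702)) (x30 572 0 562 280 8834 (x32
  572 0 562 280 7652 (l 572 0 562 0 1350 1467) (l 414 0 544 280 1307 1923)) (l 572 0 344 280 1132
  1823)) (l 552 0 225 504 1143 1641) (l 552 0 225 504 1143 1641)) (x30 509 0 450 511 9616 (x31 473
  0 450 511 9616 (x30 473 0 390 452 9616 z (l 473 0 390 452 1040 1713)) (l 361 0 450 511 1157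
  1746)) (l 509 0 261 509 1153 1648)) (x30 331 0 552 524 8592 (x31 331 0 552 524 7723 (x30 331 0
  552 331 7542 z (l 331 0 552 331 1326 1615)) (l 233 0 539 524 1295 1741)) (l 279 0 458 514 1164
  1666)) (x30 386 0 495 524 8425 (x31 386 0 495 524 8425 (x30 386 0 275 524 8425 z (l 386 0 275
  524 1187 1544)) (l 241 0 495 524 1190 1688)) (l 332 0 359 524 1187 1601)))
def t010220 : T :=
  (i3 472 0 562 569 9083 (i3 392 0 562 569 9083 z (x30 392 0 562 569 9010 (x32 362 0 562 569 8204
  (l 0 0 562 569 1448 1532) (l 362 0 473 509 1219 1931)) (l 392 0 429 429 1110 1820)) (l 355 0 350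
  546 1101 1656) (l 355 0 350 546 1101 1656)) (x30 349 0 464 407 8362 z (l 349 0 464 407 1196
  1657)) (x30 445 0 512 363 7582 z (l 445 0 512 363 1319 1807)) (x30 472 0 434 317 8945 z (l 472 0
  434 317 1118 1669)))
def t010221 : T :=
  (i3 616 0 433 484 10001 (i3 607 0 253 423 9141 (x31 567 0 253 423 9141 (x30 567 0 240 421 9141 z
  (l 567 0 240 421 1094 1623)) (l 567 0 253 423 1094 1648)) z (l 607 0 248 335 1171 1592) (l 607 0
  248 335 1171 1592)) (x30 616 0 433 484 8383 (x31 487 0 433 484 8355 (x30 487 0 414 395 8355 z (l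
  487 0 414 395 1197 1872)) (l 273 0 433 484 1252 1795)) (l 616 0 341 212 1193 1614)) (x30 475 0
  429 356 9625 (x31 475 0 429 356 9294 (x30 475 0 415 356 9294 z (l 475 0 415 356 1076 1726)) (l
  475 0 429 352 1111 1741)) (l 475 0 402 356 1039 1704)) (x30 469 0 308 484 10001 (x31 453 0 308
  452 10001 (x30 432 0 308 449 10001 z (l 432 0 308 449 1000 1589)) (l 453 0 304 452 1000 1609))
  (l 469 0 208 484 1006 1489)))
def t010223 : T :=
  (i3 579 0 562 557 10001 (i3 579 0 562 555 10001 (x31 506 0 300 555 10001 (x30 506 0 251 490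
  10001 z (l 506 0 251 490 1000 1504)) (l 453 0 300 555 1104 1598)) (x30 579 0 562 300 9083 (x32
  579 0 562 300 8834 (l 579 0 562 0 1452 1521) (l 559 0 438 300 1132 1622)) (l 540 0 426 300 1101
  1584)) (l 306 0 385 531 1056 1542) (l 306 0 385 531 1056 1542)) (x30 499 0 471 557 8953 (x31 429
  0 471 529 8454 (x30 429 0 458 466 8454 z (l 429 0 458 466 1183 1709)) (l 257 0 471 529 1217
  1618)) (l 499 0 180 557 1117 1467)) (x30 387 0 450 505 8696 (x31 387 0 446 505 8696 (x30 387 0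
  446 476 8681 z (l 387 0 446 476 1152 1657)) (l 358 0 445 505 1150 1658)) (l 387 0 450 486 1163
  1675)) (x30 456 0 417 543 9951 (x31 449 0 417 543 9951 (x30 449 0 255 502 9951 z (l 449 0 255
  502 1005 1463)) (l 270 0 417 543 1080 1566)) (l 456 0 250 510 1021 1472)))
def t010230 : T :=
  (i3 462 0 551 570 9814 (i3 442 0 551 570 9814 z (x30 442 0 551 570 9776 (x32 370 0 551 570 8788
  (l 0 0 551 570 1213 1422) (l 370 0 517 492 1138 1696)) (l 442 0 391 396 1023 1494)) (l 414 0 386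
  427 1019 1506) (l 414 0 386 427 1019 1506)) (x30 273 0 386 521 9200 z (l 273 0 386 521 1087
  1453)) (x30 450 0 314 498 9625 z (l 450 0 314 498 1039 1584)) (x30 462 0 485 325 9364 z (l 462 0
  485 325 1068 1551)))
def t010231 : T :=
  (i3 563 0 440 482 10001 (i3 563 0 440 433 10001 (x31 563 0 440 392 9320 (x30 562 0 301 392 9320
  z (l 562 0 301 392 1073 1556)) (l 563 0 440 260 1075 1592)) z (l 510 0 286 433 1000 1524) (l 510
  0 286 433 1000 1524)) (x30 563 0 437 482 9961 (x31 482 0 423 482 9961 (x30 482 0 411 441 9961 z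
  (l 482 0 411 441 1004 1692)) (l 320 0 423 482 1033 1579)) (l 563 0 437 219 1075 1541)) (x30 465
  0 440 482 9681 (x31 465 0 436 368 7257 (x30 465 0 424 368 7242 z (l 465 0 424 368 1381 1805)) (l
  465 0 436 363 1378 1797)) (l 305 0 440 482 1033 1562)) (x30 516 0 399 376 10001 (x31 516 0 399
  376 10001 (x30 493 0 395 370 10001 z (l 493 0 395 370 1000 1584)) (l 516 0 399 376 1000 1631))
  (l 516 0 399 354 1000 1597)))
def t010233 : T :=
  (i3 753 0 450 546 10001 (i3 753 0 450 485 9524 (x31 523 0 449 457 9461 (x30 523 0 293 457 9461 z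
  (l 523 0 293 457 1057 1532)) (l 519 0 449 350 1057 1599)) (x30 753 0 450 276 8674 (x32 753 0 450
  276 8674 (l 753 0 450 0 1438 1474) (l 604 0 447 276 1153 1601)) (l 604 0 423 276 1153 1569)) (l
  550 0 270 485 1050 1567) (l 550 0 270 485 1050 1567)) (x30 615 0 450 546 9524 (x31 438 0 450 546
  9524 (x30 438 0 449 459 9524 z (l 438 0 449 459 1050 1643)) (l 266 0 450 546 1140 1559)) (l 615
  0 196 431 1203 1477)) (x30 416 0 450 546 10001 (x31 416 0 450 546 9524 (x30 416 0 449 369 9524 z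
  (l 416 0 449 369 1050 1507)) (l 251 0 450 546 1140 1542)) (l 408 0 390 414 1000 1477)) (x30 463
  0 450 546 9588 (x31 432 0 450 546 9588 (x30 432 0 446 386 9588 z (l 432 0 446 386 1043 1542)) (l
  322 0 450 546 1140 1622)) (l 463 0 308 506 1056 1545)))
def t0102 : T :=
  (i3 840 0 562 570 10001 (i3 840 0 562 570 9719 t010200 t010201 z t010203) (i3 572 0 562 524
  10001 z t010211 z t010213) (i3 616 0 562 569 10001 t010220 t010221 z t010223) (i3 753 0 551 570
  10001 t010230 t010231 z t010233))
def t011001 : T :=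
  (i2 0 0 1360 8719 (x22 0 0 613 8674 (l 0 0 613 613 1153 1361) z) (x20 0 0 610 8719 z (l 0 0 610
  610 1147 1355)) (x30 0 0 655 1360 8117 (x31 0 0 645 1360 8020 (x31 0 0 545 1360 7594 (x30 0 0
  530 1360 6623 (x30 0 0 530 1360 6614 (l 0 0 0 1360 2557 1514) (l 0 0 530 804 1512 1499)) (l 0 0
  503 803 1510 1467)) (l 0 0 545 700 1317 1401)) (l 0 0 645 663 1247 1474)) (l 0 0 655 654 1232
  1453)))
def t011002 : T :=
  (i3 486 0 728 732 10001 (i3 486 0 444 645 10001 z (x31 486 0 390 645 10001 (x30 486 0 390 645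
  10001 (l 486 0 0 645 1210 1273) (l 486 0 390 308 1000 1390)) (l 332 0 390 539 1011 1491)) (l 486
  0 444 321 1000 1406) (l 486 0 444 321 1000 1406)) (x30 486 0 529 530 10001 (x31 351 0 528 530
  10001 (x31 351 0 454 530 10001 (x30 351 0 454 506 10001 (x30 351 0 454 496 10001 (l 351 0 454
  481 1000 1440) (l 350 0 454 496 1000 1455)) (l 350 0 454 506 1000 1467)) (l 350 0 396 530 1000
  1429)) (l 225 0 528 530 1000 1432)) (l 486 0 529 332 1000 1513)) (x30 486 0 529 732 10001 (x31
  486 0 492 732 10001 (x31 486 0 480 732 10001 (x30 486 0 323 732 9785 (x30 486 0 241 732 9672 (l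
  486 0 0 732 1373 1370) (l 486 0 241 551 1034 1452)) (l 486 0 323 545 1022 1557)) (l 467 0 480
  398 1000 1510)) (l 273 0 492 545 1022 1464)) (l 377 0 529 429 1000 1495)) (x30 486 0 728 499
  10001 (x31 486 0 728 499 10001 (x31 486 0 728 498 10001 (x30 486 0 728 347 9150 (x30 486 0 728
  247 8905 (l 486 0 728 0 1369 1365) (l 485 0 597 247 1123 1565)) (l 486 0 581 347 1093 1706)) (l
  317 0 486 498 1000 1455)) (l 182 0 579 499 1089 1416)) (l 436 0 475 475 1000 1554)))
def t011012 : T :=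
  (i3 371 0 490 491 10001 (i3 371 0 489 443 9747 (x31 371 0 458 443 9747 (x31 370 0 458 431 9192
  (x30 370 0 458 431 9192 (x31 370 0 458 421 9150 z (l 370 0 458 421 1093 1642)) (l 370 0 456 431
  1088 1653)) (l 370 0 456 428 1088 1649)) (l 371 0 430 443 1026 1633)) z (l 370 0 489 398 1167
  1655) (l 370 0 489 398 1167 1655)) (x30 370 0 490 476 9234 (x31 370 0 464 476 9234 (x31 370 0
  464 476 9234 (x30 370 0 463 476 9234 (x31 370 0 458 476 9209 z (l 370 0 458 476 1086 1704)) (l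
  370 0 463 472 1083 1705)) (l 370 0 464 476 1086 1712)) (l 370 0 463 476 1086 1711)) (l 370 0 490
  417 1146 1668)) (x30 370 0 490 491 10001 (x31 370 0 490 491 10001 (x31 370 0 461 446 10001 (x30
  370 0 426 438 10001 (x31 370 0 426 429 10001 z (l 370 0 426 429 1000 1596)) (l 370 0 426 438
  1000 1608)) (l 312 0 461 446 1078 1600)) (l 208 0 490 491 1146 1581)) (l 370 0 353 471 1075
  1552)) (x30 320 0 480 491 9042 (x31 320 0 480 491 9042 (x31 320 0 473 484 9042 (x30 320 0 466
  484 8977 (x31 320 0 461 484 8977 z (l 320 0 461 484 1114 1661)) (l 320 0 466 484 1114 1668)) (l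
  320 0 473 463 1106 1649)) (l 277 0 480 491 1123 1647)) (l 236 0 474 491 1120 1591)))
def t011021 : T :=
  (i3 526 0 724 544 10001 (i3 526 0 662 527 8540 (x31 466 0 662 527 8497 (x31 466 0 662 527 8397
  (x30 222 0 662 527 7956 (x32 198 0 662 527 7956 (l 0 0 662 527 1371 1599) (l 198 0 564 498 1257
  1942)) (l 222 0 594 504 1272 2049)) (l 466 0 485 289 1191 1731)) (l 309 0 501 466 1177 1778)) z
  (l 526 0 354 331 1171 1622) (l 526 0 354 331 1171 1622)) (x30 503 0 497 421 9408 z (l 503 0 497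
  421 1063 1866)) (x30 526 0 417 544 10001 (x31 526 0 417 544 8238 (x31 526 0 416 544 7906 (x30
  526 0 321 544 7906 (x32 526 0 283 544 7906 (l 526 0 0 544 1373 1469) (l 484 0 283 501 1265
  1699)) (l 492 0 321 510 1288 1770)) (l 286 0 416 504 1272 1620)) (l 346 0 417 481 1214 1662)) (l
  474 0 415 363 1000 1643)) (x30 525 0 724 486 10001 (x31 525 0 724 465 8842 (x31 525 0 724 360
  8842 (x30 525 0 724 291 8251 (x32 525 0 724 245 8137 (l 525 0 724 0 1500 1543) (l 525 0 593 245
  1229 1980)) (l 525 0 585 291 1212 2083)) (l 525 0 546 360 1131 1916)) (l 511 0 430 465 1135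
  1836)) (l 397 0 482 486 1000 1676)))
def t011022 : T :=
  (i3 526 0 747 613 10001 (i3 526 0 678 613 9892 (x31 344 0 678 546 9364 (x31 344 0 678 546 9364
  (x30 344 0 678 546 9042 (x32 225 0 678 546 9042 (l 0 0 678 546 1409 1453) (l 225 0 532 546 1106
  1712)) (l 344 0 545 546 1133 1960)) (l 344 0 514 546 1068 1701)) (l 344 0 526 544 1093 1688))
  (x31 526 0 441 613 9892 (x30 526 0 400 613 9183 (l 526 0 0 613 1174 1336) (l 523 0 400 349 1089
  1514)) (l 431 0 441 467 1011 1582)) (l 379 0 523 504 1087 1658) (l 379 0 523 504 1087 1658))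
  (x30 526 0 546 562 9355 (x31 344 0 529 562 9355 (x31 344 0 529 479 9355 (x30 344 0 529 479 9355
  (x32 344 0 525 474 9355 (l 344 0 525 472 1069 1581) (l 344 0 525 474 1069 1584)) (l 344 0 529
  479 1077 1594)) (l 344 0 525 476 1069 1586)) (l 239 0 529 562 1077 1558)) (l 526 0 546 214 1112
  1541)) (x30 526 0 494 571 10001 (x31 526 0 494 571 10001 (x31 526 0 494 571 10001 (x30 526 0 359
  571 10001 (x32 526 0 327 571 10001 (l 526 0 0 571 1095 1289) (l 465 0 327 484 1000 1507)) (l 469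
  0 359 494 1000 1561)) (l 372 0 494 311 1006 1398)) (l 222 0 494 527 1009 1456)) (l 479 0 494 233
  1006 1443)) (x30 492 0 747 528 9355 (x31 492 0 747 528 9355 (x31 492 0 747 528 9338 (x30 492 0
  747 359 9338 (x32 492 0 747 311 9338 (l 492 0 747 0 1521 1500) (l 492 0 526 311 1071 1584)) (l
  492 0 526 359 1071 1638)) (l 321 0 487 528 1071 1570)) (l 254 0 525 528 1069 1533)) (l 377 0 527
  528 1073 1687)))
def t011023 : T :=
  (i3 526 0 765 582 10001 (i3 526 0 765 479 9311 (x31 476 0 765 479 9277 (x31 476 0 765 479 9277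
  (x30 395 0 765 479 8606 (x32 257 0 765 479 8439 (l 0 0 765 479 1547 1454) (l 257 0 586 479 1185
  1683)) (l 395 0 574 479 1162 1909)) (l 476 0 533 401 1078 1674)) (l 476 0 534 412 1084 1740))
  (x31 526 0 646 421 9311 (x30 526 0 646 421 9277 (l 526 0 646 0 1307 1421) (l 518 0 381 421 1078
  1566)) (l 402 0 531 420 1074 1602)) z z) (x30 514 0 510 564 9971 (x31 330 0 510 530 9971 (x31
  330 0 510 429 9971 (x30 330 0 510 429 9971 (x32 330 0 498 429 9971 (l 330 0 496 429 1003 1481)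
  (l 330 0 498 428 1007 1482)) (l 330 0 510 429 1032 1498)) (l 330 0 508 405 1028 1469)) (l 328 0
  507 530 1026 1605)) (l 514 0 227 564 1070 1537)) (x30 525 0 484 582 10001 (x31 525 0 484 582
  10001 (x31 525 0 484 582 10001 (x30 525 0 366 582 10001 (x32 525 0 314 582 10001 (l 525 0 0 582
  1103 1300) (l 471 0 314 492 1000 1508)) (l 464 0 366 484 1000 1552)) (l 422 0 484 293 1000
  1428)) (l 218 0 484 546 1034 1460)) (l 452 0 397 378 1000 1456)) (x30 445 0 762 563 9373 (x31
  445 0 762 563 9050 (x31 445 0 762 560 9050 (x30 445 0 762 302 8969 (x32 445 0 762 263 8969 (l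
  445 0 762 0 1541 1460) (l 445 0 551 263 1115 1503)) (l 445 0 561 302 1135 1558)) (l 338 0 409
  560 1105 1534)) (l 260 0 547 563 1107 1606)) (l 435 0 374 563 1067 1615)))
def t0110 : T :=
  (i2 526 0 1360 10001 (i2 486 0 1360 10001 z t011001 t011002) (x22 371 0 491 10001 t011012 z) (i3
  526 0 765 613 10001 z t011021 t011022 t011023))
def t011200 : T :=
  (i3 538 0 364 854 10001 (i3 538 0 364 792 9364 z (x31 538 0 364 792 8007 (x32 538 0 364 792 8007
  (l 0 0 364 792 1483 1617) (l 538 0 364 251 1249 1556)) (l 318 0 364 578 1249 1698)) (l 537 0 245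
  455 1068 1539) (l 537 0 245 455 1068 1539)) (i3 466 0 364 854 10001 z (l 0 0 364 854 1599 1686)
  (l 466 0 284 504 1000 1601) (l 466 0 284 504 1000 1601)) (x30 538 0 317 505 9192 z (l 538 0 317
  505 1088 1742)) (x30 538 0 300 516 9346 z (l 538 0 300 516 1070 1719)))
def t011201 : T :=
  (i3 1230 0 0 1122 9961 (i3 721 0 0 1122 9607 (x31 659 0 0 1122 9607 (x31 659 0 0 1122 9607 (x32
  659 0 0 1122 9286 (x30 659 0 0 1122 8953 (l 0 0 0 1122 2142 1268) (l 659 0 0 585 1117 1321)) (l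
  634 0 0 564 1077 1272)) (l 614 0 0 545 1041 1230)) (l 630 0 0 556 1065 1259)) z (l 721 0 0 502
  1218 1289) (l 721 0 0 502 1218 1289)) (x30 638 0 0 564 9399 (x31 638 0 0 564 9399 (x31 638 0 0
  564 9277 z (l 638 0 0 564 1078 1276)) (l 628 0 0 557 1064 1258)) (l 637 0 0 563 1077 1274)) (x30
  699 0 0 537 8468 z (l 699 0 0 537 1181 1306)) (x30 1230 0 0 603 9961 (x31 1230 0 0 588 9961 (x31
  1230 0 0 588 9961 (x32 1230 0 0 588 9234 (x30 1230 0 0 584 9234 (l 1230 0 0 0 2078 1230) (l 637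
  0 0 584 1083 1278)) (l 642 0 0 588 1090 1288)) (l 593 0 0 559 1004 1188)) (l 594 0 0 560 1004
  1188)) (l 667 0 0 603 1127 1334)))
def t011203 : T :=
  (i3 1045 0 314 904 10001 (i3 826 0 314 904 10001 (x31 606 0 314 904 10001 (x31 606 0 302 904
  10001 (x32 582 0 302 904 10001 (x30 496 0 302 904 9381 (l 0 0 302 904 1729 1615) (l 496 0 268
  557 1066 1658)) (l 582 0 258 518 1000 1680)) (l 606 0 300 371 1029 1627)) (l 385 0 314 596 1140
  1683)) (x31 826 0 314 471 8674 (x32 826 0 314 471 8651 (l 826 0 314 0 1396 1464) (l 446 0 314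
  471 1156 1606)) (l 456 0 314 470 1153 1615)) (l 609 0 161 462 1029 1448) (l 609 0 161 462 1029
  1448)) (x30 535 0 312 540 10001 (x31 502 0 312 540 10001 (x31 502 0 290 540 10001 (x32 487 0 265
  540 9911 (x30 483 0 264 540 9892 (l 479 0 257 540 1011 1600) (l 483 0 264 540 1011 1618)) (l 487
  0 265 539 1009 1623)) (l 502 0 290 477 1000 1620)) (l 502 0 312 540 1070 1734)) (l 535 0 256 540
  1011 1653)) (x30 541 0 314 547 9286 z (l 541 0 314 547 1077 1785)) (x30 1045 0 314 591 9338 (x31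
  1045 0 314 591 9075 (x31 1045 0 314 432 9075 (x32 1045 0 314 432 9067 (x30 1045 0 314 274 7899
  (l 1045 0 314 0 1771 1683) (l 747 0 314 274 1266 1689)) (l 651 0 314 432 1103 1768)) (l 650 0
  314 432 1102 1767)) (l 444 0 314 591 1107 1737)) (l 497 0 228 572 1071 1594)))
def t011210 : T :=
  (i3 551 0 364 853 10001 (i3 551 0 364 853 10001 z (x31 551 0 364 853 7474 (x32 551 0 364 853
  7474 (l 0 0 364 853 1675 1760) (l 551 0 364 235 1338 1725)) (l 451 0 364 411 1338 1804)) (l 551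
  0 225 460 1000 1563) (l 551 0 225 460 1000 1563)) (i3 551 0 211 479 10001 z (l 550 0 211 478
  1000 1558) (l 551 0 211 479 1000 1560) (l 551 0 211 479 1000 1560)) (x30 546 0 196 469 10001 z
  (l 546 0 196 469 1000 1511)) (x30 551 0 186 470 10001 z (l 551 0 186 470 1000 1495)))
def t011213 : T :=
  (i3 778 0 364 658 9234 (i3 778 0 364 568 8969 (x31 575 0 315 568 8929 (x31 575 0 271 517 8929
  (x32 538 0 271 517 8362 (x31 534 0 255 487 8362 z (l 534 0 255 487 1196 1669)) (l 538 0 271 517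
  1205 1744)) (l 575 0 261 504 1120 1743)) (l 419 0 315 568 1158 1781)) (x31 778 0 364 414 7327
  (x32 778 0 364 414 7300 (l 778 0 364 0 1370 1570) (l 462 0 364 414 1456 2116)) (l 474 0 364 388
  1365 2074)) (l 557 0 140 554 1115 1522) (l 557 0 140 554 1115 1522)) (x30 578 0 217 540 9234
  (x31 578 0 217 540 9200 (x31 578 0 208 523 9200 (x32 578 0 208 521 9200 (x31 578 0 208 521 9200
  z (l 578 0 208 521 1087 1652)) (l 578 0 208 520 1087 1651)) (l 578 0 208 523 1087 1654)) (l 561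
  0 217 540 1088 1677)) (l 576 0 125 536 1083 1487)) (x30 471 0 339 646 8803 (x31 471 0 339 646
  8803 (x31 471 0 254 580 8803 (x32 461 0 254 567 8803 (x31 460 0 254 564 8803 z (l 460 0 254 564
  1136 1685)) (l 461 0 254 567 1142 1690)) (l 471 0 176 580 1168 1546)) (l 286 0 339 646 1301
  1794)) (l 358 0 305 564 1136 1694)) (x30 489 0 346 658 8961 (x31 477 0 346 658 8953 (x31 477 0
  308 564 8953 (x32 477 0 308 472 8953 (x31 469 0 304 472 8953 z (l 469 0 304 472 1117 1693)) (l
  477 0 308 472 1132 1710)) (l 475 0 205 564 1136 1594)) (l 265 0 346 658 1325 1802)) (l 489 0 136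
  554 1116 1446)))
def t011220 : T :=
  (i3 677 0 364 768 10001 (i3 516 0 364 768 9795 z (x31 493 0 364 768 9719 (x32 493 0 364 768 8555
  (l 0 0 364 768 1403 1593) (l 493 0 329 398 1169 1613)) (l 433 0 290 563 1029 1649)) (l 516 0 288
  558 1021 1723) (l 516 0 288 558 1021 1723)) (i3 677 0 213 643 10001 z (l 677 0 0 643 1177 1391)
  (l 572 0 213 496 1000 1555) (l 572 0 213 496 1000 1555)) (x30 596 0 180 424 9653 z (l 596 0 180
  424 1036 1432)) (x30 607 0 298 396 9461 z (l 607 0 298 396 1057 1660)))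
def t011221 : T :=
  (i3 1007 0 281 995 10001 (i3 566 0 272 995 9804 (x31 566 0 271 995 9804 (x31 566 0 271 995 9804
  (x32 531 0 271 995 8104 (x32 341 0 271 995 7657 (l 0 0 271 995 1948 1753) (l 341 0 271 667 1306
  1841)) (l 531 0 271 630 1234 2059)) (l 566 0 271 521 1020 1789)) (l 566 0 271 521 1020 1783)) z
  (l 566 0 272 545 1067 1800) (l 566 0 272 545 1067 1800)) (x30 611 0 281 541 9991 (x31 610 0 281
  512 9991 (x31 531 0 220 511 9991 z (l 531 0 220 511 1001 1622)) (l 610 0 281 512 1055 1839)) (l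
  611 0 281 541 1060 1874)) (x30 587 0 281 520 10001 (x31 587 0 281 520 10001 (x31 587 0 276 520
  10001 (x32 587 0 216 520 10001 (x32 587 0 216 520 10001 (l 587 0 0 520 1019 1203) (l 566 0 216
  485 1000 1591)) (l 562 0 210 516 1011 1611)) (l 398 0 276 519 1017 1584)) (l 421 0 281 470 1000
  1561)) (l 487 0 281 386 1000 1506)) (x30 1007 0 281 594 8913 (x31 1007 0 281 549 8834 (x31 1007
  0 281 426 8727 (x32 1007 0 281 348 8091 (x32 1007 0 281 298 8091 (l 1007 0 281 0 1741 1652) (l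
  715 0 281 298 1236 2032)) (l 779 0 281 348 1347 2211)) (l 663 0 281 426 1146 1974)) (l 524 0 281
  549 1132 1828)) (l 504 0 254 594 1122 1742)))
def t011223 : T :=
  (i3 1013 0 364 905 10001 (i3 773 0 364 905 9497 (x31 560 0 338 905 9497 (x31 560 0 338 905 9434
  (x32 403 0 338 905 8889 (x32 376 0 338 905 8889 (l 0 0 338 905 1650 1686) (l 376 0 317 617 1125
  1707)) (l 403 0 337 656 1196 1818)) (l 560 0 253 575 1060 1712)) (l 560 0 228 576 1053 1660))
  (x31 773 0 364 500 9497 (x32 773 0 364 500 9497 (l 773 0 364 0 1334 1537) (l 539 0 297 500 1053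
  1702)) (l 528 0 297 500 1053 1691)) (l 451 0 307 598 1090 1741) (l 451 0 307 598 1090 1741))
  (x30 578 0 283 547 10001 (x31 539 0 283 546 10001 (x31 538 0 209 507 10001 (x32 538 0 209 507
  10001 (x32 538 0 209 507 10001 (l 538 0 209 507 1000 1524) (l 537 0 209 507 1000 1523)) (l 538 0
  209 507 1000 1524)) (l 538 0 209 507 1000 1524)) (l 539 0 283 546 1003 1722)) (l 578 0 94 547
  1000 1366)) (x30 768 0 314 511 9597 (x31 768 0 314 511 9597 (x31 768 0 216 495 9597 (x32 768 0
  216 492 8819 (x32 768 0 216 492 8674 (l 768 0 0 486 1325 1309) (l 668 0 216 492 1153 1653)) (l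
  657 0 214 469 1134 1613)) (l 604 0 139 495 1042 1430)) (l 407 0 314 511 1113 1618)) (l 456 0 299
  460 1060 1580)) (x30 1013 0 316 559 9814 (x31 1013 0 316 559 9814 (x31 1013 0 316 506 9795 (x32
  1013 0 316 470 8985 (x32 1013 0 316 395 8929 (l 1013 0 316 0 1748 1676) (l 645 0 316 395 1120
  1735)) (l 642 0 314 470 1113 1808)) (l 591 0 288 506 1021 1742)) (l 545 0 261 559 1019 1696)) (l
  593 0 204 548 1023 1613)))
def t011230 : T :=
  (i3 888 0 364 784 9700 (i3 619 0 364 784 9364 z (x31 529 0 364 784 9364 (x32 529 0 364 784 8348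
  (l 0 0 364 784 1619 1681) (l 529 0 330 424 1198 1724)) (l 473 0 294 517 1068 1697)) (l 619 0 257
  518 1106 1765) (l 619 0 257 518 1106 1765)) (i3 888 0 364 462 9700 z (l 888 0 364 0 1586 1670)
  (l 560 0 284 462 1031 1700) (l 560 0 284 462 1031 1700)) (x30 600 0 297 500 9277 z (l 600 0 297
  500 1078 1811)) (x30 559 0 284 376 9700 z (l 559 0 284 376 1031 1600)))
def t011231 : T :=
  (i3 920 0 315 924 9981 (i3 531 0 314 924 9981 (x31 531 0 314 924 8913 (x31 531 0 314 924 8913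
  (x32 492 0 314 924 8842 (x33 403 0 314 924 8842 (l 0 0 314 924 1756 1704) (l 403 0 314 595 1131
  1886)) (l 492 0 314 595 1138 2008)) (l 531 0 314 590 1122 1925)) (l 531 0 314 548 1122 1861)) z
  (l 490 0 279 527 1002 1673) (l 490 0 279 527 1002 1673)) (x30 573 0 300 544 9417 (x31 550 0 300
  543 9329 (x31 550 0 300 418 9329 z (l 550 0 300 418 1072 1704)) (l 550 0 300 543 1072 1845)) (l
  573 0 297 544 1062 1865)) (x30 731 0 315 551 8482 (x31 731 0 315 545 8482 (x31 731 0 315 545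
  8482 (x32 731 0 0 545 8177 (x33 731 0 0 545 8177 (l 664 0 0 545 1223 1337) (l 731 0 0 545 1346
  1410)) (l 710 0 0 545 1308 1387)) (l 352 0 315 545 1179 1695)) (l 640 0 315 277 1179 1706)) (l
  349 0 315 551 1179 1698)) (x30 920 0 314 429 9644 (x31 920 0 314 429 9644 (x31 920 0 314 429
  8913 (x32 920 0 314 370 8727 (x33 920 0 314 370 8727 (l 920 0 314 0 1694 1666) (l 622 0 267 370
  1146 1658)) (l 664 0 255 357 1223 1664)) (l 475 0 314 429 1122 1665)) (l 563 0 240 429 1037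
  1604)) (l 542 0 290 408 1037 1663)))
def t011233 : T :=
  (i3 1021 0 343 973 10001 (i3 846 0 343 973 9399 (x31 562 0 343 973 9364 (x31 562 0 343 973 9364
  (x32 464 0 343 973 7801 (x33 339 0 343 973 7801 (l 0 0 343 973 1884 1852) (l 339 0 343 662 1282
  1835)) (l 464 0 343 673 1303 1973)) (l 562 0 294 551 1068 1825)) (l 550 0 304 576 1116 1864))
  (x31 846 0 343 525 9338 (x32 846 0 343 465 9311 (l 846 0 343 0 1515 1583) (l 571 0 296 465 1074
  1740)) (l 526 0 295 525 1071 1762)) (l 571 0 293 548 1064 1829) (l 571 0 293 548 1064 1829))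
  (x30 605 0 305 560 9251 (x31 503 0 305 560 9217 (x31 503 0 299 560 9217 (x32 496 0 278 560 9217
  (x33 495 0 259 560 9217 (l 495 0 250 560 1085 1674) (l 495 0 259 560 1085 1694)) (l 496 0 278
  560 1085 1735)) (l 503 0 299 519 1085 1741)) (l 503 0 305 560 1107 1800)) (l 605 0 106 558 1081
  1473)) (x30 711 0 300 564 9217 (x31 711 0 300 564 9158 (x31 711 0 230 564 9158 (x32 711 0 230
  564 9042 (x33 711 0 169 564 9042 (l 711 0 0 564 1270 1389) (l 619 0 169 563 1106 1628)) (l 690 0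
  230 564 1232 1831)) (l 610 0 230 564 1092 1751)) (l 524 0 300 564 1092 1815)) (l 575 0 299 560
  1085 1860)) (x30 1021 0 266 554 10001 (x31 1021 0 266 554 10001 (x31 1021 0 266 515 10001 (x32
  1021 0 263 515 10001 (x33 1021 0 263 515 10001 (l 1021 0 263 0 1823 1586) (l 539 0 249 515 1000
  1665)) (l 678 0 255 415 1211 1702)) (l 468 0 266 491 1000 1603)) (l 374 0 266 554 1073 1581)) (l
  543 0 263 397 1000 1563)))
def t0112 : T :=
  (i3 1230 0 364 1122 10001 (i3 1230 0 364 1122 10001 t011200 t011201 z t011203) (i3 778 0 364 853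
  10001 t011210 z z t011213) (i3 1013 0 364 995 10001 t011220 t011221 z t011223) (i3 1021 0 364
  973 10001 t011230 t011231 z t011233))
def t012001 : T :=
  (i3 0 0 0 1268 5013 (i3 0 0 0 1246 4598 z z (l 0 0 0 1246 2175 1288) (l 0 0 0 1246 2175 1288))
  (x30 0 0 0 1268 5013 (x31 0 0 0 1268 5013 (x32 0 0 0 1194 5013 (x30 0 0 0 1194 4799 (x30 0 0 0
  1194 4799 (l 0 0 0 1194 2084 1234) (l 0 0 0 1194 2084 1234)) (l 0 0 0 1194 2084 1234)) (l 0 0 0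
  1143 1995 1181)) (l 0 0 0 1268 2213 1310)) (l 0 0 0 1202 2098 1242)) (x30 0 0 0 1163 4927 z (l 0
  0 0 1163 2030 1202)) (x30 0 0 0 1221 4729 (x31 0 0 0 1205 4729 (x32 0 0 0 1205 4523 (x30 0 0 0
  1205 4523 (x30 0 0 0 1205 4515 z (l 0 0 0 1205 2215 1312)) (l 0 0 0 1203 2211 1309)) (l 0 0 0
  1205 2215 1312)) (l 0 0 0 1190 2115 1252)) (l 0 0 0 1221 2148 1272)))
def t012002 : T :=
  (i3 1358 0 0 860 9018 (i3 775 0 0 486 7408 z (x32 775 0 0 449 7226 (x30 775 0 0 447 7083 z (l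
  775 0 0 447 1412 1285)) (l 760 0 0 449 1384 1271)) (l 741 0 0 486 1350 1288) (l 741 0 0 486 1350
  1288)) (x30 665 0 0 706 8362 (x31 647 0 0 706 8157 (x32 635 0 0 706 8157 (x30 635 0 0 706 8157
  (x30 611 0 0 706 8157 (l 608 0 0 706 1226 1373) (l 611 0 0 706 1226 1376)) (l 635 0 0 706 1226
  1401)) (l 609 0 0 706 1226 1374)) (l 647 0 0 706 1226 1414)) (l 665 0 0 614 1196 1339)) (x30 636
  0 0 658 9018 (x31 636 0 0 658 9018 (x32 636 0 0 658 9018 (x30 636 0 0 658 8742 (x30 636 0 0 655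
  8742 (l 636 0 0 652 1144 1347) (l 636 0 0 655 1144 1350)) (l 636 0 0 658 1144 1353)) (l 617 0 0
  638 1109 1312)) (l 617 0 0 639 1110 1313)) (l 617 0 0 638 1109 1312)) (x30 1358 0 0 860 8921
  (x31 1358 0 0 860 8245 (x32 1358 0 0 695 8245 (x30 1358 0 0 587 6926 (x30 1358 0 0 407 6087 (l
  1358 0 0 0 2441 1445) (l 914 0 0 407 1643 1565)) (l 803 0 0 587 1444 1709)) (l 589 0 0 695 1213
  1345)) (l 429 0 0 860 1494 1341)) (l 622 0 0 645 1121 1325)))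
def t012003 : T :=
  (i3 1252 0 0 663 9443 (i3 1144 0 0 581 8819 z (x32 1144 0 0 581 8397 (x30 1144 0 0 581 8397 (l
  1144 0 0 0 2082 1233) (l 615 0 0 581 1191 1321)) (l 655 0 0 581 1192 1361)) (l 623 0 0 581 1134
  1285) (l 623 0 0 581 1134 1285)) (x30 629 0 0 659 8905 (x31 618 0 0 647 8905 (x32 618 0 0 615
  8905 (x30 618 0 0 615 8905 (x30 618 0 0 614 8905 (l 617 0 0 614 1123 1294) (l 618 0 0 614 1125
  1295)) (l 618 0 0 615 1125 1296)) (l 618 0 0 614 1125 1295)) (l 618 0 0 647 1125 1329)) (l 629 0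
  0 659 1146 1353)) (x30 609 0 0 650 9443 (x31 607 0 0 650 9443 (x32 607 0 0 635 9443 (x30 602 0 0
  631 9443 (x30 602 0 0 631 9408 (l 602 0 0 631 1097 1295) (l 584 0 0 611 1063 1255)) (l 582 0 0
  609 1059 1251)) (l 607 0 0 635 1105 1305)) (l 542 0 0 650 1130 1250)) (l 609 0 0 637 1108 1309))
  (x30 1252 0 0 663 9268 (x31 1252 0 0 663 8945 (x32 1252 0 0 640 8945 (x30 1252 0 0 616 8197 (x30
  1252 0 0 361 6318 (l 1252 0 0 0 2278 1349) (l 870 0 0 361 1583 1356)) (l 665 0 0 616 1220 1435))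
  (l 611 0 0 640 1118 1317)) (l 632 0 0 663 1159 1364)) (l 593 0 0 620 1079 1274)))
def t012011 : T :=
  (i3 745 0 0 719 8046 (i3 617 0 0 661 7343 (x31 617 0 0 661 7231 (x32 589 0 0 661 7231 (x30 589 0
  0 661 7231 (x31 585 0 0 661 7221 z (l 585 0 0 661 1385 1622)) (l 589 0 0 660 1383 1626)) (l 588
  0 0 660 1383 1558)) (l 617 0 0 661 1385 1605)) z (l 565 0 0 650 1362 1479) (l 565 0 0 650 1362
  1479)) (x30 704 0 0 629 7789 (x31 618 0 0 629 7789 (x32 614 0 0 622 7789 (x30 614 0 0 622 7789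
  (x31 614 0 0 613 7789 z (l 614 0 0 613 1284 1483)) (l 614 0 0 622 1303 1494)) (l 614 0 0 613
  1284 1483)) (l 618 0 0 629 1318 1508)) (l 704 0 0 537 1405 1495)) (x30 623 0 0 590 8046 z (l 623
  0 0 590 1243 1465)) (x30 745 0 0 719 7348 (x31 745 0 0 561 7348 (x32 745 0 0 431 6888 (x30 745 0
  0 431 6888 (x31 726 0 0 420 6888 z (l 726 0 0 420 1452 1714)) (l 745 0 0 431 1490 1759)) z) (l
  680 0 0 561 1361 1606)) (l 489 0 0 719 1366 1384)))
def t012013 : T :=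
  (i3 607 0 0 754 8850 (i3 607 0 0 669 7263 (x31 607 0 0 669 7263 (x32 607 0 0 668 7263 (x30 601 0
  0 668 7263 (x31 591 0 0 668 7263 z (l 591 0 0 668 1377 1508)) (l 601 0 0 668 1377 1519)) (l 607
  0 0 562 1381 1402)) (l 607 0 0 669 1379 1527)) z (l 565 0 0 668 1377 1477) (l 565 0 0 668 1377
  1477)) (x30 572 0 0 683 8606 (x31 572 0 0 683 8606 (x32 572 0 0 668 8606 (x30 572 0 0 668 8599
  (x31 571 0 0 662 8599 z (l 571 0 0 662 1163 1362)) (l 572 0 0 668 1174 1370)) (l 572 0 0 661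
  1162 1362)) (l 572 0 0 683 1200 1385)) (l 572 0 0 661 1162 1362)) (x30 607 0 0 754 8850 (x31 607
  0 0 754 8727 (x32 607 0 0 693 8727 (x30 607 0 0 693 8475 (x31 607 0 0 693 8211 z (l 607 0 0 693
  1218 1437)) (l 591 0 0 670 1180 1394)) (l 574 0 0 651 1146 1354)) (l 469 0 0 754 1325 1338)) (l
  536 0 0 643 1130 1301)) (x30 594 0 0 678 8439 (x31 571 0 0 678 8376 (x32 571 0 0 634 8362 (x30
  571 0 0 633 8362 (x31 569 0 0 633 8362 z (l 569 0 0 633 1196 1379)) (l 571 0 0 633 1196 1381))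
  (l 554 0 0 634 1197 1362)) (l 506 0 0 678 1194 1304)) (l 594 0 0 586 1185 1351)))
def t012021 : T :=
  (i3 798 0 0 762 7675 (i3 601 0 0 762 7048 (x31 601 0 0 762 7048 (x32 601 0 0 762 7048 (x30 462 0
  0 762 6068 (x32 462 0 0 734 6068 z (l 462 0 0 734 1648 1610)) (l 462 0 0 762 1711 1648)) (l 601
  0 0 632 1419 1601)) (l 601 0 0 687 1543 1688)) z (l 585 0 0 633 1422 1586) (l 585 0 0 633 1422
  1586)) (x30 741 0 0 762 6558 (x31 560 0 0 762 6549 (x32 560 0 0 683 6549 (x30 560 0 0 683 6528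
  (x32 560 0 0 683 6519 z (l 560 0 0 683 1534 1588)) (l 560 0 0 682 1532 1587)) (l 560 0 0 680
  1527 1584)) (l 434 0 0 762 1711 1540)) (l 741 0 0 463 1525 1515)) (x30 613 0 0 643 6926 z (l 613
  0 0 643 1444 1599)) (x30 798 0 0 721 7675 (x31 798 0 0 721 7200 (x32 798 0 0 693 7200 (x30 798 0
  0 508 5345 (x32 779 0 0 508 5187 z (l 779 0 0 508 1928 2087)) (l 798 0 0 493 1871 2077)) (l 534
  0 0 693 1389 1473)) (l 561 0 0 721 1445 1539)) (l 573 0 0 649 1303 1468)))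
def t012022 : T :=
  (i3 742 0 0 791 9311 (i3 629 0 0 791 9277 (x31 624 0 0 791 8803 (x32 611 0 0 791 8674 (x30 397 0
  0 791 6959 (x32 397 0 0 791 6959 z (l 397 0 0 791 1437 1691)) (l 397 0 0 791 1437 1691)) (l 611
  0 0 618 1153 1339)) (l 624 0 0 625 1136 1336)) (x32 629 0 0 579 9125 (x30 629 0 0 579 9010 z (l
  629 0 0 579 1110 1276)) (l 621 0 0 556 1096 1243)) (l 611 0 0 594 1078 1273) (l 611 0 0 594 1078
  1273)) (x30 742 0 0 616 9083 (x31 742 0 0 616 8468 (x32 742 0 0 584 8292 (x30 742 0 0 579 7548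
  (x32 736 0 0 579 7548 z (l 736 0 0 579 1325 1399)) (l 742 0 0 579 1335 1406)) (l 670 0 0 584
  1206 1334)) (l 656 0 0 616 1181 1353)) (l 612 0 0 607 1101 1297)) (x30 638 0 0 740 9010 (x31 638
  0 0 740 8921 (x32 638 0 0 630 8921 (x30 638 0 0 630 8711 (x32 638 0 0 630 8711 z (l 638 0 0 630
  1148 1349)) (l 638 0 0 630 1148 1349)) (l 623 0 0 617 1121 1319)) (l 484 0 0 740 1340 1302)) (l
  617 0 0 611 1110 1306)) (x30 663 0 0 665 9311 (x31 663 0 0 665 8977 (x32 663 0 0 611 8977 (x30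
  663 0 0 581 8383 (x32 663 0 0 581 8383 z (l 663 0 0 581 1193 1401)) (l 663 0 0 581 1193 1401))
  (l 619 0 0 611 1114 1308)) (l 614 0 0 665 1205 1363)) (l 596 0 0 593 1074 1270)))
def t012023 : T :=
  (i3 1156 0 0 845 8497 (i3 1156 0 0 609 7463 (x31 683 0 0 609 7452 (x32 652 0 0 609 7452 (x30 628
  0 0 609 5618 (x32 622 0 0 609 5618 z (l 622 0 0 609 1780 1746)) (l 628 0 0 609 1798 1756)) (l
  652 0 0 609 1342 1440)) (l 683 0 0 609 1411 1528)) (x32 1156 0 0 609 7463 (x30 1156 0 0 609 7452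
  (l 1156 0 0 0 2379 1409) (l 652 0 0 609 1342 1532)) (l 651 0 0 609 1340 1530)) z z) (x30 613 0 0
  639 8098 (x31 613 0 0 639 8059 (x32 613 0 0 631 8059 (x30 613 0 0 630 8059 (x32 603 0 0 628 8059
  z (l 603 0 0 628 1241 1363)) (l 613 0 0 630 1262 1377)) (l 604 0 0 631 1243 1367)) (l 613 0 0
  639 1262 1386)) (l 600 0 0 596 1235 1327)) (x30 639 0 0 755 7605 (x31 639 0 0 755 7605 (x32 639
  0 0 690 7605 (x30 639 0 0 690 7605 (x32 639 0 0 665 7605 z (l 639 0 0 665 1315 1444)) (l 639 0 0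
  690 1325 1469)) (l 639 0 0 685 1315 1464)) (l 538 0 0 755 1449 1416)) (l 639 0 0 609 1315 1388))
  (x30 572 0 0 845 8497 (x31 569 0 0 845 8131 (x32 569 0 0 679 8131 (x30 569 0 0 657 7943 (x32 564
  0 0 657 7931 z (l 564 0 0 657 1261 1344)) (l 569 0 0 656 1259 1350)) (l 510 0 0 679 1230 1301))
  (l 370 0 0 845 1531 1296)) (l 572 0 0 624 1177 1321)))
def t012031 : T :=
  (i3 1284 0 0 1259 8397 (i3 709 0 0 1259 7216 (x31 709 0 0 1259 6888 (x32 709 0 0 1259 6794 (x30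
  621 0 0 1259 6403 (x33 465 0 0 1259 6403 (l 0 0 0 1259 2455 1453) (l 465 0 0 801 1562 1622)) (l
  621 0 0 809 1578 1866)) (l 709 0 0 693 1472 1672)) (l 709 0 0 711 1452 1680)) z (l 666 0 0 711
  1386 1574) (l 666 0 0 711 1386 1574)) (x30 701 0 0 686 7497 (x31 701 0 0 686 7497 (x32 667 0 0
  685 7497 (x30 667 0 0 685 7497 (x33 667 0 0 685 7497 (l 667 0 0 685 1336 1548) (l 662 0 0 684
  1334 1541)) (l 641 0 0 685 1336 1519)) (l 618 0 0 685 1336 1492)) (l 701 0 0 686 1344 1588)) (l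
  699 0 0 616 1341 1505)) (x30 681 0 0 675 7599 z (l 681 0 0 675 1316 1552)) (x30 1284 0 0 751
  8397 (x31 1284 0 0 751 7514 (x32 1284 0 0 711 7514 (x30 1284 0 0 560 7514 (x33 1284 0 0 460 6730
  (l 1284 0 0 0 2462 1458) (l 775 0 0 460 1486 1411)) (l 694 0 0 560 1331 1434)) (l 455 0 0 711
  1386 1337)) (l 492 0 0 751 1464 1426)) (l 621 0 0 592 1191 1389)))
def t012032 : T :=
  (i3 1324 0 0 1113 9728 (i3 719 0 0 1113 9616 (x31 673 0 0 1113 8897 (x32 614 0 0 1113 8897 (x30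
  408 0 0 1113 6964 (x33 0 0 0 1113 4888 (l 0 0 0 1113 2046 1211) z) (l 408 0 0 781 1436 1694)) (l
  614 0 0 607 1124 1323)) (l 673 0 0 592 1240 1375)) (x32 719 0 0 561 9616 (x30 719 0 0 480 8197 z
  (l 719 0 0 480 1220 1243)) (l 613 0 0 561 1040 1225)) z z) (x30 680 0 0 627 9192 (x31 680 0 0
  627 8666 (x32 680 0 0 563 8666 (x30 680 0 0 563 8666 (x30 680 0 0 563 8666 (l 680 0 0 563 1154
  1294) (l 680 0 0 563 1154 1294)) (l 680 0 0 563 1154 1294)) (l 680 0 0 563 1154 1294)) (l 680 0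
  0 627 1154 1364)) (l 641 0 0 591 1088 1286)) (x30 641 0 0 571 9728 (x31 641 0 0 571 9681 (x32
  641 0 0 571 9607 (x30 641 0 0 571 9506 (x30 641 0 0 571 9192 (l 641 0 0 571 1088 1264) (l 641 0
  0 571 1088 1264)) (l 620 0 0 571 1052 1243)) (l 612 0 0 566 1041 1230)) (l 609 0 0 562 1033
  1222)) (l 606 0 0 559 1028 1216)) (x30 1324 0 0 723 9329 (x31 1324 0 0 723 8468 (x32 1324 0 0
  526 8468 (x30 1324 0 0 526 8468 (x33 1324 0 0 523 8468 (l 1324 0 0 0 2246 1330) (l 696 0 0 523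
  1181 1267)) (l 696 0 0 526 1181 1270)) (l 700 0 0 525 1188 1273)) (l 541 0 0 723 1329 1329)) (l
  632 0 0 583 1072 1268)))
def t012033 : T :=
  (i3 1287 0 0 1163 8606 (i3 1159 0 0 1163 8078 (x31 659 0 0 1163 8065 (x32 645 0 0 1163 8065 (x30
  515 0 0 1163 6545 (x33 330 0 0 1163 5974 (l 0 0 0 1163 2152 1274) (l 330 0 0 905 1674 1571)) (l
  515 0 0 822 1528 1805)) (l 645 0 0 670 1240 1464)) (l 659 0 0 684 1267 1499)) (x32 1159 0 0 633
  8078 (x30 1159 0 0 610 8078 (l 1159 0 0 0 2207 1307) (l 650 0 0 610 1238 1434)) (l 650 0 0 633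
  1238 1461)) (l 654 0 0 672 1246 1470) (l 654 0 0 672 1246 1470)) (x30 668 0 0 691 7899 (x31 665
  0 0 689 7899 (x32 665 0 0 689 7899 (x30 665 0 0 689 7899 (x30 656 0 0 689 7887 (l 656 0 0 689
  1268 1487) (l 656 0 0 689 1268 1487)) (l 665 0 0 686 1266 1494)) (l 665 0 0 632 1266 1436)) (l
  648 0 0 689 1268 1478)) (l 668 0 0 691 1272 1503)) (x30 618 0 0 704 8569 (x31 618 0 0 704 8489
  (x32 618 0 0 657 8489 (x30 618 0 0 657 8475 (x30 617 0 0 657 8272 (l 617 0 0 657 1209 1409) (l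
  617 0 0 657 1209 1409)) (l 618 0 0 641 1180 1392)) (l 618 0 0 640 1178 1391)) (l 540 0 0 704
  1296 1373)) (l 612 0 0 634 1167 1378)) (x30 1287 0 0 584 8606 (x31 1287 0 0 584 8606 (x32 1287 0
  0 584 8606 (x30 1287 0 0 583 7447 (x33 1287 0 0 517 7195 (l 1287 0 0 0 2451 1451) (l 730 0 0 517
  1390 1384)) (l 705 0 0 583 1343 1428)) (l 610 0 0 584 1162 1322)) (l 650 0 0 584 1238 1367)) (l
  610 0 0 584 1162 1347)))
def t0120 : T :=
  (i3 1358 0 0 1268 9728 (i3 1358 0 0 1268 9443 z t012001 t012002 t012003) (i3 745 0 0 754 8850 z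
  t012011 z t012013) (i3 1156 0 0 845 9311 z t012021 t012022 t012023) (i3 1324 0 0 1259 9728 z
  t012031 t012032 t012033))
def t012200 : T :=
  (i3 431 0 467 741 9901 (i3 431 0 466 735 9901 z (x32 357 0 466 735 9901 (x32 357 0 466 735 9901
  (l 0 0 466 735 1449 1455) (l 357 0 323 512 1010 1582)) (l 357 0 466 415 1011 1652)) (l 431 0 205
  642 1266 1701) (l 431 0 205 642 1266 1701)) (i3 429 0 467 741 8629 z (l 429 0 295 585 1159 1746)
  (l 0 0 467 741 1461 1463) (l 429 0 295 585 1159 1746)) (x30 407 0 389 555 9091 z (l 407 0 389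
  555 1100 1796)) (x30 431 0 273 589 8584 z (l 431 0 273 589 1165 1726)))
def t012201 : T :=
  (i3 1355 0 0 1187 8197 (i3 776 0 0 1187 7646 (x31 719 0 0 1187 7646 (x32 719 0 0 1187 7617 (x32
  712 0 0 1187 7548 (x30 551 0 0 1187 6415 (l 0 0 0 1187 2599 1539) (l 551 0 0 712 1559 1512)) (l
  712 0 0 605 1325 1546)) (l 719 0 0 572 1313 1510)) (l 716 0 0 596 1308 1544)) z (l 776 0 0 489
  1417 1464) (l 776 0 0 489 1417 1464)) (x30 724 0 0 615 7657 (x31 724 0 0 615 7571 (x32 723 0 0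
  571 7571 (x32 723 0 0 570 7571 (x30 723 0 0 567 7571 (l 723 0 0 566 1321 1513) (l 723 0 0 567
  1321 1514)) (l 723 0 0 570 1321 1518)) (l 723 0 0 571 1321 1519)) (l 724 0 0 615 1347 1577)) (l
  715 0 0 594 1306 1540)) (x30 668 0 0 556 8197 z (l 668 0 0 556 1220 1441)) (x30 1355 0 0 628
  8026 (x31 1355 0 0 625 8026 (x32 1355 0 0 609 7887 (x32 1355 0 0 566 7657 (x30 1355 0 0 566 7657
  (l 1355 0 0 0 2475 1465) (l 715 0 0 566 1306 1455)) (l 824 0 0 562 1505 1567)) (l 694 0 0 609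
  1268 1484)) (l 681 0 0 625 1246 1471)) (l 685 0 0 628 1251 1478)))
def t012203 : T :=
  (i3 827 0 437 655 10001 (i3 765 0 437 655 10001 (x31 489 0 437 655 10001 (x32 489 0 437 655
  10001 (x32 489 0 437 655 10001 (x30 428 0 437 655 10001 (l 0 0 437 655 1292 1324) (l 428 0 434
  469 1000 1563)) (l 489 0 427 460 1000 1612)) (l 489 0 437 332 1000 1475)) (l 370 0 379 589 1162
  1570)) (x32 765 0 437 530 8362 (x32 765 0 437 530 7764 (l 765 0 437 0 1437 1394) (l 436 0 266
  530 1288 1499)) (l 413 0 381 492 1196 1536)) (l 512 0 324 468 1000 1519) (l 512 0 324 468 1000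
  1519)) (x30 574 0 348 563 10001 (x31 382 0 348 563 10001 (x32 382 0 348 529 10001 (x32 382 0 348
  517 10001 (x30 382 0 348 501 10001 (l 382 0 348 472 1000 1409) (l 382 0 348 501 1000 1443)) (l
  382 0 348 517 1020 1461)) (l 382 0 303 529 1043 1419)) (l 379 0 348 563 1110 1512)) (l 574 0 284
  515 1079 1593)) (x30 549 0 244 560 9058 z (l 549 0 244 560 1104 1568)) (x30 827 0 406 602 9100
  (x31 827 0 406 602 8439 (x32 827 0 406 601 8439 (x32 827 0 406 313 8383 (x30 827 0 406 239 8292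
  (l 827 0 406 0 1554 1437) (l 642 0 406 239 1206 1516)) (l 635 0 406 313 1193 1597)) (l 473 0 238
  601 1185 1524)) (l 321 0 366 602 1187 1515)) (l 535 0 200 557 1099 1494)))
def t012210 : T :=
  (i3 618 0 634 569 9158 (i3 618 0 634 569 8827 z (x32 571 0 634 569 8827 (x32 356 0 634 569 8749
  (l 0 0 634 569 1486 1584) (l 356 0 456 543 1143 1716)) (l 571 0 396 393 1133 1700)) (l 618 0 218
  539 1137 1643) (l 618 0 218 539 1137 1643)) (i3 466 0 472 341 9100 z (l 466 0 469 287 1099 1513)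
  (l 403 0 472 341 1106 1516) (l 466 0 469 287 1099 1513)) (x30 618 0 323 543 8749 z (l 618 0 323
  543 1143 1793)) (x30 594 0 292 483 9158 z (l 594 0 292 483 1092 1650)))
def t012211 : T :=
  (i3 631 0 623 569 10001 (i3 631 0 614 569 9552 (x31 562 0 614 569 9552 (x32 560 0 614 569 9552
  (x32 305 0 614 569 8124 (x31 253 0 614 569 8124 (l 0 0 614 569 1439 1572) (l 253 0 525 559 1231
  1792)) (l 305 0 547 567 1282 1906)) (l 560 0 333 477 1047 1685)) (l 562 0 307 569 1218 1783)) z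
  (l 631 0 205 546 1169 1650) (l 631 0 205 546 1169 1650)) (x30 550 0 432 464 10001 (x31 512 0 432
  464 10001 (x32 512 0 395 438 10001 (x32 512 0 395 438 10001 (x31 510 0 379 425 10001 (l 493 0
  371 425 1000 1592) (l 510 0 379 416 1000 1610)) (l 512 0 395 438 1000 1662)) (l 512 0 389 426
  1000 1639)) (l 321 0 432 464 1013 1538)) (l 550 0 432 222 1016 1481)) (x30 564 0 419 475 9616
  (x31 563 0 389 475 9616 (x32 563 0 389 475 9616 z (l 563 0 389 475 1040 1756)) (l 563 0 344 475
  1040 1693)) (l 564 0 419 475 1042 1798)) (x30 631 0 623 569 8636 (x31 631 0 623 495 8636 (x32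
  631 0 623 357 8636 (x32 631 0 623 278 7801 (x31 631 0 623 180 7801 (l 631 0 623 0 1460 1553) (l
  630 0 547 180 1282 1834)) (l 630 0 547 278 1282 2045)) (l 566 0 494 357 1158 1901)) (l 592 0 323
  495 1278 1851)) (l 631 0 221 569 1192 1702)))
def t012213 : T :=
  (i3 940 0 605 563 10001 (i3 697 0 605 548 9166 (x31 522 0 605 548 8905 (x32 489 0 605 548 8850
  (x32 338 0 605 548 8850 (x31 263 0 605 548 8819 (l 0 0 605 548 1418 1518) (l 263 0 484 525 1134
  1608)) (l 338 0 482 536 1130 1700)) (l 489 0 482 347 1130 1631)) (l 522 0 360 537 1123 1733))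
  (x32 697 0 552 313 8866 (x32 697 0 552 313 8497 (l 697 0 552 0 1294 1524) (l 450 0 502 313 1177
  1864)) (l 611 0 404 301 1128 1879)) (l 591 0 294 519 1091 1694) (l 591 0 294 519 1091 1694))
  (x30 500 0 502 482 10001 (x31 447 0 484 482 10001 (x32 447 0 416 434 10001 (x32 447 0 416 433
  10001 (x31 447 0 401 418 10001 (l 447 0 396 413 1000 1547) (l 447 0 401 418 1000 1561)) (l 447 0
  416 433 1000 1600)) (l 447 0 412 434 1000 1596)) (l 280 0 484 482 1134 1573)) (l 500 0 502 231
  1177 1527)) (x30 761 0 339 563 8757 (x31 761 0 339 563 8742 (x32 761 0 339 544 8742 (x32 761 0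
  267 544 8742 (x31 761 0 267 544 8727 (l 761 0 0 544 1404 1502) (l 621 0 267 503 1146 1669)) (l
  620 0 267 530 1144 1702)) (l 620 0 339 494 1144 1757)) (l 558 0 339 563 1178 1775)) (l 618 0 256
  546 1142 1704)) (x30 940 0 425 542 8834 (x31 940 0 425 542 8819 (x32 940 0 425 542 8819 (x32 940
  0 425 387 8796 (x31 940 0 425 260 8390 (l 940 0 425 0 1734 1614) (l 646 0 425 260 1192 1615)) (l
  616 0 425 387 1137 1739)) (l 584 0 246 542 1134 1648)) (l 429 0 425 542 1134 1728)) (l 487 0 353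
  541 1132 1690)))
def t012220 : T :=
  (i3 563 0 493 628 9426 (i3 492 0 493 628 9426 z (x32 465 0 493 628 9426 (x32 415 0 493 628 9426
  (l 0 0 493 628 1280 1423) (l 415 0 447 386 1061 1674)) (l 465 0 490 266 1165 1660)) (l 492 0 186
  527 1074 1497) (l 492 0 186 527 1074 1497)) (i3 563 0 493 613 8540 z (l 283 0 493 454 1171 1555)
  (l 563 0 0 613 1249 1443) (l 283 0 493 454 1171 1555)) (x30 420 0 493 383 8540 z (l 420 0 493
  383 1171 1640)) (x30 542 0 493 208 8540 z (l 542 0 493 208 1171 1582)))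
def t012221 : T :=
  (i3 561 0 428 443 10001 (i3 561 0 393 442 10001 (x31 561 0 393 442 10001 (x32 561 0 393 442
  10001 (x32 381 0 393 442 10001 (x32 381 0 393 442 10001 z (l 381 0 393 442 1000 1483)) (l 381 0
  393 442 1000 1483)) (l 561 0 354 288 1013 1385)) (l 433 0 393 442 1000 1499)) z (l 482 0 310 427
  1000 1423) (l 482 0 310 427 1000 1423)) (x30 561 0 428 442 10001 (x31 511 0 428 442 10001 (x32
  511 0 389 431 10001 (x32 511 0 389 431 10001 (x32 509 0 378 431 10001 z (l 509 0 378 431 1000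
  1546)) (l 511 0 389 430 1000 1561)) (l 508 0 384 429 1000 1550)) (l 361 0 428 442 1000 1476)) (l
  561 0 428 212 1013 1393)) (x30 536 0 418 405 10001 (x31 499 0 418 405 10001 (x32 499 0 411 396
  10001 z (l 499 0 411 396 1000 1522)) (l 456 0 418 405 1000 1507)) (l 536 0 418 340 1000 1499))
  (x30 561 0 425 443 9951 (x31 519 0 425 443 9951 (x32 519 0 425 442 9634 (x32 519 0 425 337 7617
  (x32 519 0 425 317 7617 z (l 519 0 425 317 1313 1861)) (l 502 0 425 337 1396 1893)) (l 312 0 425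
  442 1038 1490)) (l 388 0 425 443 1005 1547)) (l 561 0 211 443 1013 1373)))
def t012223 : T :=
  (i3 564 0 494 533 10001 (i3 564 0 494 533 9981 (x31 555 0 443 532 9981 (x32 555 0 443 454 9981
  (x32 432 0 443 454 7693 (x32 422 0 442 448 7693 z (l 422 0 442 448 1300 1794)) (l 432 0 443 454
  1331 1820)) (l 555 0 369 333 1002 1464)) (l 371 0 377 532 1048 1522)) (x32 564 0 494 525 9108
  (x32 564 0 494 440 8614 (l 564 0 494 0 1173 1262) (l 318 0 489 440 1161 1519)) (l 371 0 359 525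
  1098 1488)) (l 407 0 280 533 1050 1423) (l 407 0 280 533 1050 1423)) (x30 416 0 476 526 10001
  (x31 416 0 476 524 10001 (x32 416 0 410 469 10001 (x32 416 0 410 469 10001 (x32 416 0 396 453
  10001 z (l 416 0 396 453 1000 1502)) (l 416 0 410 469 1000 1540)) (l 416 0 410 469 1000 1540))
  (l 279 0 476 524 1130 1559)) (l 416 0 277 526 1039 1419)) (x30 391 0 493 477 9552 (x31 391 0 493
  477 9552 (x32 391 0 458 450 9552 (x32 391 0 449 449 9552 (x32 391 0 441 448 9552 z (l 391 0 441
  448 1047 1534)) (l 391 0 449 449 1066 1546)) (l 391 0 458 450 1087 1560)) (l 346 0 493 477 1171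
  1596)) (l 391 0 455 450 1080 1556)) (x30 368 0 441 533 10001 (x31 368 0 441 533 9552 (x32 368 0
  441 530 9552 (x32 368 0 441 440 9552 (x32 368 0 441 431 9552 z (l 368 0 441 431 1047 1491)) (l
  368 0 441 440 1047 1502)) (l 312 0 367 530 1047 1446)) (l 273 0 422 533 1053 1487)) (l 368 0 337
  498 1000 1423)))
def t012230 : T :=
  (i3 752 0 622 661 9452 (i3 654 0 622 661 9067 z (x32 431 0 622 661 9067 (x32 431 0 622 661 8711
  (l 0 0 622 661 1557 1772) (l 431 0 497 418 1148 1815)) (l 431 0 477 466 1103 1843)) (l 654 0 223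
  500 1187 1702) (l 654 0 223 500 1187 1702)) (i3 752 0 590 478 8881 z (l 586 0 322 478 1126 1734)
  (l 752 0 590 0 1363 1613) (l 586 0 322 478 1126 1734)) (x30 614 0 365 466 8985 z (l 614 0 365
  466 1113 1806)) (x30 536 0 248 449 9452 z (l 536 0 248 449 1058 1539)))
def t012231 : T :=
  (i3 596 0 465 681 10001 (i3 596 0 465 681 10001 (x31 549 0 465 681 10001 (x32 549 0 465 681 9311
  (x32 324 0 465 681 7994 (x33 260 0 465 681 7969 (l 0 0 465 681 1461 1501) (l 260 0 465 585 1255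
  1771)) (l 324 0 465 583 1251 1865)) (l 549 0 465 401 1074 1733)) (l 549 0 379 445 1000 1671)) z
  (l 596 0 205 580 1245 1655) (l 596 0 205 580 1245 1655)) (x30 575 0 369 479 10001 (x31 545 0 363
  470 10001 (x32 518 0 363 457 10001 (x32 518 0 363 457 10001 (x33 510 0 363 456 10001 (l 507 0
  362 456 1000 1617) (l 510 0 363 453 1000 1618)) (l 518 0 363 457 1000 1631)) (l 507 0 325 457
  1000 1568)) (l 545 0 363 470 1009 1677)) (l 575 0 369 479 1040 1729)) (x30 596 0 241 527 8842
  (x31 596 0 241 527 8842 (x32 596 0 234 527 8842 z (l 596 0 234 527 1131 1646)) (l 596 0 241 527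
  1131 1665)) z) (x30 596 0 465 499 10001 (x31 596 0 465 499 10001 (x32 596 0 465 430 10001 (x32
  596 0 465 322 10001 (x33 596 0 465 313 10001 (l 596 0 465 0 1078 1274) (l 548 0 399 313 1000
  1530)) (l 492 0 437 322 1010 1533)) (l 374 0 414 430 1000 1513)) (l 275 0 465 499 1074 1564)) (l
  550 0 194 470 1009 1451)))
def t012233 : T :=
  (i3 744 0 549 687 10001 (i3 700 0 549 687 9083 (x31 544 0 529 687 8482 (x32 544 0 529 687 8482
  (x32 369 0 529 687 8454 (x33 209 0 529 687 8098 (l 0 0 529 687 1480 1600) (l 209 0 529 573 1235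
  1848)) (l 369 0 512 547 1183 2093)) (l 544 0 369 523 1179 1869)) (l 543 0 285 556 1198 1807))
  (x32 700 0 549 501 9083 (x32 700 0 549 297 8569 (l 700 0 549 0 1269 1502) (l 527 0 505 297 1167
  1640)) (l 576 0 276 501 1101 1644)) (l 653 0 225 532 1184 1685) (l 653 0 225 532 1184 1685))
  (x30 612 0 356 544 10001 (x31 480 0 356 544 10001 (x32 476 0 356 506 10001 (x32 470 0 356 506
  10001 (x33 470 0 356 473 10001 (l 470 0 355 460 1000 1575) (l 470 0 356 473 1017 1593)) (l 463 0
  355 506 1088 1626)) (l 476 0 356 455 1000 1576)) (l 480 0 356 544 1169 1694)) (l 612 0 292 537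
  1154 1739)) (x30 744 0 372 526 9108 (x31 744 0 372 526 8897 (x32 744 0 364 526 8897 (x32 744 0
  242 526 8881 (x33 744 0 242 526 8881 (l 744 0 0 526 1403 1468) (l 597 0 242 522 1126 1636)) (l
  611 0 242 525 1152 1654)) (l 566 0 364 523 1124 1770)) (l 498 0 372 526 1131 1712)) (l 582 0 372
  452 1098 1708)) (x30 644 0 549 534 10001 (x31 644 0 549 534 10001 (x32 644 0 549 501 10001 (x32
  644 0 549 467 10001 (x33 644 0 549 406 10001 (l 644 0 549 0 1268 1470) (l 514 0 398 406 1000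
  1612)) (l 388 0 433 467 1004 1602)) (l 449 0 257 501 1077 1471)) (l 243 0 488 534 1148 1607)) (l
  547 0 178 488 1049 1451)))
def t0122 : T :=
  (i3 1355 0 634 1187 10001 (i3 1355 0 467 1187 10001 t012200 t012201 z t012203) (i3 940 0 634 569
  10001 t012210 t012211 z t012213) (i3 564 0 494 628 10001 t012220 t012221 z t012223) (i3 752 0
  622 687 10001 t012230 t012231 z t012233))
def t012300 : T :=
  (i3 474 0 728 556 8577 (i3 450 0 596 556 8577 z (x32 436 0 596 556 8577 (x33 340 0 596 556 8577
  (l 0 0 596 556 1237 1408) (l 340 0 356 524 1166 1503)) (l 436 0 400 413 1169 1586)) (l 450 0 240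
  540 1206 1563) (l 450 0 240 540 1206 1563)) (i3 474 0 728 556 7875 z (l 474 0 446 466 1270 1755)
  (l 0 0 728 556 1394 1558) (l 474 0 446 466 1270 1755)) (x30 435 0 530 422 8577 z (l 435 0 530
  422 1166 1742)) (x30 462 0 358 522 8078 z (l 462 0 358 522 1238 1696)))
def t012301 : T :=
  (i3 812 0 1143 0 8039 (i3 758 0 1143 0 8039 (x31 758 0 1143 0 8039 (x32 714 0 1143 0 8039 (x33
  714 0 1143 0 8039 (x30 617 0 1143 0 6502 (l 0 0 1143 0 2559 1515) (l 617 0 687 0 1538 1530)) (l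
  714 0 553 0 1244 1449)) (l 613 0 659 0 1475 1491)) (l 758 0 546 0 1322 1506)) z (l 757 0 472 0
  1319 1404) (l 757 0 472 0 1319 1404)) (x30 812 0 578 0 7447 (x31 812 0 556 0 7098 (x32 810 0 556
  0 7098 (x33 810 0 556 0 7098 (x30 810 0 556 0 7098 (l 809 0 556 0 1409 1567) (l 810 0 556 0 1411
  1568)) (l 810 0 556 0 1411 1568)) (l 810 0 525 0 1411 1527)) (l 812 0 551 0 1415 1564)) (l 771 0
  578 0 1343 1557)) (x30 578 0 680 0 7599 (x31 578 0 680 0 7599 (x32 577 0 680 0 7143 z (l 577 0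
  680 0 1400 1421)) (l 578 0 660 0 1316 1372)) (l 547 0 680 0 1317 1342)) (x30 797 0 583 0 7200 z
  (l 797 0 583 0 1389 1591)))
def t012302 : T :=
  (i3 805 0 525 538 10001 (i3 669 0 525 538 10001 (x31 592 0 525 538 9426 (x32 592 0 525 538 9426
  (x33 379 0 525 538 9426 (x30 361 0 525 538 9426 (l 0 0 525 538 1196 1302) (l 361 0 470 477 1061
  1546)) (l 379 0 482 473 1065 1573)) (l 592 0 388 327 1070 1503)) (l 362 0 481 469 1062 1549))
  (x32 669 0 371 538 10001 (x33 669 0 337 538 10001 (l 669 0 0 538 1210 1424) (l 454 0 337 443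
  1000 1450)) (l 493 0 371 389 1000 1459)) (l 656 0 363 236 1186 1423) (l 656 0 363 236 1186
  1423)) (x30 600 0 487 487 10001 (x31 388 0 487 487 10001 (x32 388 0 438 480 10001 (x33 387 0 438
  480 10001 (x30 387 0 431 453 10001 (l 387 0 431 435 1000 1474) (l 387 0 428 453 1008 1494)) (l
  387 0 438 480 1068 1541)) (l 388 0 378 469 1043 1460)) (l 307 0 487 487 1083 1520)) (l 600 0 487
  259 1085 1534)) (x30 805 0 525 405 10001 (x31 805 0 525 405 10001 (x32 805 0 469 405 10001 (x33
  805 0 339 405 9757 (x30 805 0 294 405 9681 (l 805 0 0 405 1455 1395) (l 571 0 294 405 1033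
  1505)) (l 567 0 339 405 1025 1556)) (l 485 0 469 405 1000 1582)) (l 408 0 525 405 1005 1563)) (l
  521 0 525 251 1005 1482)) (x30 504 0 291 425 9941 z (l 504 0 291 425 1006 1454)))
def t012310 : T :=
  (i3 759 0 697 549 9125 (i3 654 0 697 549 8369 z (x32 564 0 697 549 8026 (x33 299 0 697 549 7937
  (l 0 0 697 549 1629 1724) (l 299 0 518 537 1260 1849)) (l 564 0 315 529 1246 1905)) (l 654 0 247
  507 1195 1750) (l 654 0 247 507 1195 1750)) (i3 504 0 498 258 9125 z (l 504 0 469 244 1096 1529)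
  (l 485 0 498 258 1164 1568) (l 504 0 469 244 1096 1529)) (x30 622 0 383 389 8827 z (l 622 0 383
  389 1133 1739)) (x30 759 0 184 529 7231 z (l 759 0 184 529 1383 1806)))
def t012311 : T :=
  (i3 742 0 564 557 10001 (i3 742 0 564 557 7316 (x31 690 0 564 557 7316 (x32 683 0 564 557 7316
  (x33 441 0 564 557 7316 (x31 246 0 564 557 7316 (l 0 0 564 557 1367 1587) (l 246 0 532 557 1367
  1923)) (l 441 0 415 557 1367 2064)) (l 683 0 232 477 1368 1822)) (l 690 0 191 557 1367 1874)) z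
  (l 742 0 185 557 1367 1864) (l 742 0 185 557 1367 1864)) (x30 649 0 516 385 10001 (x31 538 0 516
  366 10001 (x32 538 0 407 342 10001 (x33 538 0 407 342 10001 (x31 538 0 374 342 10001 (l 538 0
  367 342 1000 1586) (l 538 0 374 341 1000 1595)) (l 538 0 407 342 1000 1642)) (l 538 0 385 342
  1000 1611)) (l 370 0 516 366 1206 1645)) (l 649 0 169 385 1189 1496)) (x30 701 0 262 513 7801
  (x31 701 0 262 513 7801 (x32 700 0 262 513 7801 z (l 700 0 262 513 1282 1865)) (l 701 0 209 513
  1284 1793)) (l 701 0 262 513 1284 1867)) (x30 736 0 471 557 7441 (x31 736 0 471 518 7441 (x32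
  736 0 471 509 7441 (x33 736 0 471 320 7419 (x31 736 0 471 229 7419 (l 736 0 471 0 1348 1448) (l
  736 0 471 229 1348 2010)) (l 736 0 459 320 1348 2217)) (l 611 0 296 509 1344 1866)) (l 685 0 210
  518 1381 1850)) (l 735 0 186 557 1385 1874)))
def t012320 : T :=
  (i3 652 0 525 557 10001 (i3 607 0 525 557 10001 z (x32 378 0 525 557 10001 (x33 369 0 525 557
  10001 (l 0 0 525 557 1242 1347) (l 369 0 454 431 1000 1613)) (l 378 0 525 304 1034 1541)) (l 607
  0 384 247 1186 1475) (l 607 0 384 247 1186 1475)) (i3 631 0 514 553 9882 z (l 402 0 514 290 1012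
  1445) (l 631 0 0 553 1233 1457) (l 402 0 514 290 1012 1445)) (x30 652 0 282 367 7875 z (l 652 0
  282 367 1270 1565)) (x30 307 0 525 391 9672 z (l 307 0 525 391 1034 1482)))
def t012321 : T :=
  (i3 577 0 453 408 10001 (i3 577 0 428 408 9941 (x31 576 0 428 408 9941 (x32 576 0 428 408 9941
  (x33 369 0 428 408 9911 (x32 369 0 428 408 9911 z (l 369 0 428 408 1009 1518)) (l 369 0 428 408
  1009 1518)) (l 576 0 374 250 1006 1391)) (l 415 0 428 408 1009 1526)) z (l 577 0 283 354 1007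
  1435) (l 577 0 283 354 1007 1435)) (x30 577 0 453 407 9951 (x31 537 0 453 407 9951 (x32 537 0
  392 407 9951 (x33 537 0 392 406 9951 (x32 532 0 379 406 9951 z (l 532 0 379 406 1005 1600)) (l
  537 0 392 406 1005 1621)) (l 534 0 388 407 1007 1614)) (l 377 0 453 406 1005 1528)) (l 577 0 369
  245 1008 1399)) (x30 576 0 453 408 9911 (x31 507 0 453 408 9911 (x32 507 0 405 408 9911 z (l 507
  0 405 408 1009 1593)) (l 441 0 453 408 1009 1586)) (l 576 0 267 408 1009 1504)) (x30 521 0 453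
  408 10001 (x31 510 0 453 408 10001 (x32 510 0 453 366 10001 (x33 510 0 453 296 8376 (x32 481 0
  449 287 8376 z (l 481 0 449 287 1194 1743)) (l 510 0 453 296 1231 1800)) (l 393 0 453 366 1000
  1494)) (l 412 0 428 408 1000 1483)) (l 521 0 453 218 1000 1385)))
def t012322 : T :=
  (i3 625 0 526 489 10001 (i3 625 0 526 489 10001 (x31 591 0 525 439 9681 (x32 591 0 486 439 9390
  (x33 387 0 486 439 9034 (x32 387 0 453 439 8842 z (l 387 0 453 439 1131 1777)) (l 379 0 486 435
  1107 1797)) (l 591 0 458 213 1065 1445)) (l 473 0 525 281 1033 1456)) (x32 625 0 420 489 10001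
  (x33 625 0 372 489 9795 (l 625 0 0 489 1092 1290) (l 585 0 372 264 1021 1436)) (l 476 0 420 347
  1000 1496)) (l 481 0 526 225 1035 1405) (l 481 0 526 225 1035 1405)) (x30 520 0 526 478 10001
  (x31 496 0 526 478 10001 (x32 496 0 440 448 10001 (x33 496 0 440 448 10001 (x32 496 0 427 428
  10001 z (l 496 0 427 428 1000 1629)) (l 492 0 440 448 1001 1666)) (l 495 0 437 446 1000 1663))
  (l 264 0 526 478 1068 1546)) (l 520 0 526 187 1035 1453)) (x30 567 0 523 489 10001 (x31 491 0
  523 489 10001 (x32 491 0 452 452 10001 (x33 490 0 450 452 10001 (x32 484 0 436 436 10001 z (l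
  484 0 436 436 1000 1577)) (l 490 0 450 452 1010 1620)) (l 491 0 452 450 1005 1637)) (l 306 0 523
  489 1092 1570)) (l 567 0 453 280 1092 1512)) (x30 510 0 526 489 9681 (x31 510 0 525 489 9681
  (x32 510 0 524 415 9286 (x33 510 0 524 249 9286 (x32 491 0 519 249 9286 z (l 491 0 519 249 1077
  1802)) (l 510 0 524 249 1077 1829)) (l 397 0 463 415 1079 1630)) (l 259 0 525 489 1033 1515)) (l
  368 0 526 347 1035 1544)))
def t012330 : T :=
  (i3 674 0 616 547 9443 (i3 533 0 616 547 9277 z (x32 394 0 616 547 9277 (x33 394 0 616 547 9277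
  (l 0 0 616 547 1246 1474) (l 394 0 474 458 1078 1822)) (l 393 0 466 473 1078 1831)) (l 533 0 447
  381 1079 1687) (l 533 0 447 381 1079 1687)) (i3 674 0 605 375 9286 z (l 595 0 391 375 1077 1609)
  (l 674 0 605 0 1222 1443) (l 595 0 391 375 1077 1609)) (x30 585 0 279 464 9443 z (l 585 0 279
  464 1059 1584)) (x30 445 0 273 510 8606 z (l 445 0 273 510 1162 1489)))
def t012331 : T :=
  (i3 647 0 584 526 10001 (i3 647 0 584 526 9515 (x31 558 0 584 526 9515 (x32 558 0 584 526 9515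
  (x33 286 0 584 526 8390 (x33 255 0 584 526 8390 (l 0 0 584 526 1195 1405) (l 255 0 527 525 1192
  1728)) (l 286 0 584 526 1195 1845)) (l 558 0 518 293 1051 1635)) (l 558 0 422 471 1070 1771)) z
  (l 647 0 189 525 1209 1647) (l 647 0 189 525 1209 1647)) (x30 647 0 351 526 10001 (x31 612 0 351
  513 10001 (x32 510 0 351 442 10001 (x33 510 0 351 442 10001 (x33 507 0 351 419 10001 (l 507 0
  351 412 1000 1535) (l 507 0 351 419 1000 1544)) (l 510 0 351 442 1004 1578)) (l 508 0 351 428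
  1000 1557)) (l 612 0 351 513 1165 1787)) (l 647 0 229 526 1210 1697)) (x30 580 0 365 441 9234
  (x31 580 0 348 441 9234 (x32 579 0 348 441 9234 z (l 579 0 348 441 1083 1650)) (l 580 0 324 441
  1085 1623)) (l 580 0 365 441 1085 1672)) (x30 644 0 489 526 10001 (x31 644 0 489 422 10001 (x32
  644 0 489 422 10001 (x33 644 0 489 365 10001 (x33 644 0 489 365 10001 (l 644 0 489 0 1205 1297)
  (l 516 0 393 365 1000 1529)) (l 540 0 413 322 1010 1522)) (l 401 0 407 422 1000 1493)) (l 295 0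
  489 419 1000 1471)) (l 442 0 225 526 1194 1461)))
def t012332 : T :=
  (i3 843 0 586 530 10001 (i3 672 0 586 530 8969 (x31 606 0 586 530 8834 (x32 511 0 586 530 8834
  (x33 348 0 586 530 8819 (x33 211 0 586 530 8334 (l 0 0 586 530 1267 1489) (l 211 0 553 502 1200
  1782)) (l 348 0 532 474 1134 1958)) (l 511 0 531 360 1132 1826)) (l 606 0 433 360 1133 1724))
  (x32 672 0 405 526 8969 (x33 672 0 308 526 8889 (l 672 0 0 526 1258 1485) (l 602 0 308 325 1125
  1512)) (l 532 0 405 399 1115 1668)) (l 364 0 570 414 1215 1706) (l 364 0 570 414 1215 1706))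
  (x30 644 0 534 360 10001 (x31 640 0 424 360 10001 (x32 527 0 424 360 10001 (x33 527 0 424 360
  10001 (x33 503 0 424 360 10001 (l 503 0 420 360 1000 1596) (l 501 0 424 360 1000 1599)) (l 527 0
  424 360 1000 1628)) (l 515 0 411 360 1000 1598)) (l 640 0 424 360 1197 1753)) (l 644 0 534 197
  1205 1666)) (x30 843 0 527 370 9034 (x31 843 0 527 370 9034 (x32 843 0 426 370 9034 (x33 843 0
  297 370 9001 (x33 843 0 287 370 9001 (l 843 0 0 370 1577 1457) (l 594 0 287 370 1111 1591)) (l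
  621 0 297 370 1162 1635)) (l 592 0 426 370 1107 1689)) (l 441 0 527 367 1110 1638)) (l 595 0 527
  228 1113 1614)) (x30 728 0 496 530 9991 (x31 728 0 496 530 9991 (x32 728 0 494 430 9991 (x33 728
  0 494 332 9991 (x33 728 0 494 332 9991 (l 728 0 494 0 1362 1429) (l 535 0 407 332 1001 1574)) (l
  578 0 442 304 1081 1626)) (l 460 0 331 430 1025 1534)) (l 238 0 496 530 1264 1637)) (l 396 0 307
  530 1264 1574)))
def t0123 : T :=
  (i3 843 0 1143 557 10001 (i3 812 0 1143 556 10001 t012300 t012301 t012302 z) (i3 759 0 697 557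
  10001 t012310 t012311 z z) (i3 652 0 526 557 10001 t012320 t012321 t012322 z) (i3 843 0 616 547
  10001 t012330 t012331 t012332 z))
def tr : T :=
  (i0 1360 10001 (i1 1358 1360 10001 (i1 0 771 10001 (i1 0 545 10001 z t0001) (i2 0 730 771 10001
  z t0011 t0012)) (i2 1358 0 1360 10001 (i2 840 0 1313 10001 t0100 z t0102) (i2 1230 0 1360 10001
  t0110 z t0112) (i3 1358 0 1143 1268 10001 t0120 z t0122 t0123))))
end

noncomputable def wk (u : List C) : St := walk tr (M.mk C.c0 C.c0 C.c0 C.c0) u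

noncomputable def cnd {α : Type} (b : Bool) (x y : α) : α := Bool.rec y x b
noncomputable def band (b c : Bool) : Bool := Bool.rec false c b

/-- `⌈x * y / d⌉` -/
noncomputable def cdiv (x d : Nat) : Nat := Nat.div (Nat.add x (Nat.sub d 1)) d

/-- Weight (upper bound) of a future word, scaled by `10^13`. -/
noncomputable def Wc (t : List C) : Bool → List C → Nat :=
  List.rec (motive := fun _ => Bool → List C → Nat) (fun _ _ => 10000000000000)
    (fun x _ ih b u => cnd b
      (cnd (Nat.beq ((wk u).g x) 0) 0 (cdiv (Nat.mul ((wk u).g x) (ih false (List.cons x u))) 1000))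
      (ih true (List.cons x u))) t

noncomputable def Bt (l : List C) : Bool → C → Nat → Nat :=
  List.rec (motive := fun _ => Bool → C → Nat → Nat)
    (fun b x f => cnd b (cdiv (Nat.mul ((wk []).g x) (Nat.add (Nat.mul ((wk []).d.hi) 1450981) 1)) 592) f)
    (fun y l' ih b x f => cnd b
      (cnd (Nat.beq ((wk (List.cons y l')).g x) 0) 0
        (cdiv (Nat.mul ((wk (List.cons y l')).g x)
          (ih false y (Nat.add (Nat.mul ((wk (List.cons y l')).d.hi) 1450981) 1))) 592))
      (cnd (Nat.ble f (ih true y 0)) f (ih true y 0))) l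

noncomputable def rvK {α : Type} (l : List C) : List C → (List C → α) → α :=
  List.rec (motive := fun _ => List C → (List C → α) → α) (fun acc k => k acc)
    (fun x _ ih acc k => ih (List.cons x acc) k) l

/-- known contribution of the prefix `w` -/
noncomputable def inc (e w : List C) : Nat :=
  List.rec 0 (fun x w' _ => Nat.add
    (rvK w' [] fun t => Wc t true e)
    (cnd (Nat.beq (Bt w' true x 0) 0) 0
      (rvK w [] fun t => Nat.add (Nat.add (Wc (List.cons C.c0 t) true e) (Wc (List.cons C.c1 t) true e))
          (Nat.add (Wc (List.cons C.c2 t) true e) (Wc (List.cons C.c3 t) true e))))) w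

noncomputable def incs (e : List C) (K : Nat) (p : List (List C)) : Nat :=
  List.rec K (fun w _ ih => Nat.add (inc e w) ih) p

noncomputable def kids (ns : C) (f : C → C → Bool) : Bool :=
  C.rec (f C.c0 C.c1)
    (band (f C.c0 C.c1) (f C.c1 C.c2))
    (band (f C.c0 C.c2) (band (f C.c1 C.c2) (f C.c2 C.c3)))
    (band (f C.c0 C.c3) (band (f C.c1 C.c3) (band (f C.c2 C.c3) (f C.c3 C.c3)))) ns

/-- final numerical test at a word of length `2 * k` -/
noncomputable def fin (k K be bo : Nat) (s : St) : Bool :=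
  Nat.ble (Nat.add (Nat.add K 10000000000000)
    (cdiv (Nat.mul (Nat.add (Nat.mul s.d.h be) (Nat.mul s.d.o bo)) (Nat.pow 592 k)) (Nat.pow 1000 k)))
    (Nat.mul (Nat.add (Nat.add (s.g C.c0) (s.g C.c1)) (Nat.add (s.g C.c2) (s.g C.c3))) 10000000000)

noncomputable def node (k K : Nat) (p : List (List C)) (e : List C) (x1 x2 : C) (l1 l2 : List C)
    (rec : Nat → List (List C) → Bool) : Bool :=
  cnd (Nat.beq (Bt l2 true x2 0) 0) true
    (cnd (wk e).lf
      (cnd (fin k (incs e K p) (Bt l2 true x2 0) (Bt l1 true x1 0) (wk e)) true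
        (rec (incs e K p) List.nil))
      (rec K p))

/-- the branch and bound search -/
noncomputable def go (fuel : Nat) : Nat → Nat → List (List C) → List C → C → Bool :=
  Nat.rec (motive := fun _ => Nat → Nat → List (List C) → List C → C → Bool)
    (fun _ _ _ _ _ => false)
    (fun _ ih k K p er ns =>
      rvK er [] fun e =>
        List.rec false (fun x1 l1 _ => List.rec false (fun x2 l2 _ =>
          node k K (cnd (Nat.ble 4 k) (List.cons e p) p) e x1 x2 l1 l2 fun K' p' =>
            kids ns fun c ns' => kids ns' fun c' ns'' =>
              ih (Nat.succ k) K' p' (List.cons c' (List.cons c er)) ns'') l1) e)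
    fuel

/-! Checker for the tree -/

noncomputable def T.dat (t : T) : Dat := T.rec (fun d => d) (fun _ d _ _ => d) (fun d _ _ => d) t

noncomputable def all4 (f : C → Bool) : Bool :=
  band (f C.c0) (band (f C.c1) (band (f C.c2) (f C.c3)))

/-- the possible new colours `y'` of a letter of colour `y` when a letter of colour `c` is read -/
noncomputable def poss (k c y : C) (f : C → Bool) : Bool :=
  C.rec (band (f C.c0) (f C.c1))
    (C.rec (f y) (C.rec (f C.c0) (band (f C.c1) (f C.c2)) (band (f C.c1) (f C.c2))
        (band (f C.c1) (f C.c2)) y)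
      (C.rec (f C.c0) (band (f C.c1) (f C.c2)) (band (f C.c1) (f C.c2))
        (band (f C.c1) (f C.c2)) y)
      (C.rec (f C.c0) (band (f C.c1) (f C.c2)) (band (f C.c1) (f C.c2))
        (band (f C.c1) (f C.c2)) y) c)
    (C.rec (f y) (f y)
      (C.rec (f C.c0) (f C.c1) (band (f C.c2) (f C.c3)) (band (f C.c2) (f C.c3)) y)
      (C.rec (f C.c0) (f C.c1) (band (f C.c2) (f C.c3)) (band (f C.c2) (f C.c3)) y) c)
    (f y) k

noncomputable def dom (k c : C) (d d' : Dat) : Bool :=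
  band (Nat.ble d'.hi d.hi) (all4 fun y => poss k c y fun y' => Nat.ble (d'.g y') (d.g y))

noncomputable def chk (t : T) : Bool :=
  T.rec (fun d => Nat.ble 10000000 (Nat.mul d.hi d.h))
    (fun k d f ih => all4 fun c => band (dom k c d (f c).dat) (ih c))
    (fun d f ih => all4 fun c => band (dom C.c3 c d (f c).dat) (ih c)) t

/-! Local checks at the leaves -/

noncomputable def ceq (x y : C) : Bool :=
  C.rec (C.rec true false false false y) (C.rec false true false false y)
    (C.rec false false true false y) (C.rec false false false true y) x

noncomputable def cmp (n : Nat) : List C → List C → Bool :=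
  Nat.rec (motive := fun _ => List C → List C → Bool) (fun _ _ => true)
    (fun _ ih s t => List.rec true (fun x s' _ => List.rec true
      (fun y t' _ => band (ceq x y) (ih s' t')) t) s) n

noncomputable def ltl (s : List C) : List C := List.rec List.nil (fun _ s' _ => s') s

/-- no threat of period `2, ..., 7` -/
noncomputable def nothr (s : List C) : Bool :=
  (fun d2 => (fun d3 => (fun d4 => (fun d5 => (fun d6 => (fun d7 =>
    cnd (cmp 1 s d2) false (cnd (cmp 2 s d3) false (cnd (cmp 3 s d4) false (cnd (cmp 4 s d5) false
      (cnd (cmp 5 s d6) false (cnd (cmp 6 s d7) false true))))))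
    (ltl d6)) (ltl d5)) (ltl d4)) (ltl d3)) (ltl d2)) (ltl (ltl s))

noncomputable def term (e : List C) (a b : C) : Nat :=
  cnd (Nat.beq ((wk e).g a) 0) 0 (Nat.mul ((wk e).g a) (wk (List.cons b (List.cons a e))).d.h)

noncomputable def leafok (e : List C) : Bool :=
  band (all4 fun a => cnd (Nat.beq ((wk e).g a) 0) true
      (band (nothr (List.cons a e)) (all4 fun b => (wk (List.cons b (List.cons a e))).lf)))
    (band (all4 fun a => all4 fun b => Nat.ble (term e a b) (Nat.mul 592 (wk e).d.h))
      (all4 fun b => Nat.ble (Nat.add (Nat.add (term e C.c0 b) (term e C.c1 b))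
        (Nat.add (term e C.c2 b) (term e C.c3 b))) (Nat.mul 1000 (wk e).d.o)))

noncomputable def loc (fuel : Nat) : List C → C → Bool :=
  Nat.rec (motive := fun _ => List C → C → Bool) (fun _ _ => false)
    (fun _ ih er ns => rvK er [] fun e =>
      cnd (wk e).lf (leafok e) (kids ns fun c ns' => ih (List.cons c er) ns')) fuel

/-! ### Part 1: properties of the tree -/

theorem band_iff {b c : Bool} : band b c = true ↔ b = true ∧ c = true := by
  cases b <;> cases c <;> simp [band]

theorem cnd_true {α : Type} (x y : α) : cnd true x y = x := rfl
theorem cnd_false {α : Type} (x y : α) : cnd false x y = y := rfl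
theorem cnd_eq {α : Type} (b : Bool) (x y : α) : cnd b x y = if b = true then x else y := by
  cases b <;> rfl

theorem all4_iff {f : C → Bool} : all4 f = true ↔ ∀ c, f c = true := by
  unfold all4
  rw [band_iff, band_iff, band_iff]
  constructor
  · rintro ⟨h0, h1, h2, h3⟩ c
    cases c <;> assumption
  · intro h
    exact ⟨h _, h _, h _, h _⟩

theorem walk_l (d : Dat) (m : M) (u : List C) : walk (T.l d) m u = St.mk true d m := rfl
theorem walk_n_nil (k : C) (d : Dat) (f : C → T) (m : M) :
    walk (T.n k d f) m [] = St.mk false d m := rfl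
theorem walk_n_cons (k : C) (d : Dat) (f : C → T) (m : M) (x : C) (u : List C) :
    walk (T.n k d f) m (x :: u) = walk (f (M.get m x)) (nxt k m x) u := rfl
theorem walk_n3_nil (d : Dat) (f : C → T) (m : M) :
    walk (T.n3 d f) m [] = St.mk false d m := rfl
theorem walk_n3_cons (d : Dat) (f : C → T) (m : M) (x : C) (u : List C) :
    walk (T.n3 d f) m (x :: u) = walk (f (M.get m x)) m u := rfl

/-- new colour of a letter -/
noncomputable def nc (k c y : C) (s : Bool) : C :=
  C.rec (cnd s C.c0 C.c1) (C.rec y (cnd s C.c1 (bump1 y)) (cnd s C.c1 (bump1 y))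
      (cnd s C.c1 (bump1 y)) c)
    (C.rec y y (cnd s C.c2 (bump2 y)) (cnd s C.c2 (bump2 y)) c) y k

theorem get_nxt (k : C) (m : M) (x y : C) :
    M.get (nxt k m x) y = nc k (M.get m x) (M.get m y) (decide (x = y)) := by
  cases k
  · cases x <;> cases y <;> rfl
  · unfold nxt nc
    cases M.get m x
    · rfl
    all_goals (cases m; cases x <;> cases y <;> rfl)
  · unfold nxt nc
    cases M.get m x
    · rfl
    · rfl
    all_goals (cases m; cases x <;> cases y <;> rfl)
  · rfl

theorem nxt_rel (σ : Equiv.Perm C) {m m' : M} (h : ∀ y, M.get m' (σ y) = M.get m y) (k x : C) :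
    ∀ y, M.get (nxt k m' (σ x)) (σ y) = M.get (nxt k m x) y := by
  intro y
  rw [get_nxt, get_nxt, h, h]
  congr 1
  simp

theorem walk_perm (σ : Equiv.Perm C) (t : T) : ∀ (m m' : M) (u : List C),
    (∀ y, M.get m' (σ y) = M.get m y) →
    (walk t m' (u.map σ)).lf = (walk t m u).lf ∧ (walk t m' (u.map σ)).d = (walk t m u).d ∧
    ∀ y, (walk t m' (u.map σ)).g (σ y) = (walk t m u).g y := by
  induction t with
  | l d =>
    intro m m' u h
    refine ⟨rfl, rfl, fun y => ?_⟩
    show Dat.g d (M.get m' (σ y)) = Dat.g d (M.get m y)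
    rw [h]
  | n k d f ih =>
    intro m m' u h
    cases u with
    | nil =>
      refine ⟨rfl, rfl, fun y => ?_⟩
      show Dat.g d (M.get m' (σ y)) = Dat.g d (M.get m y)
      rw [h]
    | cons x u =>
      rw [List.map_cons, walk_n_cons, walk_n_cons, h]
      exact ih _ _ _ _ (nxt_rel σ h k x)
  | n3 d f ih =>
    intro m m' u h
    cases u with
    | nil =>
      refine ⟨rfl, rfl, fun y => ?_⟩
      show Dat.g d (M.get m' (σ y)) = Dat.g d (M.get m y)
      rw [h]
    | cons x u =>
      rw [List.map_cons, walk_n3_cons, walk_n3_cons, h]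
      exact ih _ _ _ _ h

theorem get_const (y : C) : M.get (M.mk C.c0 C.c0 C.c0 C.c0) y = C.c0 := by cases y <;> rfl

theorem wk_perm (σ : Equiv.Perm C) (u : List C) :
    (wk (u.map σ)).lf = (wk u).lf ∧ (wk (u.map σ)).d = (wk u).d ∧
    ∀ y, (wk (u.map σ)).g (σ y) = (wk u).g y :=
  walk_perm σ tr _ _ u (fun y => by rw [get_const, get_const])

theorem poss_nc {k c y : C} {f : C → Bool} (s : Bool) (hs : s = true → c = y)
    (h : poss k c y f = true) : f (nc k c y s) = true := by
  cases s
  · clear hs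
    cases k <;> cases c <;> cases y <;>
      simp only [poss, nc, bump1, bump2, cnd_false, band_iff] at h ⊢ <;> tauto
  · obtain rfl := hs rfl
    cases k <;> cases c <;>
      simp only [poss, nc, bump1, bump2, cnd_true, band_iff] at h ⊢ <;> tauto

theorem dom_nxt {k : C} {m : M} {x : C} {d d' : Dat} (h : dom k (M.get m x) d d' = true) (a : C) :
    d'.hi ≤ d.hi ∧ d'.g (M.get (nxt k m x) a) ≤ d.g (M.get m a) := by
  unfold dom at h
  rw [band_iff, all4_iff] at h
  refine ⟨Nat.le_of_ble_eq_true h.1, ?_⟩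
  have := h.2 (M.get m a)
  rw [get_nxt]
  have h2 := poss_nc (decide (x = a)) (fun hh => by rw [of_decide_eq_true hh]) this
  exact Nat.le_of_ble_eq_true h2

theorem walk_bound (t : T) : chk t = true → ∀ (m : M) (r : List C),
    (∀ a, (walk t m r).g a ≤ t.dat.g (M.get m a)) ∧ (walk t m r).d.hi ≤ t.dat.hi ∧
    ((walk t m r).lf = true → 10000000 ≤ (walk t m r).d.hi * (walk t m r).d.h) := by
  induction t with
  | l d =>
    intro h m r
    exact ⟨fun a => le_refl _, le_refl _, fun _ => Nat.le_of_ble_eq_true h⟩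
  | n k d f ih =>
    intro h m r
    cases r with
    | nil => exact ⟨fun a => le_refl _, le_refl _, fun h => by cases h⟩
    | cons x r =>
      rw [walk_n_cons]
      have h1 : ∀ c, band (dom k c d (f c).dat) (chk (f c)) = true := all4_iff.1 h
      have h2 := band_iff.1 (h1 (M.get m x))
      obtain ⟨i1, i2, i3⟩ := ih _ h2.2 (nxt k m x) r
      have h3 := fun a => dom_nxt h2.1 a
      exact ⟨fun a => (i1 a).trans (h3 a).2, i2.trans (h3 C.c0).1, i3⟩
  | n3 d f ih =>
    intro h m r
    cases r with
    | nil => exact ⟨fun a => le_refl _, le_refl _, fun h => by cases h⟩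
    | cons x r =>
      rw [walk_n3_cons]
      have h1 : ∀ c, band (dom C.c3 c d (f c).dat) (chk (f c)) = true := all4_iff.1 h
      have h2 := band_iff.1 (h1 (M.get m x))
      obtain ⟨i1, i2, i3⟩ := ih _ h2.2 m r
      have h3 := fun a => dom_nxt h2.1 a
      exact ⟨fun a => (i1 a).trans (h3 a).2, i2.trans (h3 C.c0).1, i3⟩

theorem walk_mono (t : T) : chk t = true → ∀ (m : M) (u r : List C),
    (∀ a, (walk t m (u ++ r)).g a ≤ (walk t m u).g a) ∧
    (walk t m (u ++ r)).d.hi ≤ (walk t m u).d.hi ∧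
    ((walk t m u).lf = true → walk t m (u ++ r) = walk t m u) := by
  induction t with
  | l d =>
    intro h m u r
    exact ⟨fun a => le_refl _, le_refl _, fun _ => rfl⟩
  | n k d f ih =>
    intro h m u r
    cases u with
    | nil =>
      have := walk_bound _ h m r
      exact ⟨this.1, this.2.1, fun h => by cases h⟩
    | cons x u =>
      have h1 : ∀ c, band (dom k c d (f c).dat) (chk (f c)) = true := all4_iff.1 h
      exact ih _ (band_iff.1 (h1 _)).2 _ _ _
  | n3 d f ih =>
    intro h m u r
    cases u with
    | nil =>
      have := walk_bound _ h m r
      exact ⟨this.1, this.2.1, fun h => by cases h⟩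
    | cons x u =>
      have h1 : ∀ c, band (dom C.c3 c d (f c).dat) (chk (f c)) = true := all4_iff.1 h
      exact ih _ (band_iff.1 (h1 _)).2 _ _ _

set_option maxRecDepth 100000 in
theorem chk_tr : chk tr = true := by decide +kernel

theorem wk_g_mono (u r : List C) (a : C) : (wk (u ++ r)).g a ≤ (wk u).g a :=
  (walk_mono tr chk_tr _ u r).1 a
theorem wk_hi_mono (u r : List C) : (wk (u ++ r)).d.hi ≤ (wk u).d.hi :=
  (walk_mono tr chk_tr _ u r).2.1
theorem wk_lf_append {u : List C} (r : List C) (h : (wk u).lf = true) : wk (u ++ r) = wk u :=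
  (walk_mono tr chk_tr _ u r).2.2 h
theorem wk_hi_h (u r : List C) (h : (wk (u ++ r)).lf = true) :
    10000000 ≤ (wk u).d.hi * (wk (u ++ r)).d.h :=
  ((walk_bound tr chk_tr _ (u ++ r)).2.2 h).trans (Nat.mul_le_mul_right _ (wk_hi_mono u r))


/-! ### Part 2: soundness of the local checks -/

instance : Fintype C := ⟨{C.c0, C.c1, C.c2, C.c3}, by intro x; cases x <;> decide⟩

theorem sum_C {α : Type*} [AddCommMonoid α] (f : C → α) :
    ∑ a, f a = (f C.c0 + f C.c1) + (f C.c2 + f C.c3) := by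
  have : (Finset.univ : Finset C) = {C.c0, C.c1, C.c2, C.c3} := rfl
  rw [this]
  rw [Finset.sum_insert (by decide), Finset.sum_insert (by decide), Finset.sum_insert (by decide),
    Finset.sum_singleton]
  simp only [add_assoc]

/-- `e` uses only the first letters. -/
def Inv (ns : C) (e : List C) : Prop :=
  match ns with
  | C.c0 => e = []
  | C.c1 => ∀ x ∈ e, x = C.c0
  | C.c2 => ∀ x ∈ e, x = C.c0 ∨ x = C.c1
  | C.c3 => True

theorem map_fix {σ : Equiv.Perm C} {e : List C} (h : ∀ x ∈ e, σ x = x) : e.map σ = e := by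
  conv_rhs => rw [← List.map_id e]
  exact List.map_congr_left h

theorem kids_sound {ns : C} {e : List C} {f : C → C → Bool} (hI : Inv ns e)
    (h : kids ns f = true) (y : C) :
    ∃ σ : Equiv.Perm C, e.map σ = e ∧ ∃ ns', f (σ y) ns' = true ∧ Inv ns' (e ++ [σ y]) := by
  cases ns
  · refine ⟨Equiv.swap y C.c0, map_fix ?_, C.c1, ?_, ?_⟩
    · rw [show e = [] from hI]; simp
    · rw [Equiv.swap_apply_left]; exact h
    · rw [Equiv.swap_apply_left, show e = [] from hI]
      intro x hx; simpa using hx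
  · have hI' : ∀ x ∈ e, x = C.c0 := hI
    obtain ⟨h0, h1⟩ := band_iff.1 h
    by_cases hy : y = C.c0
    · refine ⟨1, map_fix (by simp), C.c1, by subst hy; exact h0, ?_⟩
      subst hy
      intro x hx
      rw [List.mem_append] at hx
      rcases hx with hx | hx
      · exact hI' x hx
      · simpa using hx
    · refine ⟨Equiv.swap y C.c1, map_fix ?_, C.c2, ?_, ?_⟩
      · intro x hx
        rw [hI' x hx]
        exact Equiv.swap_apply_of_ne_of_ne (fun hh => hy hh.symm) (by decide)
      · rw [Equiv.swap_apply_left]; exact h1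
      · rw [Equiv.swap_apply_left]
        intro x hx
        rw [List.mem_append] at hx
        rcases hx with hx | hx
        · exact Or.inl (hI' x hx)
        · right; simpa using hx
  · have hI' : ∀ x ∈ e, x = C.c0 ∨ x = C.c1 := hI
    obtain ⟨h0, h1⟩ := band_iff.1 h
    obtain ⟨h1, h2⟩ := band_iff.1 h1
    by_cases hy : y = C.c0 ∨ y = C.c1
    · refine ⟨1, map_fix (by simp), C.c2, ?_, ?_⟩
      · rcases hy with rfl | rfl
        · exact h0
        · exact h1
      · intro x hx
        rw [List.mem_append] at hx
        rcases hx with hx | hx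
        · exact hI' x hx
        · have : x = y := by simpa using hx
          rw [this]; exact hy
    · push Not at hy
      refine ⟨Equiv.swap y C.c2, map_fix ?_, C.c3, ?_, trivial⟩
      · intro x hx
        rcases hI' x hx with rfl | rfl
        · exact Equiv.swap_apply_of_ne_of_ne (fun hh => hy.1 hh.symm) (by decide)
        · exact Equiv.swap_apply_of_ne_of_ne (fun hh => hy.2 hh.symm) (by decide)
      · rw [Equiv.swap_apply_left]; exact h2
  · obtain ⟨h0, h1⟩ := band_iff.1 h
    obtain ⟨h1, h2⟩ := band_iff.1 h1
    obtain ⟨h2, h3⟩ := band_iff.1 h2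
    refine ⟨1, map_fix (by simp), C.c3, ?_, trivial⟩
    cases y <;> assumption

theorem rvK_eq {α : Type} (u : List C) : ∀ (acc : List C) (k : List C → α),
    rvK u acc k = k (u.reverse ++ acc) := by
  induction u with
  | nil => intro acc k; rfl
  | cons x u ih =>
    intro acc k
    show rvK u (x :: acc) k = _
    rw [ih]; simp

theorem rvK_nil {α : Type} (u : List C) (k : List C → α) : rvK u [] k = k u.reverse := by
  rw [rvK_eq, List.append_nil]

/-- no potential square of period `2, ..., 7` at the end of the (reversed) word `s` -/
def NoT (s : List C) : Prop := ∀ p, 2 ≤ p → p ≤ 7 → s.take (p - 1) ≠ (s.drop p).take (p - 1)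

theorem NoT_map (σ : Equiv.Perm C) {s : List C} (h : NoT (s.map σ)) : NoT s := by
  intro p h1 h2 h3
  apply h p h1 h2
  rw [← List.map_take, ← List.map_drop, ← List.map_take, h3]

theorem ceq_iff {x y : C} : ceq x y = true ↔ x = y := by
  cases x <;> cases y <;> simp [ceq]

theorem cmp_sound (n : Nat) : ∀ (s t r r' : List C), cmp n s t = false →
    (s ++ r).take n ≠ (t ++ r').take n := by
  induction n with
  | zero => intro s t r r' h; cases h
  | succ n ih =>
    intro s t r r' h
    cases s with
    | nil => cases h
    | cons x s =>
      cases t with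
      | nil => cases h
      | cons y t =>
        have h' : band (ceq x y) (cmp n s t) = false := h
        rw [List.cons_append, List.cons_append, List.take_succ_cons, List.take_succ_cons]
        intro hh
        injection hh with h1 h2
        subst h1
        have : ceq x x = true := ceq_iff.2 rfl
        rw [this] at h'
        exact ih s t r r' h' h2

theorem ltl_eq (s : List C) : ltl s = s.drop 1 := by cases s <;> rfl

theorem drop_ltl (s : List C) (n : Nat) : ltl (s.drop n) = s.drop (n + 1) := by
  rw [ltl_eq, List.drop_drop]

theorem nothr_sound {s : List C} (h : nothr s = true) (r : List C) : NoT (s ++ r) := by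
  have e2 : ltl (ltl s) = s.drop 2 := by rw [ltl_eq s, drop_ltl]
  have key : ∀ p n, (cmp n s (s.drop p) = false) → (s ++ r).take n ≠ ((s ++ r).drop p).take n := by
    intro p n hp
    by_cases hl : p ≤ s.length
    · rw [List.drop_append_of_le_length hl]
      exact cmp_sound n _ _ r r hp
    · exfalso
      rw [List.drop_eq_nil_of_le (by omega)] at hp
      cases n with
      | zero => cases hp
      | succ n => cases s <;> cases hp
  have h1 : cnd (cmp 1 s (s.drop 2)) false (cnd (cmp 2 s (s.drop 3)) false
      (cnd (cmp 3 s (s.drop 4)) false (cnd (cmp 4 s (s.drop 5)) false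
      (cnd (cmp 5 s (s.drop 6)) false (cnd (cmp 6 s (s.drop 7)) false true))))) = true := by
    unfold nothr at h
    simp only [e2, drop_ltl] at h
    exact h
  have step : ∀ {b c : Bool}, cnd b false c = true → b = false ∧ c = true := by
    intro b c hh
    cases b
    · exact ⟨rfl, hh⟩
    · cases hh
  obtain ⟨k2, h1⟩ := step h1
  obtain ⟨k3, h1⟩ := step h1
  obtain ⟨k4, h1⟩ := step h1
  obtain ⟨k5, h1⟩ := step h1
  obtain ⟨k6, h1⟩ := step h1
  obtain ⟨k7, h1⟩ := step h1
  intro p hp1 hp2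
  interval_cases p
  · exact key 2 1 k2
  · exact key 3 2 k3
  · exact key 4 3 k4
  · exact key 5 4 k5
  · exact key 6 5 k6
  · exact key 7 6 k7

def LocOK (v : List C) : Prop :=
  (wk v).lf = true ∧ (∀ a, (wk v).g a ≠ 0 → NoT (a :: v)) ∧
  (∀ a b, (wk v).g a * (wk (b :: a :: v)).d.h ≤ 592 * (wk v).d.h) ∧
  (∀ b, ∑ a, (wk v).g a * (wk (b :: a :: v)).d.h ≤ 1000 * (wk v).d.o)

theorem beq_ne {n : Nat} (h : n ≠ 0) : ¬ Nat.beq n 0 = true :=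
  fun hh => h (Nat.eq_of_beq_eq_true hh)

theorem LocOK_map (σ : Equiv.Perm C) {v : List C} (h : LocOK (v.map σ)) : LocOK v := by
  obtain ⟨h1, h2, h3, h4⟩ := h
  obtain ⟨p1, p2, p3⟩ := wk_perm σ v
  refine ⟨by rw [← p1]; exact h1, fun a ha => ?_, fun a b => ?_, fun b => ?_⟩
  · apply NoT_map σ
    exact h2 (σ a) (by rw [p3]; exact ha)
  · have := h3 (σ a) (σ b)
    rw [p3, p2] at this
    have h5 := (wk_perm σ (b :: a :: v)).2.1
    rw [List.map_cons, List.map_cons] at h5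
    rwa [h5] at this
  · have := h4 (σ b)
    rw [← Equiv.sum_comp σ, p2] at this
    refine le_trans (le_of_eq ?_) this
    apply Finset.sum_congr rfl
    intro a _
    have h5 := (wk_perm σ (b :: a :: v)).2.1
    rw [List.map_cons, List.map_cons] at h5
    rw [p3, h5]

theorem leafok_sound {e : List C} (hl : (wk e).lf = true) (h : leafok e = true) (r : List C) :
    LocOK (e ++ r) := by
  obtain ⟨h1, h2⟩ := band_iff.1 h
  obtain ⟨h2, h3⟩ := band_iff.1 h2
  rw [all4_iff] at h1 h2 h3
  have hw := wk_lf_append r hl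
  have hd : ∀ a, (wk e).g a ≠ 0 → nothr (a :: e) = true ∧ ∀ b, (wk (b :: a :: e)).lf = true := by
    intro a ha
    have := h1 a
    rw [cnd_eq, if_neg (beq_ne ha), band_iff, all4_iff] at this
    exact this
  have ht : ∀ a b, (wk (e ++ r)).g a * (wk (b :: a :: (e ++ r))).d.h = term e a b := by
    intro a b
    rw [hw]
    unfold term
    by_cases ha : (wk e).g a = 0
    · rw [ha]; simp [cnd_true]
    · rw [cnd_eq, if_neg (beq_ne ha)]
      have := wk_lf_append r ((hd a ha).2 b)
      rw [List.cons_append, List.cons_append] at this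
      rw [this]; rfl
  refine ⟨by rw [hw]; exact hl, fun a ha => ?_, fun a b => ?_, fun b => ?_⟩
  · rw [hw] at ha
    exact nothr_sound (hd a ha).1 r
  · rw [ht, hw]
    have := h2 a
    rw [all4_iff] at this
    exact Nat.le_of_ble_eq_true (this b)
  · simp only [ht]
    rw [hw, sum_C]
    exact Nat.le_of_ble_eq_true (h3 b)

theorem loc_sound (fuel : Nat) : ∀ (er : List C) (ns : C), loc fuel er ns = true →
    Inv ns er.reverse → ∀ r : List C, fuel ≤ r.length → LocOK (er.reverse ++ r) := by
  induction fuel with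
  | zero => intro er ns h; cases h
  | succ n ih =>
    intro er ns h hI r hr
    have h' : (rvK er [] fun e =>
      cnd (wk e).lf (leafok e) (kids ns fun c ns' => loc n (List.cons c er) ns')) = true := h
    rw [rvK_nil, cnd_eq] at h'
    split_ifs at h' with hl
    · exact leafok_sound hl h' r
    · cases r with
      | nil => simp at hr
      | cons y r =>
        obtain ⟨σ, hσ, ns', hk, hI'⟩ := kids_sound hI h' y
        apply LocOK_map σ
        have := ih (σ y :: er) ns' hk (by rw [List.reverse_cons]; exact hI') (r.map σ)
          (by simpa using hr)
        rw [List.map_append, hσ, List.map_cons]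
        rw [List.reverse_cons, List.append_assoc] at this
        exact this

set_option maxRecDepth 100000 in
theorem loc_true : loc 14 [] C.c0 = true := by decide +kernel

theorem locOK {v : List C} (hv : 14 ≤ v.length) : LocOK v :=
  loc_sound 14 [] C.c0 loc_true rfl v hv

/-! ### Part 3: weights -/

noncomputable def G (u : List C) (a : C) : ℝ := ((wk u).g a : ℝ) / 1000
noncomputable def Hp (u : List C) : ℝ := ((wk u).d.h : ℝ)
noncomputable def Ho (u : List C) : ℝ := ((wk u).d.o : ℝ)
noncomputable def rho : ℝ := 592 / 1000

theorem rho_pos : 0 < rho := by unfold rho; norm_num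
theorem G_nonneg (u : List C) (a : C) : 0 ≤ G u a := by unfold G; positivity
theorem Hp_nonneg (u : List C) : 0 ≤ Hp u := by unfold Hp; positivity
theorem Ho_nonneg (u : List C) : 0 ≤ Ho u := by unfold Ho; positivity
theorem G_mono (u r : List C) (a : C) : G (u ++ r) a ≤ G u a := by
  unfold G
  have : ((wk (u ++ r)).g a : ℝ) ≤ (wk u).g a := by exact_mod_cast wk_g_mono u r a
  linarith

theorem G_Hp {v : List C} (hv : 14 ≤ v.length) (a b : C) : G v a * Hp (b :: a :: v) ≤ rho * Hp v := by
  have h := (locOK hv).2.2.1 a b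
  have h' : ((wk v).g a : ℝ) * (wk (b :: a :: v)).d.h ≤ 592 * (wk v).d.h := by exact_mod_cast h
  unfold G Hp rho
  linarith

theorem G_Ho {v : List C} (hv : 14 ≤ v.length) (b : C) : ∑ a, G v a * Hp (b :: a :: v) ≤ Ho v := by
  have h := (locOK hv).2.2.2 b
  have h' : (∑ a, ((wk v).g a : ℝ) * (wk (b :: a :: v)).d.h) ≤ 1000 * (wk v).d.o := by
    exact_mod_cast h
  have : ∑ a, G v a * Hp (b :: a :: v) = (∑ a, ((wk v).g a : ℝ) * (wk (b :: a :: v)).d.h) / 1000 := by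
    rw [Finset.sum_div]
    apply Finset.sum_congr rfl
    intro a _
    unfold G Hp; ring
  rw [this]
  unfold Ho
  linarith

/-- weight of a future word `t` from the position `v`; flag: is it Ann's turn? -/
noncomputable def W : List C → Bool → List C → ℝ
  | [], _, _ => 1
  | x :: t, true, v => G v x * W t false (x :: v)
  | x :: t, false, v => W t true (x :: v)

theorem W_nonneg (t : List C) : ∀ b v, 0 ≤ W t b v := by
  induction t with
  | nil => intro b v; simp [W]
  | cons x t ih =>
    intro b v
    cases b
    · exact ih _ _
    · exact mul_nonneg (G_nonneg _ _) (ih _ _)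

theorem cdiv_ge (x d : ℕ) (hd : 0 < d) : (x : ℝ) / d ≤ cdiv x d := by
  have h : x ≤ d * cdiv x d := by
    show x ≤ d * ((x + (d - 1)) / d)
    have h1 := Nat.div_add_mod (x + (d - 1)) d
    have h2 := Nat.mod_lt (x + (d - 1)) hd
    omega
  have h' : (x : ℝ) ≤ d * cdiv x d := by exact_mod_cast h
  rw [div_le_iff₀ (by exact_mod_cast hd)]
  linarith

theorem Wc_cons (x : C) (t : List C) (b : Bool) (u : List C) : Wc (x :: t) b u = cnd b
      (cnd (Nat.beq ((wk u).g x) 0) 0 (cdiv (Nat.mul ((wk u).g x) (Wc t false (List.cons x u))) 1000))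
      (Wc t true (List.cons x u)) := rfl

theorem Wc_ge (t : List C) : ∀ (b : Bool) (e r : List C),
    10000000000000 * W t b (e ++ r) ≤ Wc t b e := by
  induction t with
  | nil =>
    intro b e r
    show (10000000000000 : ℝ) * 1 ≤ ((10000000000000 : ℕ) : ℝ)
    norm_num
  | cons x t ih =>
    intro b e r
    cases b
    · exact ih true (x :: e) r
    · rw [Wc_cons, cnd_true, cnd_eq]
      have hG : G (e ++ r) x ≤ ((wk e).g x : ℝ) / 1000 := G_mono e r x
      have i1 := ih false (x :: e) r
      have i2 := W_nonneg t false (x :: e ++ r)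
      show _ * (G (e ++ r) x * W t false (x :: e ++ r)) ≤ _
      have h3 : G (e ++ r) x * W t false (x :: e ++ r)
          ≤ ((wk e).g x : ℝ) / 1000 * W t false (x :: e ++ r) := mul_le_mul_of_nonneg_right hG i2
      split_ifs with h
      · have h0 := Nat.eq_of_beq_eq_true h
        rw [h0] at h3
        simp only [Nat.cast_zero] at h3 ⊢
        linarith
      · refine le_trans ?_ (cdiv_ge _ 1000 (by norm_num))
        show _ ≤ (((wk e).g x * Wc t false (x :: e) : ℕ) : ℝ) / (1000 : ℕ)
        push_cast
        have h4 : ((wk e).g x : ℝ) * (10000000000000 * W t false (x :: e ++ r)) ≤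
          (wk e).g x * Wc t false (x :: e) := mul_le_mul_of_nonneg_left i1 (by positivity)
        linarith

theorem W_append (k : ℕ) : ∀ (s t v : List C), s.length = 2 * k →
    W (s ++ t) true v = W s true v * W t true (s.reverse ++ v) := by
  induction k with
  | zero =>
    intro s t v h
    obtain rfl := List.eq_nil_of_length_eq_zero h
    simp [W]
  | succ k ih =>
    intro s t v h
    match s, h with
    | a :: b :: s, h =>
      show G v a * W (s ++ t) true (b :: a :: v) = G v a * W s true (b :: a :: v) * _
      rw [ih s t _ (by simp at h; omega)]
      simp [mul_assoc]

theorem W_snoc (k : ℕ) (s v : List C) (x : C) (h : s.length = 2 * k) :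
    W (s ++ [x]) true v = W s true v * G (s.reverse ++ v) x := by
  rw [W_append k s [x] v h]
  simp [W]

theorem W_snoc2 (k : ℕ) (s v : List C) (x y : C) (h : s.length = 2 * k) :
    W (s ++ [x, y]) true v = W s true v * G (s.reverse ++ v) x := by
  rw [W_append k s [x, y] v h]
  simp [W]

theorem W_pot (k : ℕ) : ∀ (s v : List C), s.length = 2 * k → 14 ≤ v.length →
    W s true v * Hp (s.reverse ++ v) ≤ rho ^ k * Hp v := by
  induction k with
  | zero =>
    intro s v h _
    obtain rfl := List.eq_nil_of_length_eq_zero h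
    simp [W]
  | succ k ih =>
    intro s v h hv
    match s, h with
    | a :: b :: s, h =>
      have h1 := ih s (b :: a :: v) (by simp at h; omega) (by simp; omega)
      have e1 : W (a :: b :: s) true v = G v a * W s true (b :: a :: v) := rfl
      have e2 : (a :: b :: s).reverse ++ v = s.reverse ++ (b :: a :: v) := by simp
      rw [e1, e2, mul_assoc]
      calc _ ≤ G v a * (rho ^ k * Hp (b :: a :: v)) := mul_le_mul_of_nonneg_left h1 (G_nonneg _ _)
        _ = rho ^ k * (G v a * Hp (b :: a :: v)) := by ring
        _ ≤ rho ^ k * (rho * Hp v) :=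
            mul_le_mul_of_nonneg_left (G_Hp hv a b) (pow_nonneg rho_pos.le _)
        _ = _ := by ring

theorem W_pot_odd (k : ℕ) (s v : List C) (hs : s.length = 2 * k + 1) (hv : 14 ≤ v.length) :
    ∑ x, W (x :: s) true v * Hp (s.reverse ++ (x :: v)) ≤ rho ^ k * Ho v := by
  match s, hs with
  | b :: s, hs =>
    calc _ ≤ ∑ x, rho ^ k * (G v x * Hp (b :: x :: v)) := by
          apply Finset.sum_le_sum
          intro x _
          have h1 := W_pot k s (b :: x :: v) (by simp at hs; omega) (by simp; omega)
          have e1 : W (x :: b :: s) true v = G v x * W s true (b :: x :: v) := rfl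
          have e2 : (b :: s).reverse ++ (x :: v) = s.reverse ++ (b :: x :: v) := by simp
          rw [e1, e2, mul_assoc]
          calc _ ≤ G v x * (rho ^ k * Hp (b :: x :: v)) :=
                mul_le_mul_of_nonneg_left h1 (G_nonneg _ _)
            _ = _ := by ring
      _ = rho ^ k * ∑ x, G v x * Hp (b :: x :: v) := by rw [Finset.mul_sum]
      _ ≤ _ := mul_le_mul_of_nonneg_left (G_Ho hv b) (pow_nonneg rho_pos.le _)

/-! The tail estimate -/

theorem Bt_cons_true (y : C) (u : List C) (x : C) (f : ℕ) : Bt (y :: u) true x f =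
    cnd (Nat.beq ((wk (y :: u)).g x) 0) 0 (cdiv ((wk (y :: u)).g x *
      Bt u false y ((wk (y :: u)).d.hi * 1450981 + 1)) 592) := rfl

theorem Bt_nil_true (x : C) (f : ℕ) : Bt [] true x f =
    cdiv ((wk []).g x * ((wk []).d.hi * 1450981 + 1)) 592 := by
  have h : Bt [] true x f = cnd true
    (cdiv (Nat.mul ((wk []).g x) (Nat.add (Nat.mul ((wk []).d.hi) 1450981) 1)) 592) f := rfl
  rw [h, cnd_true, Nat.mul_eq, Nat.add_eq, Nat.mul_eq]

theorem Bt_cons_false (z : C) (u : List C) (y : C) (f : ℕ) : Bt (z :: u) false y f =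
    cnd (Nat.ble f (Bt u true z 0)) f (Bt u true z 0) := rfl

theorem Bt_step {u : List C} {x : C} {g m B : ℕ} {Zl H0 R : ℝ} (hH : 0 ≤ H0) (hR : 0 ≤ R)
    (hg : (wk u).g x = g) (hZ : Zl ≤ H0 * R * (m / 10000000000000))
    (hB : (g : ℝ) * m / 592 ≤ B) : G u x * Zl ≤ H0 * (R * rho) * (B / 10000000000000) := by
  unfold G
  rw [hg]
  calc (g : ℝ) / 1000 * Zl ≤ (g : ℝ) / 1000 * (H0 * R * (m / 10000000000000)) :=
        mul_le_mul_of_nonneg_left hZ (by positivity)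
    _ = H0 * (R * rho) * ((g * m / 592) / 10000000000000) := by unfold rho; ring
    _ ≤ _ := by
        apply mul_le_mul_of_nonneg_left
        · linarith
        · exact mul_nonneg hH (mul_nonneg hR rho_pos.le)

theorem tail_gen (Z : List C → ℝ) (H0 : ℝ) (par : ℕ) (hH : 0 ≤ H0)
    (h1 : ∀ y z u, List.length u % 2 = par → Z (y :: z :: u) ≤ G u z * Z u)
    (h2 : ∀ u, List.length u % 2 = par →
      Z u ≤ H0 * rho ^ (u.length / 2) * (((wk u).d.hi : ℝ) / 10000000 * (592 / 408))) :
    ∀ (n : ℕ) (u : List C) (x : C), u.length ≤ n → u.length % 2 = par →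
      G u x * Z u ≤ H0 * (rho ^ (u.length / 2) * rho) * ((Bt u true x 0 : ℝ) / 10000000000000) := by
  have h3 : ∀ u, List.length u % 2 = par →
      Z u ≤ H0 * rho ^ (u.length / 2) * ((((wk u).d.hi * 1450981 + 1 : ℕ) : ℝ) / 10000000000000) := by
    intro u hu
    refine (h2 u hu).trans (mul_le_mul_of_nonneg_left ?_ (mul_nonneg hH (pow_nonneg rho_pos.le _)))
    push_cast
    have : (0 : ℝ) ≤ (wk u).d.hi := by positivity
    linarith
  intro n
  induction n using Nat.strong_induction_on with
  | _ n ih =>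
  intro u x hn hp
  have hR : 0 ≤ rho ^ (u.length / 2) := pow_nonneg rho_pos.le _
  match u, hn, hp with
  | [], hn, hp =>
    refine Bt_step hH hR rfl (h3 [] hp) ?_
    rw [Bt_nil_true]
    refine le_trans (le_of_eq ?_) (cdiv_ge _ 592 (by norm_num))
    push_cast; ring
  | y :: u, hn, hp =>
    by_cases hg : (wk (y :: u)).g x = 0
    · have : G (y :: u) x = 0 := by unfold G; rw [hg]; simp
      rw [this, zero_mul]
      exact mul_nonneg (mul_nonneg hH (mul_nonneg hR rho_pos.le)) (by positivity)
    have key : Z (y :: u) ≤ H0 * rho ^ ((y :: u).length / 2) *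
        ((Bt u false y ((wk (y :: u)).d.hi * 1450981 + 1) : ℝ) / 10000000000000) := by
      match u, hn, hp with
      | [], hn, hp => exact h3 [y] hp
      | z :: u, hn, hp =>
        rw [Bt_cons_false, cnd_eq]
        split_ifs
        · exact h3 _ hp
        · have hp' : u.length % 2 = par := by simp at hp; omega
          refine (h1 y z u hp').trans ?_
          have := ih u.length (by simp at hn; omega) u z le_rfl hp'
          have e : (y :: z :: u).length / 2 = u.length / 2 + 1 := by
            simp only [List.length_cons]; omega
          rw [e, pow_succ]
          exact this
    refine Bt_step hH hR rfl key ?_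
    rw [Bt_cons_true, cnd_eq, if_neg (beq_ne hg)]
    refine le_trans (le_of_eq ?_) (cdiv_ge _ 592 (by norm_num))
    push_cast; ring

theorem geom_le (J : ℕ) : ∑ j ∈ Finset.range J, rho ^ (j + 1) ≤ 592 / 408 := by
  have h : ∀ J : ℕ, ∑ j ∈ Finset.range J, rho ^ (j + 1) ≤ 592 / 408 - (592 / 408) * rho ^ J := by
    intro J
    induction J with
    | zero => simp
    | succ J ih =>
      rw [Finset.sum_range_succ, pow_succ]
      have : rho = 592 / 1000 := rfl
      rw [this] at ih ⊢
      nlinarith [ih]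
  have h2 : 0 ≤ rho ^ J := pow_nonneg rho_pos.le _
  linarith [h J]

theorem hi_Hp (u r : List C) (h : 14 ≤ (u ++ r).length) :
    1 ≤ ((wk u).d.hi : ℝ) / 10000000 * Hp (u ++ r) := by
  have := wk_hi_h u r (locOK h).1
  have h' : (10000000 : ℝ) ≤ (wk u).d.hi * (wk (u ++ r)).d.h := by exact_mod_cast this
  unfold Hp
  linarith

theorem tail_even (v r : List C) (hv : 14 ≤ v.length) (J : ℕ) (hJ : 2 * J ≤ r.length)
    (u : List C) (x : C) (hu : u.length % 2 = 0) :
    ∑ j ∈ Finset.range J, W ((x :: u ++ r.take (2 * (j + 1))).reverse) true v ≤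
      Hp v * (rho ^ (u.length / 2) * rho) * ((Bt u true x 0 : ℝ) / 10000000000000) := by
  set Z : List C → ℝ := fun u => ∑ j ∈ Finset.range J, W ((u ++ r.take (2 * (j + 1))).reverse) true v
    with hZ
  have len : ∀ j ∈ Finset.range J, (r.take (2 * (j + 1))).length = 2 * (j + 1) := by
    intro j hj
    rw [Finset.mem_range] at hj
    rw [List.length_take]; omega
  have h1 : ∀ y z u, List.length u % 2 = 0 → Z (y :: z :: u) ≤ G u z * Z u := by
    intro y z u hu
    rw [hZ]
    simp only
    rw [Finset.mul_sum]
    apply Finset.sum_le_sum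
    intro j hj
    have e : (y :: z :: u ++ r.take (2 * (j + 1))).reverse =
      (u ++ r.take (2 * (j + 1))).reverse ++ [z, y] := by simp
    rw [e, W_snoc2 (u.length / 2 + (j + 1)) _ _ _ _ (by
      rw [List.length_reverse, List.length_append, len j hj]; omega)]
    rw [mul_comm, List.reverse_reverse, List.append_assoc]
    exact mul_le_mul_of_nonneg_right (G_mono _ _ _) (W_nonneg _ _ _)
  have h2 : ∀ u, List.length u % 2 = 0 →
      Z u ≤ Hp v * rho ^ (u.length / 2) * (((wk u).d.hi : ℝ) / 10000000 * (592 / 408)) := by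
    intro u hu
    have hh : (0 : ℝ) ≤ ((wk u).d.hi : ℝ) / 10000000 := by positivity
    calc Z u ≤ ∑ j ∈ Finset.range J,
          Hp v * rho ^ (u.length / 2) * (((wk u).d.hi : ℝ) / 10000000) * rho ^ (j + 1) := by
          apply Finset.sum_le_sum
          intro j hj
          have hp := W_pot (u.length / 2 + (j + 1)) (u ++ r.take (2 * (j + 1))).reverse v (by
            rw [List.length_reverse, List.length_append, len j hj]; omega) hv
          rw [List.reverse_reverse, List.append_assoc] at hp
          have h3 := hi_Hp u (r.take (2 * (j + 1)) ++ v) (by simp; omega)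
          have hW := W_nonneg (u ++ r.take (2 * (j + 1))).reverse true v
          calc _ = W (u ++ r.take (2 * (j + 1))).reverse true v * 1 := by rw [mul_one]
            _ ≤ _ := mul_le_mul_of_nonneg_left h3 hW
            _ = ((wk u).d.hi : ℝ) / 10000000 * (W (u ++ r.take (2 * (j + 1))).reverse true v *
                  Hp (u ++ (r.take (2 * (j + 1)) ++ v))) := by ring
            _ ≤ _ := mul_le_mul_of_nonneg_left hp hh
            _ = _ := by rw [pow_add]; ring
      _ = Hp v * rho ^ (u.length / 2) * (((wk u).d.hi : ℝ) / 10000000) *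
            ∑ j ∈ Finset.range J, rho ^ (j + 1) := by rw [Finset.mul_sum]
      _ ≤ Hp v * rho ^ (u.length / 2) * (((wk u).d.hi : ℝ) / 10000000) * (592 / 408) :=
          mul_le_mul_of_nonneg_left (geom_le J)
            (mul_nonneg (mul_nonneg (Hp_nonneg v) (pow_nonneg rho_pos.le _)) hh)
      _ = _ := by ring
  refine le_trans ?_ (tail_gen Z (Hp v) 0 (Hp_nonneg v) h1 h2 u.length u x le_rfl hu)
  rw [hZ]
  simp only
  rw [Finset.mul_sum]
  apply Finset.sum_le_sum
  intro j hj
  have e : (x :: u ++ r.take (2 * (j + 1))).reverse =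
    (u ++ r.take (2 * (j + 1))).reverse ++ [x] := by simp
  rw [e, W_snoc (u.length / 2 + (j + 1)) _ _ _ (by
    rw [List.length_reverse, List.length_append, len j hj]; omega)]
  rw [mul_comm, List.reverse_reverse, List.append_assoc]
  exact mul_le_mul_of_nonneg_right (G_mono _ _ _) (W_nonneg _ _ _)

theorem tail_odd (v r : List C) (hv : 14 ≤ v.length) (J : ℕ) (hJ : 2 * J ≤ r.length)
    (u : List C) (x : C) (hu : u.length % 2 = 1) :
    ∑ j ∈ Finset.range J, ∑ c, W (c :: (x :: u ++ r.take (2 * (j + 1))).reverse) true v ≤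
      Ho v * (rho ^ (u.length / 2) * rho) * ((Bt u true x 0 : ℝ) / 10000000000000) := by
  set Z : List C → ℝ := fun u =>
    ∑ j ∈ Finset.range J, ∑ c, W (c :: (u ++ r.take (2 * (j + 1))).reverse) true v with hZ
  have len : ∀ j ∈ Finset.range J, (r.take (2 * (j + 1))).length = 2 * (j + 1) := by
    intro j hj
    rw [Finset.mem_range] at hj
    rw [List.length_take]; omega
  have h1 : ∀ y z u, List.length u % 2 = 1 → Z (y :: z :: u) ≤ G u z * Z u := by
    intro y z u hu
    rw [hZ]
    simp only
    rw [Finset.mul_sum]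
    apply Finset.sum_le_sum
    intro j hj
    rw [Finset.mul_sum]
    apply Finset.sum_le_sum
    intro c _
    have e : c :: (y :: z :: u ++ r.take (2 * (j + 1))).reverse =
      (c :: (u ++ r.take (2 * (j + 1))).reverse) ++ [z, y] := by simp
    rw [e, W_snoc2 (u.length / 2 + (j + 1) + 1) _ _ _ _ (by
      rw [List.length_cons, List.length_reverse, List.length_append, len j hj]; omega)]
    rw [mul_comm, List.reverse_cons, List.reverse_reverse, List.append_assoc, List.append_assoc]
    exact mul_le_mul_of_nonneg_right (G_mono _ _ _) (W_nonneg _ _ _)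
  have h2 : ∀ u, List.length u % 2 = 1 →
      Z u ≤ Ho v * rho ^ (u.length / 2) * (((wk u).d.hi : ℝ) / 10000000 * (592 / 408)) := by
    intro u hu
    have hh : (0 : ℝ) ≤ ((wk u).d.hi : ℝ) / 10000000 := by positivity
    calc Z u ≤ ∑ j ∈ Finset.range J,
          Ho v * rho ^ (u.length / 2) * (((wk u).d.hi : ℝ) / 10000000) * rho ^ (j + 1) := by
          apply Finset.sum_le_sum
          intro j hj
          have hp := W_pot_odd (u.length / 2 + (j + 1)) (u ++ r.take (2 * (j + 1))).reverse v (by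
            rw [List.length_reverse, List.length_append, len j hj]; omega) hv
          rw [List.reverse_reverse] at hp
          calc _ ≤ ∑ c, ((wk u).d.hi : ℝ) / 10000000 *
                (W (c :: (u ++ r.take (2 * (j + 1))).reverse) true v *
                  Hp (u ++ r.take (2 * (j + 1)) ++ (c :: v))) := by
                apply Finset.sum_le_sum
                intro c _
                have h3 := hi_Hp u (r.take (2 * (j + 1)) ++ (c :: v)) (by simp; omega)
                have hW := W_nonneg (c :: (u ++ r.take (2 * (j + 1))).reverse) true v
                rw [List.append_assoc]
                calc _ = W (c :: (u ++ r.take (2 * (j + 1))).reverse) true v * 1 := by rw [mul_one]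
                  _ ≤ _ := mul_le_mul_of_nonneg_left h3 hW
                  _ = _ := by ring
            _ = ((wk u).d.hi : ℝ) / 10000000 * ∑ c,
                (W (c :: (u ++ r.take (2 * (j + 1))).reverse) true v *
                  Hp (u ++ r.take (2 * (j + 1)) ++ (c :: v))) := by rw [Finset.mul_sum]
            _ ≤ _ := mul_le_mul_of_nonneg_left hp hh
            _ = _ := by rw [pow_add]; ring
      _ = Ho v * rho ^ (u.length / 2) * (((wk u).d.hi : ℝ) / 10000000) *
            ∑ j ∈ Finset.range J, rho ^ (j + 1) := by rw [Finset.mul_sum]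
      _ ≤ Ho v * rho ^ (u.length / 2) * (((wk u).d.hi : ℝ) / 10000000) * (592 / 408) :=
          mul_le_mul_of_nonneg_left (geom_le J)
            (mul_nonneg (mul_nonneg (Ho_nonneg v) (pow_nonneg rho_pos.le _)) hh)
      _ = _ := by ring
  refine le_trans ?_ (tail_gen Z (Ho v) 1 (Ho_nonneg v) h1 h2 u.length u x le_rfl hu)
  rw [hZ]
  simp only
  rw [Finset.mul_sum]
  apply Finset.sum_le_sum
  intro j hj
  rw [Finset.mul_sum]
  apply Finset.sum_le_sum
  intro c _
  have e : c :: (x :: u ++ r.take (2 * (j + 1))).reverse =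
    (c :: (u ++ r.take (2 * (j + 1))).reverse) ++ [x] := by simp
  rw [e, W_snoc (u.length / 2 + (j + 1) + 1) _ _ _ (by
    rw [List.length_cons, List.length_reverse, List.length_append, len j hj]; omega)]
  rw [mul_comm, List.reverse_cons, List.reverse_reverse, List.append_assoc, List.append_assoc]
  exact mul_le_mul_of_nonneg_right (G_mono _ _ _) (W_nonneg _ _ _)

/-! ### Part 4: soundness of the branch and bound search -/

/-- expected cost of the two families of squares attached to the prefix `w` of `v` -/
noncomputable def ff (v w : List C) : ℝ :=
  W (w.drop 1).reverse true v + ∑ c, W (c :: w.reverse) true v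

noncomputable def NN (v : List C) : ℝ := ∑ k ∈ Finset.Ico 4 (v.length / 2 + 1), ff v (v.take (2 * k))

/-- all moves of Ann in `v` had positive weight -/
def Good : List C → Prop
  | [] => True
  | [_] => True
  | _ :: a :: v => (wk v).g a ≠ 0 ∧ Good v

def Cond (v : List C) : Prop := 1 + NN v ≤ ∑ a, G v a

theorem ff_nonneg (v w : List C) : 0 ≤ ff v w :=
  add_nonneg (W_nonneg _ _ _) (Finset.sum_nonneg fun _ _ => W_nonneg _ _ _)

theorem G_map (σ : Equiv.Perm C) (v : List C) (a : C) : G (v.map σ) (σ a) = G v a := by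
  unfold G; rw [(wk_perm σ v).2.2]

theorem W_map (σ : Equiv.Perm C) (t : List C) : ∀ b v, W (t.map σ) b (v.map σ) = W t b v := by
  induction t with
  | nil => intro b v; simp [W]
  | cons x t ih =>
    intro b v
    cases b
    · exact ih true (x :: v)
    · show G (v.map σ) (σ x) * W (t.map σ) false ((x :: v).map σ) = G v x * W t false (x :: v)
      rw [G_map, ih]

theorem ff_map (σ : Equiv.Perm C) (v w : List C) : ff (v.map σ) (w.map σ) = ff v w := by
  unfold ff
  rw [← List.map_drop, ← List.map_reverse, W_map, ← Equiv.sum_comp σ]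
  congr 1
  apply Finset.sum_congr rfl
  intro c _
  rw [← List.map_reverse, ← List.map_cons, W_map]

theorem NN_map (σ : Equiv.Perm C) (v : List C) : NN (v.map σ) = NN v := by
  unfold NN
  rw [List.length_map]
  apply Finset.sum_congr rfl
  intro k _
  rw [← List.map_take, ff_map]

theorem Good_map (σ : Equiv.Perm C) : ∀ v : List C, Good v → Good (v.map σ)
  | [], _ => trivial
  | [_], _ => trivial
  | b :: a :: v, h => ⟨by rw [(wk_perm σ v).2.2]; exact h.1, Good_map σ v h.2⟩

def CG (v : List C) : Prop := Good v → Cond v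

theorem CG_map (σ : Equiv.Perm C) (v : List C) (h : CG (v.map σ)) : CG v := by
  intro hg
  have := h (Good_map σ v hg)
  unfold Cond at this ⊢
  rw [NN_map, ← Equiv.sum_comp σ] at this
  simpa only [G_map] using this

theorem kids_step {P : List C → Prop} (hP : ∀ (σ : Equiv.Perm C) v, P (v.map σ) → P v)
    {ns : C} {e : List C} {f : C → C → Bool} {n : ℕ} (hI : Inv ns e) (h : kids ns f = true)
    (next : ∀ c ns', f c ns' = true → Inv ns' (e ++ [c]) →
      ∀ r : List C, r.length = n → P (e ++ [c] ++ r)) :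
    ∀ r : List C, r.length = n + 1 → P (e ++ r) := by
  intro r hr
  match r, hr with
  | y :: r, hr =>
    obtain ⟨σ, hσ, ns', hk, hI'⟩ := kids_sound hI h y
    apply hP σ
    have := next (σ y) ns' hk hI' (r.map σ) (by simpa using hr)
    rw [List.map_append, hσ, List.map_cons]
    rw [List.append_assoc] at this
    exact this

theorem cdiv_eq_zero {n d : ℕ} (hd : 0 < d) (h : cdiv n d = 0) : n = 0 := by
  have := cdiv_ge n d hd
  rw [h] at this
  have hd' : (0 : ℝ) < d := by exact_mod_cast hd
  rw [div_le_iff₀ hd'] at this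
  have h2 : (n : ℝ) ≤ 0 := by simpa using this
  exact_mod_cast le_antisymm h2 (Nat.cast_nonneg n)

theorem Bt_nil_false (y : C) (f : ℕ) : Bt [] false y f = f := rfl

theorem Bt_nil_ex (x : C) (f : ℕ) : ∃ q, Bt [] true x f = cdiv ((wk []).g x * (q + 1)) 592 :=
  ⟨_, Bt_nil_true x f⟩

theorem Bt_zero_nil {x : C} {f : ℕ} (h : Bt [] true x f = 0) : (wk []).g x = 0 := by
  obtain ⟨q, hq⟩ := Bt_nil_ex x f
  rw [hq] at h
  have := cdiv_eq_zero (by norm_num) h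
  rcases Nat.mul_eq_zero.1 this with h1 | h1
  · exact h1
  · omega

theorem Bt_zero_cons {y : C} {u : List C} {x : C} {f : ℕ} (h : Bt (y :: u) true x f = 0) :
    (wk (y :: u)).g x = 0 ∨ ∃ q, Bt u false y (q + 1) = 0 := by
  rw [Bt_cons_true, cnd_eq] at h
  split_ifs at h with h0
  · left; exact Nat.eq_of_beq_eq_true h0
  · have := cdiv_eq_zero (by norm_num) h
    rcases Nat.mul_eq_zero.1 this with h1 | h1
    · left; exact h1
    · right; exact ⟨_, h1⟩

theorem Bt_zero {u : List C} {x : C} {f : ℕ} (h : Bt u true x f = 0) :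
    (wk u).g x = 0 ∨ ∃ y z u', u = y :: z :: u' ∧ Bt u' true z 0 = 0 := by
  cases u with
  | nil => exact Or.inl (Bt_zero_nil h)
  | cons y u =>
    rcases Bt_zero_cons h with h1 | ⟨q, h1⟩
    · exact Or.inl h1
    · right
      cases u with
      | nil =>
        rw [Bt_nil_false] at h1
        omega
      | cons z u =>
        rw [Bt_cons_false, cnd_eq] at h1
        split_ifs at h1
        exact ⟨y, z, u, rfl, h1⟩

theorem Bt_Good (n : ℕ) : ∀ (u : List C) (x : C) (f : ℕ), u.length ≤ n → Bt u true x f = 0 →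
    ∀ (y : C) (r : List C), ¬ Good (y :: x :: (u ++ r)) := by
  induction n using Nat.strong_induction_on with
  | _ n ih =>
  intro u x f hn h y r hg
  rcases Bt_zero h with h1 | ⟨y', z, u', rfl, h1⟩
  · apply hg.1
    have := wk_g_mono u r x
    omega
  · exact ih u'.length (by simp at hn; omega) u' z 0 le_rfl h1 y' r hg.2

theorem Bt_W (n : ℕ) : ∀ (u : List C) (x : C) (f : ℕ), u.length ≤ n → u.length % 2 = 1 →
    Bt u true x f = 0 → ∀ (c : C) (v : List C), W (c :: (u.reverse ++ [x])) true v = 0 := by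
  induction n using Nat.strong_induction_on with
  | _ n ih =>
  intro u x f hn hp h c v
  have e : c :: (u.reverse ++ [x]) = (c :: u.reverse) ++ [x] := rfl
  rw [e, W_snoc (u.length / 2 + 1) _ _ _ (by simp; omega)]
  rcases Bt_zero h with h1 | ⟨y', z, u', rfl, h1⟩
  · have h2 := G_mono u (c :: v) x
    have h3 := G_nonneg (u ++ (c :: v)) x
    have h4 : G u x = 0 := by unfold G; rw [h1]; simp
    have h5 : (c :: u.reverse).reverse ++ v = u ++ (c :: v) := by simp
    rw [h5, le_antisymm (by linarith) h3, mul_zero]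
  · have h2 := ih u'.length (by simp at hn; omega) u' z 0 le_rfl (by simp at hp; omega) h1 c v
    have e2 : c :: (y' :: z :: u').reverse = (c :: u'.reverse) ++ [z, y'] := by simp
    have e3 : c :: (u'.reverse ++ [z]) = (c :: u'.reverse) ++ [z] := rfl
    have hl : (c :: u'.reverse).length = 2 * (u'.length / 2 + 1) := by simp at hp ⊢; omega
    rw [e2, W_snoc2 _ _ _ _ _ hl]
    rw [e3, W_snoc _ _ _ _ hl] at h2
    rw [h2, zero_mul]

theorem inc_cons (e : List C) (x : C) (w' : List C) : inc e (x :: w') = Nat.add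
    (rvK w' [] fun t => Wc t true e)
    (cnd (Nat.beq (Bt w' true x 0) 0) 0
      (rvK (x :: w') [] fun t =>
        Nat.add (Nat.add (Wc (List.cons C.c0 t) true e) (Wc (List.cons C.c1 t) true e))
          (Nat.add (Wc (List.cons C.c2 t) true e) (Wc (List.cons C.c3 t) true e)))) := rfl

theorem inc_ge (e r w : List C) (k : ℕ) (hw : w.length = 2 * k + 2) :
    10000000000000 * ff (e ++ r) w ≤ inc e w := by
  match w, hw with
  | x :: w', hw =>
    have hl : w'.length % 2 = 1 := by simp at hw; omega
    rw [inc_cons, rvK_nil, rvK_nil, Nat.add_eq, Nat.cast_add]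
    unfold ff
    rw [mul_add]
    refine add_le_add (Wc_ge _ true e r) ?_
    rw [cnd_eq]
    split_ifs with h
    · have h0 := Bt_W w'.length w' x 0 le_rfl hl (Nat.eq_of_beq_eq_true h)
      rw [List.reverse_cons]
      simp only [h0]
      simp
    · simp only [Nat.add_eq]
      push_cast
      rw [sum_C, mul_add, mul_add, mul_add]
      exact add_le_add (add_le_add (Wc_ge _ true e r) (Wc_ge _ true e r))
        (add_le_add (Wc_ge _ true e r) (Wc_ge _ true e r))

theorem incs_ge (e r : List C) (K : ℕ) (p : List (List C))
    (hp : ∀ w ∈ p, ∃ k, w.length = 2 * k + 2) :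
    K + 10000000000000 * (p.map (ff (e ++ r))).sum ≤ incs e K p := by
  induction p with
  | nil => show (K : ℝ) + 10000000000000 * 0 ≤ (K : ℕ); simp
  | cons w p ih =>
    have i1 := ih fun w' hw' => hp w' (List.mem_cons_of_mem _ hw')
    obtain ⟨k, hk⟩ := hp w List.mem_cons_self
    have i2 := inc_ge e r w k hk
    show _ ≤ ((inc e w + incs e K p : ℕ) : ℝ)
    push_cast
    rw [List.map_cons, List.sum_cons]
    linarith

/-- the invariant of the search -/
def KInv (e : List C) (k K : ℕ) (p : List (List C)) : Prop :=
  ∀ r : List C, 10000000000000 * ∑ j ∈ Finset.Ico 4 k, ff (e ++ r) ((e ++ r).take (2 * j)) ≤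
    K + 10000000000000 * (p.map (ff (e ++ r))).sum

theorem fin_sound {k K : ℕ} {x1 x2 : C} {l2 : List C} (hk : (x1 :: x2 :: l2).length = 2 * k)
    (hlf : (wk (x1 :: x2 :: l2)).lf = true)
    (hf : fin k K (Bt l2 true x2 0) (Bt (x2 :: l2) true x1 0) (wk (x1 :: x2 :: l2)) = true)
    (r : List C) (hr : r.length % 2 = 0) (hv : 14 ≤ (x1 :: x2 :: l2 ++ r).length)
    (hK : 10000000000000 * ∑ j ∈ Finset.Ico 4 (k + 1),
      ff (x1 :: x2 :: l2 ++ r) ((x1 :: x2 :: l2 ++ r).take (2 * j)) ≤ K) :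
    Cond (x1 :: x2 :: l2 ++ r) := by
  set e := x1 :: x2 :: l2 with he
  set v := e ++ r with hvd
  obtain ⟨J, hJ⟩ : ∃ J, r.length = 2 * J := ⟨r.length / 2, by omega⟩
  have hvl : v.length / 2 = k + J := by rw [hvd, List.length_append, hk, hJ]; omega
  have hl2 : l2.length / 2 + 1 = k := by simp [he] at hk; omega
  have hl1 : (x2 :: l2).length / 2 + 1 = k := by simp [he] at hk; simp; omega
  have t1 := tail_even v r hv J hJ.ge l2 x2 (by simp [he] at hk; omega)
  have t2 := tail_odd v r hv J hJ.ge (x2 :: l2) x1 (by simp [he] at hk; simp; omega)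
  rw [← pow_succ, hl2] at t1
  rw [← pow_succ, hl1] at t2
  have hN : NN v ≤ ∑ j ∈ Finset.Ico 4 (k + 1), ff v (v.take (2 * j)) +
      ∑ j ∈ Finset.range J, ff v (v.take (2 * (k + 1 + j))) := by
    unfold NN
    rw [hvl]
    have e1 : ∑ j ∈ Finset.range J, ff v (v.take (2 * (k + 1 + j))) =
        ∑ j ∈ Finset.Ico (k + 1) (k + J + 1), ff v (v.take (2 * j)) := by
      rw [Finset.sum_Ico_eq_sum_range]
      congr 2
      omega
    rw [e1]
    by_cases h4 : 4 ≤ k + 1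
    · rw [Finset.sum_Ico_consecutive _ h4 (by omega)]
    · rw [Finset.Ico_eq_empty (by omega : ¬ 4 < k + 1), Finset.sum_empty, zero_add]
      apply Finset.sum_le_sum_of_subset_of_nonneg
      · intro j hj
        rw [Finset.mem_Ico] at hj ⊢
        omega
      · intro j _ _
        exact ff_nonneg _ _
  have hT : ∑ j ∈ Finset.range J, ff v (v.take (2 * (k + 1 + j))) =
      ∑ j ∈ Finset.range J, W ((x2 :: l2 ++ r.take (2 * (j + 1))).reverse) true v +
      ∑ j ∈ Finset.range J, ∑ c, W (c :: (x1 :: (x2 :: l2) ++ r.take (2 * (j + 1))).reverse) true v := by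
    rw [← Finset.sum_add_distrib]
    apply Finset.sum_congr rfl
    intro j _
    have e2 : v.take (2 * (k + 1 + j)) = e ++ r.take (2 * (j + 1)) := by
      rw [hvd, show 2 * (k + 1 + j) = e.length + 2 * (j + 1) by omega, List.take_length_add_append]
    rw [e2]
    rfl
  have hw : wk v = wk e := wk_lf_append r hlf
  have hfin := Nat.le_of_ble_eq_true hf
  have hc := cdiv_ge (((wk e).d.h * Bt l2 true x2 0 + (wk e).d.o * Bt (x2 :: l2) true x1 0) * 592 ^ k)
    (1000 ^ k) (by positivity)
  have hfin' : K + 10000000000000 +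
    cdiv (((wk e).d.h * Bt l2 true x2 0 + (wk e).d.o * Bt (x2 :: l2) true x1 0) * 592 ^ k) (1000 ^ k) ≤
    ((wk e).g C.c0 + (wk e).g C.c1 + ((wk e).g C.c2 + (wk e).g C.c3)) * 10000000000 := hfin
  have hfin2 : (K : ℝ) + 10000000000000 +
    cdiv (((wk e).d.h * Bt l2 true x2 0 + (wk e).d.o * Bt (x2 :: l2) true x1 0) * 592 ^ k) (1000 ^ k) ≤
    ((wk e).g C.c0 + (wk e).g C.c1 + ((wk e).g C.c2 + (wk e).g C.c3)) * 10000000000 := by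
    exact_mod_cast hfin'
  have hp : (((((wk e).d.h * Bt l2 true x2 0 + (wk e).d.o * Bt (x2 :: l2) true x1 0) * 592 ^ k : ℕ) : ℝ)
      / ((1000 ^ k : ℕ) : ℝ)) = Hp v * rho ^ k * (Bt l2 true x2 0 : ℝ) +
        Ho v * rho ^ k * (Bt (x2 :: l2) true x1 0 : ℝ) := by
    unfold Hp Ho rho
    rw [hw, div_pow]
    push_cast
    ring
  rw [hp] at hc
  unfold Cond
  have hG : ∑ a, G v a = ((wk e).g C.c0 + (wk e).g C.c1 + ((wk e).g C.c2 + (wk e).g C.c3)) / 1000 := by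
    rw [sum_C]; unfold G; rw [hw]; ring
  rw [hG]
  rw [hT] at hN
  linarith

theorem go_zero (k K : ℕ) (p : List (List C)) (er : List C) (ns : C) : go 0 k K p er ns = false := rfl

theorem go_succ (n k K : ℕ) (p : List (List C)) (er : List C) (ns : C) : go (n + 1) k K p er ns =
      rvK er [] fun e =>
        List.rec false (fun x1 l1 _ => List.rec false (fun x2 l2 _ =>
          node k K (cnd (Nat.ble 4 k) (List.cons e p) p) e x1 x2 l1 l2 fun K' p' =>
            kids ns fun c ns' => kids ns' fun c' ns'' =>
              go n (Nat.succ k) K' p' (List.cons c' (List.cons c er)) ns'') l1) e := rfl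

theorem go_sound (fuel : ℕ) : ∀ (k K : ℕ) (p : List (List C)) (er : List C) (ns : C),
    go fuel k K p er ns = true → er.length = 2 * k → Inv ns er.reverse →
    (∀ w ∈ p, ∃ k, w.length = 2 * k + 2) → KInv er.reverse k K p →
    ∀ r : List C, 2 * fuel ≤ r.length → r.length % 2 = 0 → 14 ≤ (er.reverse ++ r).length →
      CG (er.reverse ++ r) := by
  induction fuel with
  | zero => intro k K p er ns h; rw [go_zero] at h; cases h
  | succ n ih =>
    intro k K p er ns h hlen hI hp hK r hr hr2 hv
    rw [go_succ, rvK_nil] at h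
    have hel : er.reverse.length = 2 * k := by simpa using hlen
    generalize he : er.reverse = e at *
    match e, hel with
    | [], _ => cases h
    | [_], _ => cases h
    | x1 :: x2 :: l2, hel =>
    change node k K (cnd (Nat.ble 4 k) (List.cons (x1 :: x2 :: l2) p) p) (x1 :: x2 :: l2) x1 x2
      (x2 :: l2) l2 (fun K' p' => kids ns fun c ns' => kids ns' fun c' ns'' =>
              go n (Nat.succ k) K' p' (List.cons c' (List.cons c er)) ns'') = true at h
    generalize hp1 : cnd (Nat.ble 4 k) ((x1 :: x2 :: l2) :: p) p = p1 at h
    have hp1' : ∀ w ∈ p1, ∃ k, w.length = 2 * k + 2 := by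
      intro w hw
      rw [← hp1, cnd_eq] at hw
      split_ifs at hw
      · rcases List.mem_cons.1 hw with rfl | hw
        · exact ⟨k - 1, by rw [hel]; simp at hel; omega⟩
        · exact hp w hw
      · exact hp w hw
    have hK1 : KInv (x1 :: x2 :: l2) (k + 1) K p1 := by
      intro r
      rw [← hp1, cnd_eq]
      split_ifs with h4
      · have h4' : 4 ≤ k := Nat.le_of_ble_eq_true h4
        rw [Finset.sum_Ico_succ_top h4', List.map_cons, List.sum_cons, ← hel, List.take_left]
        have := hK r
        linarith
      · have h4' : ¬ 4 ≤ k := fun hh => h4 (Nat.ble_eq_true_of_le hh)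
        rw [Finset.Ico_eq_empty (by omega), Finset.sum_empty, mul_zero]
        have : 0 ≤ (p.map (ff (x1 :: x2 :: l2 ++ r))).sum := by
          apply List.sum_nonneg
          intro z hz
          obtain ⟨w, _, rfl⟩ := List.mem_map.1 hz
          exact ff_nonneg _ _
        positivity
    have next : ∀ K' p', KInv (x1 :: x2 :: l2) (k + 1) K' p' →
        (∀ w ∈ p', ∃ k, w.length = 2 * k + 2) →
        (kids ns fun c ns' => kids ns' fun c' ns'' =>
              go n (Nat.succ k) K' p' (List.cons c' (List.cons c er)) ns'') = true →
        CG (x1 :: x2 :: l2 ++ r) := by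
      intro K' p' hK' hp' hkids
      refine kids_step CG_map (n := r.length - 1) hI hkids ?_ r (by omega)
      intro c ns' hk' hI'
      have hh : r.length - 1 = (r.length - 2) + 1 := by omega
      rw [hh]
      refine kids_step CG_map hI' hk' ?_
      intro c' ns'' hg hI'' r'' hr''
      have er' : (c' :: c :: er).reverse = x1 :: x2 :: l2 ++ [c] ++ [c'] := by
        rw [List.reverse_cons, List.reverse_cons, he]
      have := ih (k + 1) K' p' (c' :: c :: er) ns'' hg (by simp [hlen]; omega)
        (by rw [er']; exact hI'') hp' (by
          rw [er']
          intro r0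
          rw [List.append_assoc, List.append_assoc]
          exact hK' _) r'' (by omega) (by omega) (by
          rw [er']
          simp at hv ⊢; omega)
      rw [er'] at this
      exact this
    unfold node at h
    rw [cnd_eq] at h
    split_ifs at h with hB
    · intro hg
      exact absurd hg (Bt_Good l2.length l2 x2 0 le_rfl (Nat.eq_of_beq_eq_true hB) x1 r)
    · rw [cnd_eq] at h
      have hKi : ∀ r, 10000000000000 * ∑ j ∈ Finset.Ico 4 (k + 1),
          ff (x1 :: x2 :: l2 ++ r) ((x1 :: x2 :: l2 ++ r).take (2 * j)) ≤
          incs (x1 :: x2 :: l2) K p1 := fun r => (hK1 r).trans (incs_ge _ r K p1 hp1')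
      split_ifs at h with hlf
      · rw [cnd_eq] at h
        split_ifs at h with hf
        · intro _
          exact fin_sound hel hlf hf r hr2 hv (hKi r)
        · refine next _ [] ?_ (by simp) h
          intro r
          simpa using hKi r
      · exact next K p1 hK1 hp1' h

/-! The fifteen cases of the search -/

set_option maxRecDepth 100000
theorem go0000 : go 10 2 0 [] [C.c0, C.c0, C.c0, C.c0] C.c1 = true := by decide +kernel
theorem go0001 : go 10 2 0 [] [C.c1, C.c0, C.c0, C.c0] C.c2 = true := by decide +kernel
theorem go0010 : go 10 2 0 [] [C.c0, C.c1, C.c0, C.c0] C.c2 = true := by decide +kernel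
theorem go0011 : go 10 2 0 [] [C.c1, C.c1, C.c0, C.c0] C.c2 = true := by decide +kernel
theorem go0012 : go 10 2 0 [] [C.c2, C.c1, C.c0, C.c0] C.c3 = true := by decide +kernel
theorem go0100 : go 10 2 0 [] [C.c0, C.c0, C.c1, C.c0] C.c2 = true := by decide +kernel
theorem go0101 : go 10 2 0 [] [C.c1, C.c0, C.c1, C.c0] C.c2 = true := by decide +kernel
theorem go0102 : go 10 2 0 [] [C.c2, C.c0, C.c1, C.c0] C.c3 = true := by decide +kernel
theorem go0110 : go 10 2 0 [] [C.c0, C.c1, C.c1, C.c0] C.c2 = true := by decide +kernel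
theorem go0111 : go 10 2 0 [] [C.c1, C.c1, C.c1, C.c0] C.c2 = true := by decide +kernel
theorem go0112 : go 10 2 0 [] [C.c2, C.c1, C.c1, C.c0] C.c3 = true := by decide +kernel
theorem go0120 : go 10 2 0 [] [C.c0, C.c2, C.c1, C.c0] C.c3 = true := by decide +kernel
theorem go0121 : go 10 2 0 [] [C.c1, C.c2, C.c1, C.c0] C.c3 = true := by decide +kernel
theorem go0122 : go 10 2 0 [] [C.c2, C.c2, C.c1, C.c0] C.c3 = true := by decide +kernel
theorem go0123 : go 10 2 0 [] [C.c3, C.c2, C.c1, C.c0] C.c3 = true := by decide +kernel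
set_option maxRecDepth 512

theorem kids4 (f : C → C → C → C → C → Bool)
    (h0 : f C.c0 C.c0 C.c0 C.c0 C.c1 = true) (h1 : f C.c0 C.c0 C.c0 C.c1 C.c2 = true)
    (h2 : f C.c0 C.c0 C.c1 C.c0 C.c2 = true) (h3 : f C.c0 C.c0 C.c1 C.c1 C.c2 = true)
    (h4 : f C.c0 C.c0 C.c1 C.c2 C.c3 = true) (h5 : f C.c0 C.c1 C.c0 C.c0 C.c2 = true)
    (h6 : f C.c0 C.c1 C.c0 C.c1 C.c2 = true) (h7 : f C.c0 C.c1 C.c0 C.c2 C.c3 = true)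
    (h8 : f C.c0 C.c1 C.c1 C.c0 C.c2 = true) (h9 : f C.c0 C.c1 C.c1 C.c1 C.c2 = true)
    (h10 : f C.c0 C.c1 C.c1 C.c2 C.c3 = true) (h11 : f C.c0 C.c1 C.c2 C.c0 C.c3 = true)
    (h12 : f C.c0 C.c1 C.c2 C.c1 C.c3 = true) (h13 : f C.c0 C.c1 C.c2 C.c2 C.c3 = true)
    (h14 : f C.c0 C.c1 C.c2 C.c3 C.c3 = true) :
    (kids C.c0 fun a n1 => kids n1 fun b n2 => kids n2 fun c n3 => kids n3 fun d n4 =>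
      f a b c d n4) = true := by
  simp only [kids, band_iff]
  tauto

theorem cond_all {v : List C} (hv : 24 ≤ v.length) (h2 : v.length % 2 = 0) : CG v := by
  have h := kids4 (fun a b c d ns => go 10 2 0 [] [d, c, b, a] ns) go0000 go0001 go0010 go0011 go0012
    go0100 go0101 go0102 go0110 go0111 go0112 go0120 go0121 go0122 go0123
  obtain ⟨n, hn⟩ : ∃ n, v.length = n + 1 + 1 + 1 + 1 := ⟨v.length - 4, by omega⟩
  refine kids_step CG_map (ns := C.c0) (e := []) rfl h ?_ v hn
  intro a n1 h hI
  refine kids_step CG_map hI h ?_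
  intro b n2 h hI
  refine kids_step CG_map hI h ?_
  intro c n3 h hI
  refine kids_step CG_map hI h ?_
  intro d n4 h hI r hr
  refine go_sound 10 2 0 [] [d, c, b, a] n4 h rfl hI (by simp) ?_ r (by omega) (by omega) ?_
  · intro r
    simp
  · simp; omega

/-! ### Part 5: Ann's strategy -/

/-- the words which would complete a square started at the position `v` -/
def Th (v : List C) : List (List C) :=
  (List.range' 4 (v.length / 2 - 3)).flatMap fun k =>
    [((v.take (2 * k)).drop 1).reverse, C.c0 :: (v.take (2 * k)).reverse,
      C.c1 :: (v.take (2 * k)).reverse, C.c2 :: (v.take (2 * k)).reverse,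
      C.c3 :: (v.take (2 * k)).reverse]

noncomputable def SW (v : List C) (L : List (List C)) : ℝ := (L.map fun t => W t true v).sum

theorem SW_append (v : List C) (L L' : List (List C)) : SW v (L ++ L') = SW v L + SW v L' := by
  unfold SW; rw [List.map_append, List.sum_append]

theorem SW_flat (v : List C) (n : ℕ) : ∀ a, SW v ((List.range' a n).flatMap fun k =>
    [((v.take (2 * k)).drop 1).reverse, C.c0 :: (v.take (2 * k)).reverse,
      C.c1 :: (v.take (2 * k)).reverse, C.c2 :: (v.take (2 * k)).reverse,
      C.c3 :: (v.take (2 * k)).reverse]) = ∑ k ∈ Finset.Ico a (a + n), ff v (v.take (2 * k)) := by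
  induction n with
  | zero => intro a; simp [SW]
  | succ n ih =>
    intro a
    rw [List.range'_succ, List.flatMap_cons, SW_append, ih (a + 1),
      Finset.sum_eq_sum_Ico_succ_bot (by omega : a < a + (n + 1))]
    have : a + 1 + n = a + (n + 1) := by omega
    rw [this]
    congr 1

theorem SW_Th {v : List C} (hv : 24 ≤ v.length) : SW v (Th v) = NN v := by
  unfold Th NN
  rw [SW_flat]
  congr 2
  all_goals omega

/-- the part of a threat that remains after the moves `a` and `b` -/
def stp (a b : C) : List C → Option (List C)
  | x :: y :: t => if x = a ∧ y = b then some t else none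
  | _ => none

noncomputable def yy (v : List C) (a : C) : List C → ℝ
  | [] => 0
  | x :: t => if x = a then W t false (a :: v) else 0

noncomputable def YY (v : List C) (a : C) (L : List (List C)) : ℝ := (L.map (yy v a)).sum

theorem yy_cons (v : List C) (a x : C) (t : List C) :
    yy v a (x :: t) = if x = a then W t false (a :: v) else 0 := rfl

theorem yy_nonneg (v : List C) (a : C) (t : List C) : 0 ≤ yy v a t := by
  cases t with
  | nil => exact le_refl _
  | cons x t =>
    rw [yy_cons]
    split_ifs
    · exact W_nonneg _ _ _
    · exact le_refl _

theorem YY_nonneg (v : List C) (a : C) (L : List (List C)) : 0 ≤ YY v a L := by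
  apply List.sum_nonneg
  intro z hz
  obtain ⟨w, _, rfl⟩ := List.mem_map.1 hz
  exact yy_nonneg _ _ _

theorem yy_sum (v t : List C) : ∑ a, G v a * yy v a t ≤ W t true v := by
  cases t with
  | nil => simp [yy, W]
  | cons x t =>
    apply le_of_eq
    have : ∀ a, G v a * yy v a (x :: t) = if x = a then G v x * W t false (x :: v) else 0 := by
      intro a
      rw [yy_cons]
      split_ifs with h
      · subst h; rfl
      · simp
    simp only [this]
    rw [Finset.sum_ite_eq]
    simp [W]

theorem YY_sum (v : List C) (L : List (List C)) : ∑ a, G v a * YY v a L ≤ SW v L := by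
  induction L with
  | nil => simp [YY, SW]
  | cons t L ih =>
    have e1 : ∀ a, YY v a (t :: L) = yy v a t + YY v a L := by
      intro a; unfold YY; rw [List.map_cons, List.sum_cons]
    have e2 : SW v (t :: L) = W t true v + SW v L := by
      unfold SW; rw [List.map_cons, List.sum_cons]
    simp only [e1, mul_add]
    rw [Finset.sum_add_distrib, e2]
    exact add_le_add (yy_sum v t) ih

theorem YY_mem (v : List C) (a : C) (L : List (List C)) (h : [a] ∈ L) : 1 ≤ YY v a L := by
  induction L with
  | nil => simp at h
  | cons t L ih =>
    have e1 : YY v a (t :: L) = yy v a t + YY v a L := by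
      unfold YY; rw [List.map_cons, List.sum_cons]
    rw [e1]
    rcases List.mem_cons.1 h with h | h
    · subst h
      have : yy v a [a] = 1 := by simp [yy, W]
      have := YY_nonneg v a L
      linarith
    · have := ih h
      have := yy_nonneg v a t
      linarith

theorem SW_stp (v : List C) (a b : C) (L : List (List C)) :
    SW (b :: a :: v) (L.filterMap (stp a b)) ≤ YY v a L := by
  induction L with
  | nil => simp [SW, YY]
  | cons t L ih =>
    have e1 : YY v a (t :: L) = yy v a t + YY v a L := by
      unfold YY; rw [List.map_cons, List.sum_cons]
    have h0 := yy_nonneg v a t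
    rw [e1]
    cases hs : stp a b t with
    | none =>
      rw [List.filterMap_cons_none hs]
      linarith
    | some t' =>
      rw [List.filterMap_cons_some hs]
      have e2 : SW (b :: a :: v) (t' :: L.filterMap (stp a b)) =
          W t' true (b :: a :: v) + SW (b :: a :: v) (L.filterMap (stp a b)) := by
        unfold SW; rw [List.map_cons, List.sum_cons]
      rw [e2]
      refine add_le_add (le_of_eq ?_) ih
      match t, hs with
      | x :: y :: t, hs =>
        have hs' : (if x = a ∧ y = b then some t else none) = some t' := hs
        split_ifs at hs' with hh
        obtain ⟨rfl, rfl⟩ := hh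
        have : t = t' := by simpa using hs'
        subst this
        simp [yy, W]

theorem move_ex {v : List C} (hv : 24 ≤ v.length) (h2 : v.length % 2 = 0) (hg : Good v)
    {L : List (List C)} (hL : SW v L < 1) :
    ∃ a, (wk v).g a ≠ 0 ∧ YY v a (L ++ Th v) < 1 := by
  by_contra hcon
  push Not at hcon
  have h1 : 1 + NN v ≤ ∑ a, G v a := cond_all hv h2 hg
  have h3 := YY_sum v (L ++ Th v)
  rw [SW_append, SW_Th hv] at h3
  have h4 : ∑ a, G v a ≤ ∑ a, G v a * YY v a (L ++ Th v) := by
    apply Finset.sum_le_sum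
    intro a _
    by_cases ha : (wk v).g a = 0
    · have : G v a = 0 := by unfold G; rw [ha]; simp
      rw [this]; simp
    · have := hcon a ha
      have := G_nonneg v a
      nlinarith
  linarith

/-- a virtual past of the play -/
def v0 : List C :=
  [C.c1, C.c1, C.c2, C.c0, C.c2, C.c3, C.c1, C.c1, C.c3, C.c3, C.c0, C.c2, C.c2, C.c1, C.c0,
    C.c2, C.c0, C.c3, C.c1, C.c2, C.c0, C.c1, C.c1, C.c0, C.c1, C.c3, C.c0, C.c0, C.c3, C.c1]

theorem good_v0 : Good v0 := by
  unfold v0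
  repeat' (first | exact trivial | refine ⟨by decide +kernel, ?_⟩)

/-- the pending threats -/
def RR : List C → List (List C)
  | [] => []
  | [_] => []
  | b :: a :: u => (RR u ++ Th (u ++ v0)).filterMap (stp a b)

open Classical in
noncomputable def psiC (u : List C) : C :=
  if h : ∃ a, (wk (u ++ v0)).g a ≠ 0 ∧ YY (u ++ v0) a (RR u ++ Th (u ++ v0)) < 1 then h.choose
  else C.c0

/-- positions (reversed words) before a move of Ann -/
inductive Pl : List C → Prop
  | nil : Pl []
  | step (u : List C) (b : C) : Pl u → Pl (b :: psiC u :: u)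

theorem psiC_spec {u : List C} (hu : u.length % 2 = 0) (hg : Good (u ++ v0))
    (hR : SW (u ++ v0) (RR u) < 1) :
    (wk (u ++ v0)).g (psiC u) ≠ 0 ∧ YY (u ++ v0) (psiC u) (RR u ++ Th (u ++ v0)) < 1 := by
  have hl : v0.length = 30 := rfl
  have h := move_ex (v := u ++ v0) (by rw [List.length_append, hl]; omega)
    (by rw [List.length_append, hl]; omega) hg hR
  unfold psiC
  rw [dif_pos h]
  exact h.choose_spec

theorem Pl_inv {u : List C} (h : Pl u) :
    u.length % 2 = 0 ∧ Good (u ++ v0) ∧ SW (u ++ v0) (RR u) < 1 := by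
  induction h with
  | nil => exact ⟨rfl, good_v0, by simp [RR, SW]⟩
  | step u b _ ih =>
    obtain ⟨h1, h2, h3⟩ := ih
    obtain ⟨h4, h5⟩ := psiC_spec h1 h2 h3
    exact ⟨by simp only [List.length_cons]; omega, ⟨h4, h2⟩, lt_of_le_of_lt (SW_stp _ _ _ _) h5⟩

theorem Pl_spec {u : List C} (h : Pl u) :
    NoT (psiC u :: (u ++ v0)) ∧ [psiC u] ∉ RR u ++ Th (u ++ v0) := by
  obtain ⟨h1, h2, h3⟩ := Pl_inv h
  obtain ⟨h4, h5⟩ := psiC_spec h1 h2 h3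
  have hl : v0.length = 30 := rfl
  refine ⟨(locOK (by rw [List.length_append, hl]; omega)).2.1 _ h4, fun hm => ?_⟩
  have := YY_mem (u ++ v0) (psiC u) _ hm
  linarith

theorem persist (n : ℕ) : ∀ (q u t : List C), q.length = 2 * n →
    q.reverse ++ t ∈ RR u ++ Th (u ++ v0) → t ∈ RR (q ++ u) ++ Th (q ++ u ++ v0) := by
  induction n with
  | zero =>
    intro q u t hq h
    obtain rfl := List.eq_nil_of_length_eq_zero hq
    simpa using h
  | succ n ih =>
    intro q u t hq h
    match q, hq with
    | b :: a :: q, hq =>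
      have h1 := ih q u (a :: b :: t) (by simp at hq; omega) (by simpa using h)
      apply List.mem_append_left
      show t ∈ (RR (q ++ u) ++ Th (q ++ u ++ v0)).filterMap (stp a b)
      rw [List.mem_filterMap]
      exact ⟨_, h1, by simp [stp]⟩

theorem mem_Th_even {v : List C} {k : ℕ} (hk : 4 ≤ k) (hv : 2 * k ≤ v.length) :
    ((v.take (2 * k)).drop 1).reverse ∈ Th v := by
  unfold Th
  rw [List.mem_flatMap]
  exact ⟨k, by rw [List.mem_range'_1]; omega, by simp⟩

theorem mem_Th_odd {v : List C} {k : ℕ} (hk : 4 ≤ k) (hv : 2 * k ≤ v.length) (c : C) :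
    c :: (v.take (2 * k)).reverse ∈ Th v := by
  unfold Th
  rw [List.mem_flatMap]
  exact ⟨k, by rw [List.mem_range'_1]; omega, by cases c <;> simp⟩

/-- Ann never creates a potential square. -/
theorem no_threat {u : List C} (h : Pl u) (p : ℕ) (hp : 2 ≤ p) (hl : 2 * p - 1 ≤ u.length + 1) :
    (psiC u :: u).take (p - 1) ≠ ((psiC u :: u).drop p).take (p - 1) := by
  obtain ⟨h1, h2⟩ := Pl_spec h
  intro heq
  by_cases hp7 : p ≤ 7
  · apply h1 p hp hp7
    have e : psiC u :: (u ++ v0) = (psiC u :: u) ++ v0 := rfl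
    rw [e, List.take_append_of_le_length (by simp; omega),
      List.drop_append_of_le_length (by simp; omega),
      List.take_append_of_le_length (by simp; omega)]
    exact heq
  · obtain ⟨m, rfl⟩ : ∃ m, p = m + 2 := ⟨p - 2, by omega⟩
    have e1 : m + 2 - 1 = m + 1 := rfl
    rw [e1, List.take_succ_cons, List.drop_succ_cons] at heq
    apply h2
    rcases Nat.even_or_odd' m with ⟨k, rfl | rfl⟩
    · -- even period
      have hd : u = u.take (2 * k) ++ u.drop (2 * k) := (List.take_append_drop _ _).symm
      set u' := u.drop (2 * k) with hu'
      have hlen : u'.length = u.length - 2 * k := by rw [hu', List.length_drop]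
      have hm := mem_Th_even (v := u' ++ v0) (k := k + 1) (by omega)
        (by rw [List.length_append]; omega)
      rw [List.take_append_of_le_length (by omega)] at hm
      have e2 : (u'.take (2 * (k + 1))).drop 1 = psiC u :: u.take (2 * k) := by
        rw [heq, List.drop_take, hu', List.drop_drop]
        congr 1
      rw [e2, List.reverse_cons] at hm
      have := persist k (u.take (2 * k)) u' [psiC u] (by rw [List.length_take]; omega)
        (List.mem_append_right _ hm)
      rw [← hd] at this
      exact this
    · -- odd period
      have hd : u = u.take (2 * k + 2) ++ u.drop (2 * k + 2) := (List.take_append_drop _ _).symm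
      set u' := u.drop (2 * k + 2) with hu'
      have hlen : u'.length = u.length - (2 * k + 2) := by rw [hu', List.length_drop]
      have hlt : 2 * k + 1 < u.length := by omega
      have hm := mem_Th_odd (v := u' ++ v0) (k := k + 1) (by omega)
        (by rw [List.length_append]; omega) u[2 * k + 1]
      rw [List.take_append_of_le_length (by omega)] at hm
      have e2 : u'.take (2 * (k + 1)) = psiC u :: u.take (2 * k + 1) := by
        rw [heq, hu']
        congr 1
      have e3 : u.take (2 * k + 2) = u.take (2 * k + 1) ++ [u[2 * k + 1]] :=
        (List.take_concat_get' u (2 * k + 1) hlt).symm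
      have e4 : u[2 * k + 1] :: (psiC u :: u.take (2 * k + 1)).reverse =
          (u.take (2 * k + 2)).reverse ++ [psiC u] := by
        rw [e3, List.reverse_append, List.reverse_cons]; rfl
      rw [e2, e4] at hm
      have := persist (k + 1) (u.take (2 * k + 2)) u' [psiC u] (by rw [List.length_take]; omega)
        (List.mem_append_right _ hm)
      rw [← hd] at this
      exact this

/-- all positions of the play -/
def Pos (w : List C) : Prop := Pl w ∨ ∃ u, Pl u ∧ w = psiC u :: u

theorem Pos_tail {x : C} {w : List C} (h : Pos (x :: w)) : Pos w := by
  rcases h with h | ⟨u, hu, h⟩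
  · cases h with
    | step u b hu => exact Or.inr ⟨u, hu, rfl⟩
  · injection h with _ h
    subst h
    exact Or.inl hu

theorem Pos_suffix (s : List C) {w : List C} (h : Pos (s ++ w)) : Pos w := by
  induction s with
  | nil => exact h
  | cons x s ih => exact ih (Pos_tail h)

theorem Pos_no_square {w x : List C} (h : Pos w) (hx : 2 ≤ x.length) : ¬ (x ++ x) <:+: w := by
  rintro ⟨s, r, rfl⟩
  rw [List.append_assoc] at h
  have h' := Pos_suffix s h
  rcases h' with h' | ⟨u, hu, he⟩
  · generalize hw : x ++ x ++ r = w at h'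
    cases h' with
    | nil => simp at hw; simp [hw.1] at hx
    | step u b hu =>
      match x, hx with
      | y :: x, hx =>
        have hw' : x ++ ((y :: x) ++ r) = psiC u :: u := by
          simp at hw
          simpa using hw.2
        have hlen := congrArg List.length hw'
        simp at hlen hx
        apply no_threat hu (x.length + 1) (by omega) (by omega)
        rw [← hw']
        have e1 : x.length + 1 - 1 = x.length := rfl
        have e2 : x ++ ((y :: x) ++ r) = (x ++ [y]) ++ (x ++ r) := by simp
        rw [e1, List.take_left, e2,
          show x.length + 1 = (x ++ [y]).length by simp, List.drop_left, List.take_left]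
  · have hlen := congrArg List.length he
    simp at hlen
    apply no_threat hu x.length hx (by omega)
    rw [← he, List.append_assoc, List.drop_left, List.take_append_of_le_length (by omega),
      List.take_append_of_le_length (by omega)]

end NRG

theorem stmt_0 (A : Type*) [Fintype A] (hA : 4 ≤ Fintype.card A) :
    ∃ ψ : List A → A, ∀ φ : List A → A, ∀ k : ℕ, ∀ u : List A,
      2 ≤ u.length → ¬ (u ++ u) <:+: playNR ψ φ k := by
  classical
  have hcard : Fintype.card NRG.C ≤ Fintype.card A := hA
  obtain ⟨ι⟩ := Function.Embedding.nonempty_of_card_le hcard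
  have : Nonempty NRG.C := ⟨NRG.C.c0⟩
  let f : A → NRG.C := Function.invFun ι
  have hf : ∀ c, f (ι c) = c := Function.leftInverse_invFun ι.injective
  refine ⟨fun w => ι (NRG.psiC ((w.map f).reverse)), fun φ k u hu hsq => ?_⟩
  set ψ : List A → A := fun w => ι (NRG.psiC ((w.map f).reverse)) with hψ
  have hlen : ∀ k, (playNR ψ φ k).length = k := by
    intro k
    induction k with
    | zero => rfl
    | succ k ih =>
      show (playNR ψ φ k ++ [_]).length = k + 1
      rw [List.length_append, ih]; rfl
  have hstep : ∀ k, ((playNR ψ φ (k + 1)).map f).reverse =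
      f (if Even (playNR ψ φ k).length then ψ (playNR ψ φ k) else φ (playNR ψ φ k)) ::
        ((playNR ψ φ k).map f).reverse := by
    intro k
    show ((playNR ψ φ k ++ [_]).map f).reverse = _
    rw [List.map_append, List.reverse_append]
    rfl
  have hodd : ∀ k, Even k → ((playNR ψ φ (k + 1)).map f).reverse =
      NRG.psiC ((playNR ψ φ k).map f).reverse :: ((playNR ψ φ k).map f).reverse := by
    intro k hk
    rw [hstep, hlen, if_pos hk, hψ]
    simp only [hf]
  have hpl : ∀ j, NRG.Pl ((playNR ψ φ (2 * j)).map f).reverse := by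
    intro j
    induction j with
    | zero => exact NRG.Pl.nil
    | succ j ih =>
      rw [show 2 * (j + 1) = 2 * j + 1 + 1 by ring, hstep, hodd _ (even_two_mul j)]
      exact NRG.Pl.step _ _ ih
  have hpos : NRG.Pos ((playNR ψ φ k).map f).reverse := by
    rcases Nat.even_or_odd' k with ⟨j, rfl | rfl⟩
    · exact Or.inl (hpl j)
    · exact Or.inr ⟨_, hpl j, hodd _ (even_two_mul j)⟩
  refine NRG.Pos_no_square (x := (u.map f).reverse) hpos (by simpa using hu) ?_
  obtain ⟨s, r, hsr⟩ := hsq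
  refine ⟨(r.map f).reverse, (s.map f).reverse, ?_⟩
  rw [← hsr]
  simp
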